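/- Let K be a number field and let a, b ∈ Kˣ be totally positive (σ(a) > 0 and σ(b) > 0 for every ring embedding σ : K → ℝ). Let H = H_{a,b} be the quaternion algebra over K with basis 1, i, j, ij where i² = a, j² = b, ij = −ji, let S = {t ∈ K : there exists x ∈ H with x·x̄ = 1 and x + x̄ = t} (where x̄ denotes the quaternion conjugate of x, so x·x̄ is the reduced norm and x + x̄ the reduced trace of x), and let T = S + S = {s + s' : s, s' ∈ S}. Then T = {t ∈ K : for every finite place 𝔮 of K such that the conic z² − a·u² − b·v² has no nontrivial zero over the completion K_𝔮, the element t lies in the valuation ring O_𝔮 ⊆ K_𝔮 (i.e. v_𝔮(t) ≥ 0)}. -/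

import Mathlib

open Quaternion IsDedekindDomain NumberField

open scoped WithZero

set_option linter.all false

namespace TNQ

section Val
variable {F : Type*} [Field F] (v : Valuation F ℤᵐ⁰)

lemma val_nat_le_one (n : ℕ) : v (n : F) ≤ 1 := by
  induction n with
  | zero => simp
  | succ k ih =>
    push_cast
    exact (v.map_add _ _).trans (max_le ih (by simp))

lemma val_four_le : v (4 : F) ≤ 1 := by exact_mod_cast val_nat_le_one v 4
lemma val_two_le : v (2 : F) ≤ 1 := by exact_mod_cast val_nat_le_one v 2

lemma val_four : v (4 : F) = v 2 * v 2 := by rw [← map_mul]; norm_num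

lemma val_eq_one_of_sub {x : F} (h : v (x - 1) < 1) : v x = 1 := by
  have := v.map_add_eq_of_lt_right (x := x - 1) (y := 1) (by simpa using h)
  simpa using this

variable [CharZero F]

lemma val_four_pos : 0 < v (4 : F) := by simp [zero_lt_iff]
lemma val_two_pos : 0 < v (2 : F) := by simp [zero_lt_iff]

/-- principal units close to `1` modulo `4` -/
def U1 : Subgroup Fˣ where
  carrier := {x | v ((x : F) - 1) < v 4}
  one_mem' := by
    simp [zero_lt_iff]
  mul_mem' := by
    intro x y hx hy
    simp only [Set.mem_ofPred_eq] at *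
    have hy1 : v (y : F) = 1 := val_eq_one_of_sub v (hy.trans_le (val_four_le v))
    have : ((x * y : Fˣ) : F) - 1 = (x - 1) * y + (y - 1) := by push_cast; ring
    rw [this]
    refine v.map_add_lt ?_ hy
    rw [map_mul, hy1, mul_one]; exact hx
  inv_mem' := by
    intro x hx
    simp only [Set.mem_ofPred_eq] at *
    have hx1 : v (x : F) = 1 := val_eq_one_of_sub v (hx.trans_le (val_four_le v))
    have h2 : v (x⁻¹ : F) = 1 := by rw [map_inv₀, hx1, inv_one]
    have : ((x⁻¹ : Fˣ) : F) - 1 = -((x - 1) * (x : F)⁻¹) := by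
      push_cast; field_simp; ring
    rw [this, Valuation.map_neg, map_mul, h2, mul_one]; exact hx

lemma mem_U1 {x : Fˣ} : x ∈ U1 v ↔ v ((x : F) - 1) < v 4 := Iff.rfl

/-- the subgroup of squares -/
def sqSub (F : Type*) [Field F] : Subgroup Fˣ := (powMonoidHom 2 : Fˣ →* Fˣ).range

lemma mem_sqSub {F : Type*} [Field F] {x : Fˣ} : x ∈ sqSub F ↔ ∃ y : Fˣ, y ^ 2 = x := by
  simp [sqSub, MonoidHom.mem_range]

/-- the subgroup of nonzero values of the norm form `y² - a z²` -/
def normSub {F : Type*} [Field F] (a : F) : Subgroup Fˣ where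
  carrier := {x | ∃ y z : F, (x : F) = y ^ 2 - a * z ^ 2}
  one_mem' := ⟨1, 0, by simp⟩
  mul_mem' := by
    rintro x x' ⟨y, z, h⟩ ⟨y', z', h'⟩
    refine ⟨y * y' + a * z * z', y * z' + z * y', ?_⟩
    push_cast; rw [h, h']; ring
  inv_mem' := by
    rintro x ⟨y, z, h⟩
    refine ⟨y / x, z / x, ?_⟩
    have : (x : F) ≠ 0 := x.ne_zero
    push_cast
    field_simp
    exact h

lemma mem_normSub {F : Type*} [Field F] {a : F} {x : Fˣ} :
    x ∈ normSub a ↔ ∃ y z : F, (x : F) = y ^ 2 - a * z ^ 2 := Iff.rfl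

/-- locally squares at `v` -/
def Sq : Subgroup Fˣ := sqSub F ⊔ U1 v

/-- locally norms from `F(√a)` at `v` -/
def NAt (a : F) : Subgroup Fˣ := normSub a ⊔ U1 v

lemma mem_sup_U1 {H : Subgroup Fˣ} {x : Fˣ} :
    x ∈ H ⊔ U1 v ↔ ∃ y ∈ H, v ((x : F) - y) < v (4 * (y : F)) := by
  rw [Subgroup.mem_sup]
  have key : ∀ y : Fˣ, v ((x : F) - y) < v (4 * (y : F)) ↔ y⁻¹ * x ∈ U1 v := by
    intro y
    have hy : (y : F) ≠ 0 := y.ne_zero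
    have : 0 < v (y : F) := by simp [zero_lt_iff]
    have h1 : (x : F) - y = (((y⁻¹ * x : Fˣ) : F) - 1) * y := by
      push_cast; field_simp
    rw [mem_U1, h1, map_mul, map_mul, mul_lt_mul_iff_left₀ this]
  constructor
  · rintro ⟨y, hy, z, hz, rfl⟩
    exact ⟨y, hy, (key y).2 (by simpa using hz)⟩
  · rintro ⟨y, hy, h⟩
    exact ⟨y, hy, _, (key y).1 h, by simp⟩

lemma mem_Sq {x : Fˣ} : x ∈ Sq v ↔ ∃ y : F, y ≠ 0 ∧ v ((x : F) - y ^ 2) < v (4 * y ^ 2) := by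
  rw [Sq, mem_sup_U1]
  constructor
  · rintro ⟨y, hy, h⟩
    obtain ⟨z, rfl⟩ := mem_sqSub.1 hy
    exact ⟨z, z.ne_zero, by simpa using h⟩
  · rintro ⟨y, hy, h⟩
    exact ⟨Units.mk0 y hy ^ 2, mem_sqSub.2 ⟨_, rfl⟩, by simpa using h⟩

lemma mem_NAt {a : F} {x : Fˣ} : x ∈ NAt v a ↔
    ∃ y z : F, y ^ 2 - a * z ^ 2 ≠ 0 ∧
      v ((x : F) - (y ^ 2 - a * z ^ 2)) < v (4 * (y ^ 2 - a * z ^ 2)) := by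
  rw [NAt, mem_sup_U1]
  constructor
  · rintro ⟨y, ⟨b, c, hbc⟩, h⟩
    rw [hbc] at h
    exact ⟨b, c, hbc ▸ y.ne_zero, h⟩
  · rintro ⟨y, z, h0, h⟩
    exact ⟨Units.mk0 _ h0, ⟨y, z, rfl⟩, h⟩

lemma sqSub_le_normSub (a : F) : sqSub F ≤ normSub a := by
  intro x hx
  obtain ⟨y, rfl⟩ := mem_sqSub.1 hx
  exact ⟨y, 0, by simp⟩

lemma sqSub_le_Sq : sqSub F ≤ Sq v := le_sup_left
lemma sq_mem_Sq (x : Fˣ) : x ^ 2 ∈ Sq v := sqSub_le_Sq v (mem_sqSub.2 ⟨x, rfl⟩)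
lemma Sq_le_NAt (a : F) : Sq v ≤ NAt v a := sup_le_sup_right (sqSub_le_normSub a) _
lemma normSub_le_NAt (a : F) : normSub a ≤ NAt v a := le_sup_left

/-- `Sq` only depends on the class close by -/
lemma Sq_of_close {x y : Fˣ} (hy : y ∈ Sq v) (h : v ((x : F) - y) < v (4 * (y : F))) :
    x ∈ Sq v := by
  have : x ∈ Sq v ⊔ U1 v := (mem_sup_U1 v).2 ⟨y, hy, h⟩
  rwa [Sq, sup_assoc, sup_idem] at this

lemma NAt_of_close {a : F} {x y : Fˣ} (hy : y ∈ NAt v a) (h : v ((x : F) - y) < v (4 * (y : F))) :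
    x ∈ NAt v a := by
  have : x ∈ NAt v a ⊔ U1 v := (mem_sup_U1 v).2 ⟨y, hy, h⟩
  rwa [NAt, sup_assoc, sup_idem] at this

end Val

section WA
variable {F : Type*} [Field F] [NumberField F]

lemma exists_exp_lt (γ : ℤᵐ⁰) (hγ : γ ≠ 0) : ∃ n : ℕ, (WithZero.exp (-(n : ℤ)) : ℤᵐ⁰) < γ := by
  refine ⟨(1 - WithZero.log γ).toNat, ?_⟩
  rw [← WithZero.exp_log hγ, WithZero.exp_lt_exp]
  simp
  omega

lemma weak_approx (S : Finset (HeightOneSpectrum (𝓞 F))) (x : HeightOneSpectrum (𝓞 F) → F)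
    (γ : HeightOneSpectrum (𝓞 F) → ℤᵐ⁰) (hγ : ∀ v ∈ S, γ v ≠ 0) :
    ∃ g : F, ∀ v ∈ S, v.valuation F (g - x v) < γ v := by
  classical
  obtain ⟨b, hb⟩ := IsLocalization.exist_integer_multiples (nonZeroDivisors (𝓞 F)) S x
  have hb' : ∀ v ∈ S, ∃ n : 𝓞 F, algebraMap (𝓞 F) F n = (b : 𝓞 F) * x v := by
    intro v hv
    obtain ⟨n, hn⟩ := hb v hv
    exact ⟨n, by rw [hn, Algebra.smul_def]⟩
  choose! n hn using hb'
  have hbF : algebraMap (𝓞 F) F b ≠ 0 := by simp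
  have hvb : ∀ v : HeightOneSpectrum (𝓞 F), v.valuation F (algebraMap (𝓞 F) F b) ≠ 0 := by
    intro v; simp
  have : ∀ v ∈ S, ∃ e : ℕ, (WithZero.exp (-(e : ℤ)) : ℤᵐ⁰) < γ v * v.valuation F (algebraMap (𝓞 F) F b) :=
    fun v hv => exists_exp_lt _ (mul_ne_zero (hγ v hv) (hvb v))
  choose! e he using this
  obtain ⟨y, hy⟩ := IsDedekindDomain.exists_forall_sub_mem_ideal (s := S) (fun v => v.asIdeal) e
    (fun v _ => v.prime) (fun v _ w _ hvw h => hvw (HeightOneSpectrum.ext h)) (fun v => n v)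
  refine ⟨algebraMap (𝓞 F) F y / algebraMap (𝓞 F) F b, fun v hv => ?_⟩
  have h1 := (v.intValuation_le_pow_iff_mem _ _).2 (hy v hv)
  rw [← HeightOneSpectrum.valuation_of_algebraMap (K := F)] at h1
  have h2 := h1.trans_lt (he v hv)
  have h3 : algebraMap (𝓞 F) F (y - n v) =
    (algebraMap (𝓞 F) F y / algebraMap (𝓞 F) F b - x v) * algebraMap (𝓞 F) F b := by
    rw [map_sub, hn v hv]; field_simp
  change v.valuation F (algebraMap (𝓞 F) F (y - n v)) < _ at h2
  rw [h3, map_mul] at h2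
  exact lt_of_mul_lt_mul_right' h2

end WA
end TNQ

open scoped WithZero
set_option linter.all false

namespace TNQ

section Hens
lemma exists_artin_schreier {L : Type*} [NormedField L] [CompleteSpace L] [IsUltrametricDist L]
    (ε : L) (hε : ‖ε‖ < 1) : ∃ y : L, y ^ 2 + y = ε := by
  let X := Metric.closedBall (0 : L) ‖ε‖
  have hmem : ∀ y : X, ε - (y : L) ^ 2 ∈ X := by
    rintro ⟨y, hy⟩
    simp only [X, mem_closedBall_zero_iff] at hy ⊢
    rw [sub_eq_add_neg]
    refine (IsUltrametricDist.norm_add_le_max _ _).trans (max_le le_rfl ?_)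
    rw [norm_neg, norm_pow]
    nlinarith [norm_nonneg y, norm_nonneg ε]
  let f : X → X := fun y => ⟨ε - (y : L) ^ 2, hmem y⟩
  have : CompleteSpace X := (Metric.isClosed_closedBall (x := (0:L)) (ε := ‖ε‖)).completeSpace_coe
  have : Nonempty X := ⟨⟨0, by simp [X]⟩⟩
  have hf : ContractingWith ‖ε‖₊ f := by
    refine ⟨by exact_mod_cast hε, LipschitzWith.of_dist_le_mul ?_⟩
    rintro ⟨y, hy⟩ ⟨z, hz⟩
    simp only [X, mem_closedBall_zero_iff] at hy hz
    change dist (ε - y ^ 2) (ε - z ^ 2) ≤ ‖ε‖ * dist y z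
    rw [dist_eq_norm, dist_eq_norm]
    have : ε - y ^ 2 - (ε - z ^ 2) = - ((y + z) * (y - z)) := by ring
    rw [this, norm_neg, norm_mul]
    gcongr
    exact (IsUltrametricDist.norm_add_le_max _ _).trans (max_le hy hz)
  have h := hf.fixedPoint_isFixedPt
  set p := hf.fixedPoint
  refine ⟨(p : L), ?_⟩
  have h2 : ε - (p : L) ^ 2 = p := congrArg Subtype.val h
  linear_combination -h2

end Hens

variable {F : Type*} [Field F] [NumberField F] (q : HeightOneSpectrum (𝓞 F))

lemma charZero_completion : CharZero (q.adicCompletion F) :=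
  charZero_of_injective_algebraMap (algebraMap F (q.adicCompletion F)).injective

lemma norm_algebraMap_lt_one (x : F) : ‖algebraMap F (q.adicCompletion F) x‖ < 1 ↔
    q.valuation F x < 1 := by
  rw [← HeightOneSpectrum.valuedAdicCompletion_eq_valuation', Valued.toNormedField.norm_lt_one_iff]
  rfl

lemma norm_algebraMap_lt (x y : F) (hy : y ≠ 0) : ‖algebraMap F (q.adicCompletion F) x‖ <
    ‖algebraMap F (q.adicCompletion F) y‖ ↔ q.valuation F x < q.valuation F y := by
  have h1 : 0 < ‖algebraMap F (q.adicCompletion F) y‖ := by simpa using hy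
  have h2 : 0 < q.valuation F y := by simpa [zero_lt_iff] using hy
  rw [← div_lt_one h1, ← div_lt_one₀ h2, ← norm_div, ← map_div₀, norm_algebraMap_lt_one, map_div₀]

/-- local squares become squares in the completion -/
lemma Sq_isSquare {x : Fˣ} (hx : x ∈ Sq (q.valuation F)) :
    ∃ s : q.adicCompletion F, s ^ 2 = algebraMap F (q.adicCompletion F) x := by
  obtain ⟨y, hy, h⟩ := (mem_Sq _).1 hx
  have h0 : (4 * y ^ 2 : F) ≠ 0 := mul_ne_zero (by norm_num) (pow_ne_zero _ hy)
  have hlt : q.valuation F ((x - y ^ 2) / (4 * y ^ 2)) < 1 := by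
    rw [map_div₀, div_lt_one₀]
    · exact h
    · simpa [zero_lt_iff] using h0
  obtain ⟨t, ht⟩ := exists_artin_schreier _ ((norm_algebraMap_lt_one q _).2 hlt)
  refine ⟨algebraMap F _ y * (1 + 2 * t), ?_⟩
  have : (x : F) = y ^ 2 * (1 + 4 * ((x - y ^ 2) / (4 * y ^ 2))) := by field_simp; ring
  rw [this]
  simp only [map_mul, map_add, map_pow, map_one, ← ht, map_ofNat]
  ring

/-- the pure quaternion form representing a local square gives a zero of the conic -/
lemma conic_zero_of_Sq {a b : F} (ha : a ≠ 0) (hb : b ≠ 0) {u v w : F} {x : Fˣ}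
    (hx : x ∈ Sq (q.valuation F)) (h : (x : F) = a * u ^ 2 + b * v ^ 2 - a * b * w ^ 2) :
    ∃ Z U V : q.adicCompletion F, ¬(Z = 0 ∧ U = 0 ∧ V = 0) ∧
      Z ^ 2 - algebraMap F (q.adicCompletion F) a * U ^ 2 -
        algebraMap F (q.adicCompletion F) b * V ^ 2 = 0 := by
  obtain ⟨s, hs⟩ := Sq_isSquare q hx
  rw [h] at hs
  set A := algebraMap F (q.adicCompletion F)
  simp only [map_add, map_sub, map_mul, map_pow] at hs
  by_cases hvw : v ^ 2 - a * w ^ 2 = 0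
  · by_cases hw : w = 0
    · have hv : v = 0 := by simpa [hw] using hvw
      subst hw hv
      refine ⟨s, A u, 0, ?_, by simp at hs; rw [hs]; simp⟩
      rintro ⟨-, hu, -⟩
      have : u = 0 := by simpa using hu
      subst this
      exact x.ne_zero (by rw [h]; simp)
    · refine ⟨A v, A w, 0, ?_, ?_⟩
      · rintro ⟨-, hw', -⟩
        exact hw (by simpa using hw')
      · have := congrArg A hvw
        simpa using this
  · refine ⟨s * A v + A a * A u * A w, s * A w + A u * A v, A (v ^ 2 - a * w ^ 2), ?_, ?_⟩
    · rintro ⟨-, -, h3⟩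
      exact hvw ((map_eq_zero A).1 h3)
    · simp only [map_add, map_sub, map_mul, map_pow]
      linear_combination (A v ^ 2 - A a * A w ^ 2) * hs

/-- solvable in the sense of weak approximations -/
def LocSolv (v : Valuation F ℤᵐ⁰) (a b : F) : Prop :=
  ∃ x y : F, ∃ z : Fˣ, (z : F) = a * x ^ 2 + b * y ^ 2 ∧ z ∈ Sq v

lemma locSolv_of_conic_zero {a b : F} (ha : a ≠ 0) (hb : b ≠ 0) (h : ∃ Z U V : q.adicCompletion F,
      ¬(Z = 0 ∧ U = 0 ∧ V = 0) ∧
      Z ^ 2 - algebraMap F (q.adicCompletion F) a * U ^ 2 -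
        algebraMap F (q.adicCompletion F) b * V ^ 2 = 0) : LocSolv (q.valuation F) a b := by
  have := charZero_completion q
  obtain ⟨Z, U, V, h0, h⟩ := h
  set A := algebraMap F (q.adicCompletion F) with hA
  have hAa : A a ≠ 0 := by simpa using ha
  have hAb : A b ≠ 0 := by simpa using hb
  have key : ∃ X Y : q.adicCompletion F, A a * X ^ 2 + A b * Y ^ 2 = 1 := by
    by_cases hZ : Z = 0
    · subst hZ
      have hV : V ≠ 0 := by
        rintro rfl
        have : U = 0 := by simpa [hAa] using h
        exact h0 ⟨rfl, this, rfl⟩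
      have hU : U ≠ 0 := by
        rintro rfl
        exact hV (by simpa [hAb] using h)
      have e : A b = - A a * U ^ 2 / V ^ 2 := by
        field_simp
        linear_combination -h
      refine ⟨(1 + 1 / A a) / 2, (1 - 1 / A a) / (2 * (U / V)), ?_⟩
      rw [e]
      field_simp
      ring
    · refine ⟨U / Z, V / Z, ?_⟩
      field_simp
      linear_combination -h
  obtain ⟨X, Y, hXY⟩ := key
  have hd : DenseRange (algebraMap F (q.adicCompletion F)) :=
    HeightOneSpectrum.denseRange_algebraMap _ _
  have hd2 : DenseRange (Prod.map A A) := hd.prodMap hd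
  let g : (q.adicCompletion F) × (q.adicCompletion F) → q.adicCompletion F :=
    fun p => A a * p.1 ^ 2 + A b * p.2 ^ 2
  have hg : Continuous g := by fun_prop
  have ho : IsOpen (g ⁻¹' Metric.ball 1 ‖A 4‖) := Metric.isOpen_ball.preimage hg
  have h4 : 0 < ‖A 4‖ := by simp
  obtain ⟨⟨x, y⟩, hxy⟩ := hd2.exists_mem_open ho ⟨(X, Y), by simp [g, hXY]⟩
  simp only [g, Prod.map, Set.mem_preimage, mem_ball_iff_norm] at hxy
  have h5 : q.valuation F (a * x ^ 2 + b * y ^ 2 - 1) < q.valuation F 4 := by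
    rw [← norm_algebraMap_lt q _ _ (by norm_num)]
    have e : A (a * x ^ 2 + b * y ^ 2 - 1) = A a * A x ^ 2 + A b * A y ^ 2 - 1 := by simp
    rw [← hA, e]
    exact hxy
  have h6 : a * x ^ 2 + b * y ^ 2 ≠ 0 := by
    intro h0
    have := val_eq_one_of_sub _ (h5.trans_le (val_four_le _))
    simp [h0] at this
  exact ⟨x, y, Units.mk0 _ h6, rfl, (mem_Sq _).2 ⟨1, one_ne_zero, by simpa using h5⟩⟩

end TNQ

open scoped WithZero
set_option linter.all false

namespace TNQ

lemma index_range_prodMap {A B : Type*} [AddCommGroup A] [AddCommGroup B] (f : A →+ A) (g : B →+ B) :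
    (f.prodMap g).range.index = f.range.index * g.range.index := by
  have : (f.prodMap g).range = f.range.prod g.range := by
    ext ⟨x, y⟩
    simp [AddMonoidHom.mem_range, AddSubgroup.mem_prod, Prod.ext_iff]
  rw [this, AddSubgroup.index_prod]

lemma index_range_of_finite {A : Type*} [AddCommGroup A] [Finite A] (f : A →+ A) :
    f.range.index = Nat.card f.ker := by
  have h1 := f.range.card_mul_index
  have h2 := f.ker.card_mul_index
  rw [AddSubgroup.index_ker] at h2
  have h3 : 0 < Nat.card f.range := Nat.card_pos
  apply Nat.eq_of_mul_eq_mul_left h3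
  rw [h1, ← h2, mul_comm]

lemma index_two_free (n : ℕ) :
    (nsmulAddMonoidHom 2 : (Fin n →₀ ℤ) →+ (Fin n →₀ ℤ)).range.index = 2 ^ n := by
  have := ModN.natCard_eq (G := Fin n →₀ ℤ) (n := 2)
  simp only [Module.finrank_finsupp_self, Fintype.card_fin] at this
  rw [← this]
  unfold ModN AddSubgroup.index
  apply Nat.card_congr
  refine (QuotientAddGroup.quotientAddEquivOfEq ?_).toEquiv
  ext x
  simp only [AddMonoidHom.mem_range, nsmulAddMonoidHom_apply, Submodule.mem_toAddSubgroup,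
    LinearMap.mem_range, LinearMap.lsmul_apply]
  constructor
  · rintro ⟨y, rfl⟩; exact ⟨y, by ext i; simp⟩
  · rintro ⟨y, rfl⟩; exact ⟨y, by ext i; simp⟩

lemma rank_null {A B : Type*} [AddCommGroup A] [AddCommGroup B] [Module.Finite ℤ A] (f : A →ₗ[ℤ] B) :
    Module.finrank ℤ (LinearMap.range f) + Module.finrank ℤ (LinearMap.ker f) = Module.finrank ℤ A := by
  rw [← f.quotKerEquivRange.finrank_eq, Submodule.finrank_quotient_add_finrank]

lemma index_two_of_fg {M : Type*} [AddCommGroup M] [Module.Finite ℤ M] :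
    (nsmulAddMonoidHom 2 : M →+ M).range.index =
      2 ^ (Module.finrank ℤ M) * Nat.card (nsmulAddMonoidHom 2 : M →+ M).ker := by
  have : AddGroup.FG M := Module.Finite.iff_addGroup_fg.1 inferInstance
  obtain ⟨n, ι, _, p, hp, e, ⟨f⟩⟩ := AddCommGroup.equiv_free_prod_directSum_zmod M
  classical
  set T := DirectSum ι (fun i => ZMod (p i ^ e i))
  have : ∀ i, NeZero (p i ^ e i) := fun i => ⟨pow_ne_zero _ (hp i).ne_zero⟩
  have hT : Finite T := Finite.of_equiv _ (DirectSum.addEquivProd (fun i => ZMod (p i ^ e i))).symm.toEquiv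
  have hTT : Module.IsTorsion ℤ T := by
    intro x
    refine ⟨⟨(Nat.card T : ℤ), ?_⟩, ?_⟩
    · simp [Nat.card_pos.ne']
    · change (Nat.card T : ℤ) • x = 0
      rw [natCast_zsmul]; exact card_nsmul_eq_zero'
  have hTf : Module.Finite ℤ T := Module.Finite.of_finite
  have hrT : Module.finrank ℤ T = 0 := Module.finrank_eq_zero_iff_isTorsion.2 hTT
  have hr : Module.finrank ℤ M = n := by
    rw [LinearEquiv.finrank_eq f.toIntLinearEquiv]
    have h1 := rank_null (LinearMap.fst ℤ (Fin n →₀ ℤ) T)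
    have h2 : LinearMap.range (LinearMap.fst ℤ (Fin n →₀ ℤ) T) = ⊤ :=
      LinearMap.range_eq_top.2 LinearMap.fst_surjective
    have h3 : Module.finrank ℤ (LinearMap.ker (LinearMap.fst ℤ (Fin n →₀ ℤ) T)) = 0 := by
      rw [LinearMap.ker_fst, LinearMap.finrank_range_of_inj LinearMap.inr_injective, hrT]
    rw [h3, h2, finrank_top] at h1
    rw [← h1]; simp
  have e1 : (nsmulAddMonoidHom 2 : M →+ M).range.index =
      (nsmulAddMonoidHom 2 : ((Fin n →₀ ℤ) × T) →+ _).range.index := by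
    rw [← AddSubgroup.index_map_equiv _ f]
    congr 1
    ext x
    simp only [AddSubgroup.mem_map, AddMonoidHom.mem_range]
    constructor
    · rintro ⟨y, ⟨z, rfl⟩, rfl⟩
      exact ⟨f z, by simp⟩
    · rintro ⟨z, rfl⟩
      exact ⟨_, ⟨f.symm z, rfl⟩, by simp⟩
  have e2 : (nsmulAddMonoidHom 2 : ((Fin n →₀ ℤ) × T) →+ _) =
     (nsmulAddMonoidHom 2).prodMap (nsmulAddMonoidHom 2) := by
    ext x <;> simp
  have e3 : Nat.card (nsmulAddMonoidHom 2 : M →+ M).ker = Nat.card (nsmulAddMonoidHom 2 : T →+ T).ker := by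
    refine Nat.card_congr ⟨fun x => ⟨(f x).2, ?_⟩, fun y => ⟨f.symm (0, y), ?_⟩, ?_, ?_⟩
    · have := x.2
      rw [AddMonoidHom.mem_ker] at this ⊢
      simp only [nsmulAddMonoidHom_apply] at this ⊢
      rw [← Prod.smul_snd, ← map_nsmul, this]; simp
    · have := y.2
      rw [AddMonoidHom.mem_ker] at this ⊢
      simp only [nsmulAddMonoidHom_apply] at this ⊢
      rw [← map_nsmul, Prod.smul_mk, this]; simp
    · rintro ⟨x, hx⟩
      ext
      rw [AddMonoidHom.mem_ker] at hx
      simp only [nsmulAddMonoidHom_apply] at hx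
      have h1 : (f x).1 = 0 := by
        have : (2 : ℕ) • (f x).1 = 0 := by rw [← Prod.smul_fst, ← map_nsmul, hx]; simp
        simpa using this
      simp only
      rw [AddEquiv.symm_apply_eq]
      ext1
      · exact h1.symm
      · rfl
    · rintro ⟨y, hy⟩
      ext
      simp
  rw [e1, e2, index_range_prodMap, index_two_free, index_range_of_finite, hr, e3]

section SU
variable {F : Type*} [Field F] [NumberField F]

/-- the group of `S`-units -/
def USub (S : Finset (HeightOneSpectrum (𝓞 F))) : Subgroup Fˣ where
  carrier := {x | ∀ v ∉ S, v.valuation F (x : F) = 1}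
  one_mem' := by intro v _; simp
  mul_mem' := by
    intro x y hx hy v hv
    have h1 := hx v hv
    have h2 := hy v hv
    push_cast; rw [map_mul, h1, h2, one_mul]
  inv_mem' := by
    intro x hx v hv
    have h1 := hx v hv
    push_cast; rw [map_inv₀, h1, inv_one]

lemma mem_USub {S : Finset (HeightOneSpectrum (𝓞 F))} {x : Fˣ} :
    x ∈ USub S ↔ ∀ v ∉ S, v.valuation F (x : F) = 1 := Iff.rfl

lemma USub_mono {S S' : Finset (HeightOneSpectrum (𝓞 F))} (h : S ⊆ S') :
    USub S ≤ USub S' := fun x hx v hv => hx v (fun hv' => hv (h hv'))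

/-- valuation of a generator -/
lemma exists_gen (v : HeightOneSpectrum (𝓞 F)) : ∃ (c : Fˣ) (n : ℕ), 0 < n ∧
    v.valuation F (c : F) = WithZero.exp (-(n : ℤ)) ∧ ∀ w ≠ v, w.valuation F (c : F) = 1 := by
  obtain ⟨c, hc⟩ : (v.asIdeal ^ (classNumber F)).IsPrincipal := by
    have h0 : v.asIdeal ∈ nonZeroDivisors (Ideal (𝓞 F)) := mem_nonZeroDivisors_of_ne_zero v.ne_bot
    have := pow_card_eq_one (x := ClassGroup.mk0 ⟨v.asIdeal, h0⟩)
    rw [← map_pow, ClassGroup.mk0_eq_one_iff] at this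
    exact this
  have hc' : v.asIdeal ^ (classNumber F) = Ideal.span {c} := hc
  have hc0 : c ≠ 0 := by
    rintro rfl
    have : v.asIdeal ^ (classNumber F) = 0 := by rw [hc']; simp
    exact pow_ne_zero _ v.ne_bot this
  have hcF : algebraMap (𝓞 F) F c ≠ 0 := by simpa using hc0
  have hn : 0 < classNumber F := Fintype.card_pos
  refine ⟨Units.mk0 _ hcF, classNumber F, hn, ?_, ?_⟩
  · simp only [Units.val_mk0]
    rw [HeightOneSpectrum.valuation_of_algebraMap]
    apply le_antisymm
    · rw [v.intValuation_le_pow_iff_mem, hc']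
      exact Ideal.mem_span_singleton_self c
    · by_contra! hlt
      have h3 : v.intValuation c ≤ WithZero.exp (-((classNumber F + 1 : ℕ) : ℤ)) := by
        have hne := v.intValuation_ne_zero c hc0
        rw [← WithZero.exp_log hne] at hlt ⊢
        rw [WithZero.exp_lt_exp] at hlt
        rw [WithZero.exp_le_exp]
        push_cast; omega
      rw [v.intValuation_le_pow_iff_mem, ← Ideal.span_singleton_le_iff_mem, ← hc'] at h3
      have h4 := Ideal.dvd_iff_le.2 h3
      have := (pow_dvd_pow_iff v.ne_bot v.prime.not_unit).1 h4
      omega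
  · intro w hw
    simp only [Units.val_mk0]
    rw [HeightOneSpectrum.valuation_eq_one_iff_notMem]
    intro hcw
    rw [← Ideal.span_singleton_le_iff_mem, ← hc'] at hcw
    have h5 := w.isPrime.le_of_pow_le hcw
    exact hw (HeightOneSpectrum.ext ((v.isMaximal.eq_of_le w.isPrime.ne_top h5).symm))

/-- log of the valuation -/
noncomputable def lval (v : HeightOneSpectrum (𝓞 F)) (x : Fˣ) : ℤ := WithZero.log (v.valuation F (x : F))

lemma lval_mul (v : HeightOneSpectrum (𝓞 F)) (x y : Fˣ) : lval v (x * y) = lval v x + lval v y := by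
  unfold lval
  push_cast
  rw [map_mul, WithZero.log_mul (by simp) (by simp)]

lemma lval_one (v : HeightOneSpectrum (𝓞 F)) : lval v (1 : Fˣ) = 0 := by
  simp [lval]

lemma lval_eq_zero (v : HeightOneSpectrum (𝓞 F)) (x : Fˣ) : lval v x = 0 ↔ v.valuation F (x : F) = 1 := by
  unfold lval
  constructor
  · intro h
    rw [← WithZero.exp_log (x := v.valuation F (x : F)) (by simp), h, WithZero.exp_zero]
  · intro h; rw [h]; simp

/-- the valuation vector of an `S`-unit -/
noncomputable def valHom (S : Finset (HeightOneSpectrum (𝓞 F))) : Additive (USub S) →+ (S → ℤ) where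
  toFun x v := lval v.1 (Additive.toMul x : USub S)
  map_zero' := by ext v; simp [lval_one]
  map_add' x y := by ext v; simp [lval_mul]

/-- units are `S`-units -/
noncomputable def unitHom (S : Finset (HeightOneSpectrum (𝓞 F))) :
    Additive (𝓞 F)ˣ →+ Additive (USub S) :=
  MonoidHom.toAdditive ((Units.map (algebraMap (𝓞 F) F).toMonoidHom).codRestrict (USub S) (by
    intro x v hv
    change v.valuation F (algebraMap (𝓞 F) F x) = 1
    rw [HeightOneSpectrum.valuation_eq_one_iff_notMem]
    intro h
    exact v.isPrime.ne_top (Ideal.eq_top_of_isUnit_mem _ h x.isUnit)))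

lemma unitHom_injective (S : Finset (HeightOneSpectrum (𝓞 F))) : Function.Injective (unitHom S) := by
  intro x y h
  have h2 : algebraMap (𝓞 F) F (Additive.toMul x : (𝓞 F)ˣ) = algebraMap (𝓞 F) F (Additive.toMul y : (𝓞 F)ˣ) :=
    congrArg (fun z : Additive (USub S) => (((Additive.toMul z : USub S) : Fˣ) : F)) h
  have h3 := FaithfulSMul.algebraMap_injective (𝓞 F) F h2
  exact Additive.toMul.injective (Units.ext h3)

lemma range_unitHom (S : Finset (HeightOneSpectrum (𝓞 F))) : (unitHom S).range = (valHom S).ker := by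
  ext x
  rw [AddMonoidHom.mem_range, AddMonoidHom.mem_ker]
  constructor
  · rintro ⟨y, rfl⟩
    ext v
    change lval v.1 _ = 0
    rw [lval_eq_zero]
    change v.1.valuation F (algebraMap (𝓞 F) F (Additive.toMul y : (𝓞 F)ˣ)) = 1
    rw [HeightOneSpectrum.valuation_eq_one_iff_notMem]
    intro h
    exact v.1.isPrime.ne_top (Ideal.eq_top_of_isUnit_mem _ h (Additive.toMul y).isUnit)
  · intro h
    set z : Fˣ := ((Additive.toMul x : USub S) : Fˣ) with hz
    have hv : ∀ v : HeightOneSpectrum (𝓞 F), v.valuation F (z : F) = 1 := by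
      intro v
      by_cases hv : v ∈ S
      · rw [← lval_eq_zero]
        exact congrFun h ⟨v, hv⟩
      · exact (Additive.toMul x : USub S).2 v hv
    obtain ⟨r, hr⟩ := HeightOneSpectrum.mem_integers_of_valuation_le_one F (z : F) (fun v => (hv v).le)
    obtain ⟨s, hs⟩ := HeightOneSpectrum.mem_integers_of_valuation_le_one F ((z⁻¹ : Fˣ) : F)
      (fun v => by push_cast; rw [map_inv₀, hv v, inv_one])
    have hrs : r * s = 1 := by
      apply FaithfulSMul.algebraMap_injective (𝓞 F) F
      rw [map_mul, hr, hs]; simp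
    refine ⟨Additive.ofMul ⟨r, s, hrs, by rw [mul_comm, hrs]⟩, ?_⟩
    apply Additive.toMul.injective
    apply Subtype.ext
    apply Units.ext
    exact hr

instance finite_USub (S : Finset (HeightOneSpectrum (𝓞 F))) : Module.Finite ℤ (Additive (USub S)) := by
  refine ⟨Submodule.fg_of_fg_map_of_fg_inf_ker (valHom S).toIntLinearMap ?_ ?_⟩
  · exact IsNoetherian.noetherian _
  · have : (⊤ : Submodule ℤ (Additive (USub S))) ⊓ LinearMap.ker (valHom S).toIntLinearMap =
      LinearMap.range (unitHom S).toIntLinearMap := by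
      ext x
      have := SetLike.ext_iff.1 (range_unitHom S) x
      simp only [AddMonoidHom.mem_range, AddMonoidHom.mem_ker] at this
      simp only [Submodule.mem_inf, Submodule.mem_top, true_and, LinearMap.mem_ker, LinearMap.mem_range, AddMonoidHom.coe_toIntLinearMap, this]
    rw [this, LinearMap.range_eq_map]
    exact (Module.Finite.fg_top).map _

lemma finrank_USub (S : Finset (HeightOneSpectrum (𝓞 F))) :
    Module.finrank ℤ (Additive (USub S)) + 1 = Fintype.card (InfinitePlace F) + S.card := by
  classical
  have h1 := rank_null (valHom S).toIntLinearMap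
  have h2 : Module.finrank ℤ (LinearMap.ker (valHom S).toIntLinearMap) = Units.rank F := by
    have : LinearMap.ker (valHom S).toIntLinearMap = LinearMap.range (unitHom S).toIntLinearMap := by
      ext x
      have := SetLike.ext_iff.1 (range_unitHom S) x
      simp only [AddMonoidHom.mem_range, AddMonoidHom.mem_ker] at this
      simp only [Submodule.mem_inf, Submodule.mem_top, true_and, LinearMap.mem_ker, LinearMap.mem_range, AddMonoidHom.coe_toIntLinearMap, this]
    rw [this, LinearMap.finrank_range_of_inj (unitHom_injective S)]
    exact Units.finrank_eq F
  have h3 : Module.finrank ℤ (LinearMap.range (valHom S).toIntLinearMap) = S.card := by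
    apply le_antisymm
    · refine (Submodule.finrank_le _).trans ?_
      simp
    · choose c n hn hc hc' using exists_gen (F := F)
      have hcS : ∀ v : S, c v.1 ∈ USub S := by
        intro v w hw
        exact hc' _ _ (fun h => hw (h ▸ v.2))
      let g : S → LinearMap.range (valHom S).toIntLinearMap :=
        fun v => ⟨_, ⟨Additive.ofMul ⟨c v.1, hcS v⟩, rfl⟩⟩
      have hg : ∀ v w : S, (g v : S → ℤ) w = if v = w then -(n v.1 : ℤ) else 0 := by
        intro v w
        change lval w.1 (c v.1) = _
        split_ifs with h
        · subst h; simp [lval, hc]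
        · rw [lval_eq_zero]; exact hc' _ _ (fun h' => h (Subtype.ext h'.symm))
      have hli : LinearIndependent ℤ g := by
        rw [Fintype.linearIndependent_iff]
        intro a ha w
        have := congrFun (congrArg Subtype.val ha) w
        simp only [AddSubmonoidClass.coe_finset_sum, Finset.sum_apply, SetLike.val_smul, Pi.smul_apply, hg, smul_eq_mul] at this
        simp at this
        rcases this with h | h
        · exact h
        · exact absurd h (hn w.1).ne'
      have := hli.fintype_card_le_finrank
      simpa using this
  have h4 : Units.rank F + 1 = Fintype.card (InfinitePlace F) := by
    unfold Units.rank
    have : 0 < Fintype.card (InfinitePlace F) := Fintype.card_pos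
    omega
  omega

/-- squares of a subgroup -/
def sqOf {G : Type*} [CommGroup G] (U : Subgroup G) : Subgroup G := U.map (powMonoidHom 2)

lemma mem_sqOf {G : Type*} [CommGroup G] {U : Subgroup G} {x : G} : x ∈ sqOf U ↔ ∃ y ∈ U, y ^ 2 = x := by
  simp [sqOf, Subgroup.mem_map]

lemma sqOf_le {G : Type*} [CommGroup G] (U : Subgroup G) : sqOf U ≤ U := by
  rintro x hx
  obtain ⟨y, hy, rfl⟩ := mem_sqOf.1 hx
  exact pow_mem hy 2

/-- (A): the number of square classes of `S`-units -/
theorem relIndex_sqOf_USub (S : Finset (HeightOneSpectrum (𝓞 F))) :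
    (sqOf (USub S)).relIndex (USub S) = 2 ^ (Fintype.card (InfinitePlace F) + S.card) := by
  have h := index_two_of_fg (M := Additive (USub S))
  have hk : Nat.card (nsmulAddMonoidHom 2 : Additive (USub S) →+ Additive (USub S)).ker = 2 := by
    rw [Nat.card_eq_two_iff]
    have hm : (-1 : Fˣ) ∈ USub S := by intro v _; simp
    refine ⟨0, ⟨Additive.ofMul ⟨-1, hm⟩, ?_⟩, ?_, ?_⟩
    · rw [AddMonoidHom.mem_ker]
      apply Additive.toMul.injective
      apply Subtype.ext
      simp [← ofMul_pow]
    · intro h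
      have h2 : (1 : F) = -1 := congrArg (fun z => (((Additive.toMul (Subtype.val z) : USub S) : Fˣ) : F)) h
      norm_num at h2
    · ext ⟨x, hx⟩
      simp only [Set.mem_insert_iff, Set.mem_singleton_iff, Set.mem_univ, iff_true]
      rw [AddMonoidHom.mem_ker] at hx
      have h3 : ((((Additive.toMul x : USub S) : Fˣ) : F)) ^ 2 = 1 :=
        congrArg (fun z => (((Additive.toMul z : USub S) : Fˣ) : F)) hx
      rcases sq_eq_one_iff.1 h3 with h | h
      · left; apply Subtype.ext; apply Additive.toMul.injective; apply Subtype.ext; apply Units.ext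
        exact h
      · right; apply Subtype.ext; apply Additive.toMul.injective; apply Subtype.ext; apply Units.ext
        exact h
  rw [hk, ← pow_succ, finrank_USub] at h
  rw [← h]
  unfold Subgroup.relIndex
  rw [← Subgroup.index_toAddSubgroup]
  congr 1
  ext x
  rw [AddMonoidHom.mem_range]
  change ((Additive.toMul x : USub S) : Fˣ) ∈ sqOf (USub S) ↔ _
  rw [mem_sqOf]
  constructor
  · rintro ⟨y, hy, h⟩
    exact ⟨Additive.ofMul ⟨y, hy⟩, Additive.toMul.injective (Subtype.ext h)⟩
  · rintro ⟨y, rfl⟩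
    exact ⟨_, (Additive.toMul y).2, rfl⟩
end SU
end TNQ

open scoped WithZero
set_option linter.all false

namespace TNQ
section
variable {F : Type*} [Field F] [NumberField F]

lemma finite_mem {n : 𝓞 F} (hn : n ≠ 0) : {v : HeightOneSpectrum (𝓞 F) | n ∈ v.asIdeal}.Finite := by
  have := Ideal.finite_factors (I := Ideal.span {n}) (by simpa using hn)
  refine this.subset ?_
  intro v hv
  simp only [Set.mem_ofPred_eq] at hv ⊢
  rw [Ideal.dvd_iff_le, Ideal.span_singleton_le_iff_mem]
  exact hv

lemma finite_val_ne_one (x : Fˣ) : {v : HeightOneSpectrum (𝓞 F) | v.valuation F (x : F) ≠ 1}.Finite := by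
  obtain ⟨n, d, hd, h⟩ := IsFractionRing.div_surjective (A := 𝓞 F) (x : F)
  have hd0 : d ≠ 0 := nonZeroDivisors.ne_zero hd
  have hn0 : n ≠ 0 := by
    rintro rfl
    apply x.ne_zero; rw [← h]; simp
  refine ((finite_mem hn0).union (finite_mem hd0)).subset ?_
  intro v hv
  by_contra hc
  simp only [Set.mem_union, Set.mem_ofPred_eq, not_or] at hc hv
  apply hv
  rw [← h, map_div₀, (HeightOneSpectrum.valuation_eq_one_iff_notMem v).2 hc.1,
    (HeightOneSpectrum.valuation_eq_one_iff_notMem v).2 hc.2, div_one]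

/-- triviality of the `S`-class group -/
def ClTriv (S : Finset (HeightOneSpectrum (𝓞 F))) : Prop :=
  ∀ w ∉ S, ∃ c : Fˣ, w.valuation F (c : F) = WithZero.exp (-1) ∧
    ∀ u ∉ S, u ≠ w → u.valuation F (c : F) = 1

lemma ClTriv.mono {S S' : Finset (HeightOneSpectrum (𝓞 F))} (h : ClTriv S) (hS : S ⊆ S') :
    ClTriv S' := by
  intro w hw
  obtain ⟨c, h1, h2⟩ := h w (fun h' => hw (hS h'))
  exact ⟨c, h1, fun u hu huw => h2 u (fun h' => hu (hS h')) huw⟩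

lemma exists_ClTriv : ∃ S : Finset (HeightOneSpectrum (𝓞 F)), ClTriv S := by
  classical
  have hrep : ∀ c : ClassGroup (𝓞 F), ∃ I : nonZeroDivisors (Ideal (𝓞 F)), ClassGroup.mk0 I = c :=
    fun c => ClassGroup.mk0_surjective c
  choose I hI using hrep
  have hfin : (⋃ c : ClassGroup (𝓞 F), {v : HeightOneSpectrum (𝓞 F) | v.asIdeal ∣ (I c : Ideal (𝓞 F))}).Finite :=
    Set.finite_iUnion (fun c => Ideal.finite_factors (nonZeroDivisors.ne_zero (I c).2))
  refine ⟨hfin.toFinset, ?_⟩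
  intro w hw
  have hw' : ∀ u ∉ hfin.toFinset, ∀ c, ¬ u.asIdeal ∣ (I c : Ideal (𝓞 F)) := by
    intro u hu c h
    apply hu
    rw [Set.Finite.mem_toFinset]
    exact Set.mem_iUnion.2 ⟨c, h⟩
  have h0 : w.asIdeal ∈ nonZeroDivisors (Ideal (𝓞 F)) := mem_nonZeroDivisors_of_ne_zero w.ne_bot
  set J := I (ClassGroup.mk0 ⟨w.asIdeal, h0⟩)⁻¹ with hJ
  have hp : (w.asIdeal * (J : Ideal (𝓞 F))).IsPrincipal := by
    have : ClassGroup.mk0 (⟨w.asIdeal, h0⟩ * J) = 1 := by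
      rw [map_mul, hJ, hI, mul_inv_cancel]
    rw [ClassGroup.mk0_eq_one_iff] at this
    exact this
  obtain ⟨c, hc⟩ := hp
  have hc : w.asIdeal * (J : Ideal (𝓞 F)) = Ideal.span {c} := hc
  have hc0 : c ≠ 0 := by
    rintro rfl
    have : w.asIdeal * (J : Ideal (𝓞 F)) = 0 := by rw [hc]; simp
    exact mul_ne_zero w.ne_bot (nonZeroDivisors.ne_zero J.2) this
  have hcF : algebraMap (𝓞 F) F c ≠ 0 := by simpa using hc0
  refine ⟨Units.mk0 _ hcF, ?_, ?_⟩
  · simp only [Units.val_mk0]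
    rw [HeightOneSpectrum.valuation_of_algebraMap]
    apply le_antisymm
    · have := (w.intValuation_le_pow_iff_mem c 1)
      rw [Nat.cast_one] at this
      rw [this, pow_one, ← Ideal.span_singleton_le_iff_mem, ← hc]
      exact Ideal.mul_le_left (I := w.asIdeal) (J := (J : Ideal (𝓞 F)))
    · by_contra! hlt
      have h3 : w.intValuation c ≤ WithZero.exp (-((2 : ℕ) : ℤ)) := by
        have hne := w.intValuation_ne_zero c hc0
        rw [← WithZero.exp_log hne] at hlt ⊢
        rw [WithZero.exp_lt_exp] at hlt
        rw [WithZero.exp_le_exp]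
        push_cast; omega
      rw [w.intValuation_le_pow_iff_mem, ← Ideal.span_singleton_le_iff_mem, ← hc] at h3
      have h4 := Ideal.dvd_iff_le.2 h3
      rw [pow_two, mul_dvd_mul_iff_left w.ne_bot] at h4
      exact hw' w hw _ h4
  · intro u hu huw
    simp only [Units.val_mk0]
    rw [HeightOneSpectrum.valuation_eq_one_iff_notMem]
    intro hcu
    rw [← Ideal.span_singleton_le_iff_mem, ← hc, u.isPrime.mul_le] at hcu
    rcases hcu with h | h
    · exact huw (HeightOneSpectrum.ext ((w.isMaximal.eq_of_le u.isPrime.ne_top h).symm))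
    · exact hw' u hu _ (Ideal.dvd_iff_le.2 h)

lemma exp_lval (v : HeightOneSpectrum (𝓞 F)) (x : Fˣ) : WithZero.exp (lval v x) = v.valuation F (x : F) :=
  WithZero.exp_log (by simp)

lemma lval_zpow (v : HeightOneSpectrum (𝓞 F)) (x : Fˣ) (n : ℤ) : lval v (x ^ n) = n * lval v x := by
  unfold lval; push_cast; rw [map_zpow₀, WithZero.log_zpow]; simp

lemma lval_prod (v : HeightOneSpectrum (𝓞 F)) {ι : Type*} (s : Finset ι) (f : ι → Fˣ) :
    lval v (∏ i ∈ s, f i) = ∑ i ∈ s, lval v (f i) := by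
  classical
  induction s using Finset.induction_on with
  | empty => simp [lval_one]
  | insert a s ha ih => rw [Finset.prod_insert ha, Finset.sum_insert ha, lval_mul, ih]

/-- prescribed valuations outside `S` -/
lemma ClTriv.exists_val {S : Finset (HeightOneSpectrum (𝓞 F))} (h : ClTriv S)
    (n : HeightOneSpectrum (𝓞 F) → ℤ) (hn : {v | n v ≠ 0}.Finite) :
    ∃ c : Fˣ, ∀ w ∉ S, w.valuation F (c : F) = WithZero.exp (n w) := by
  classical
  have h' : ∀ w : HeightOneSpectrum (𝓞 F), ∃ c : Fˣ, w ∉ S → (w.valuation F (c : F) = WithZero.exp (-1) ∧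
    ∀ u ∉ S, u ≠ w → u.valuation F (c : F) = 1) := by
    intro w
    by_cases hw : w ∈ S
    · exact ⟨1, fun h => absurd hw h⟩
    · obtain ⟨c, hc⟩ := h w hw; exact ⟨c, fun _ => hc⟩
  choose c hc using h'
  refine ⟨∏ v ∈ hn.toFinset \ S, c v ^ (-n v), fun w hw => ?_⟩
  rw [← exp_lval, lval_prod]
  congr 1
  have : ∀ v ∈ hn.toFinset \ S, lval w (c v ^ (-n v)) = if v = w then n w else 0 := by
    intro v hv
    have hvS := (Finset.mem_sdiff.1 hv).2
    rw [lval_zpow]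
    split_ifs with hvw
    · subst hvw
      unfold lval
      rw [(hc v hvS).1]; simp
    · rw [(lval_eq_zero _ _).2 ((hc v hvS).2 w hw (fun h => hvw h.symm)), mul_zero]
  rw [Finset.sum_congr rfl this, Finset.sum_ite_eq']
  split_ifs with h1
  · rfl
  · simp [hw] at h1
    exact h1.symm

end
end TNQ

open scoped WithZero
set_option linter.all false

namespace TNQ
section
universe u
variable {F : Type u} [Field F] [NumberField F]

structure QuadData (F E : Type*) [Field F] [Field E] [Algebra F E] (d : F) where
  δ : E
  σ : E ≃ₐ[F] E
  hsq : δ ^ 2 = algebraMap F E d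
  conj : σ δ = -δ
  span : ∀ x : E, ∃ α β : F, x = algebraMap F E α + algebraMap F E β * δ

theorem exists_quadData (d : F) (hd : ¬ IsSquare d) :
    ∃ (E : Type u) (_ : Field E) (_ : NumberField E) (_ : Algebra F E), Nonempty (QuadData F E d) := by
  haveI : Fact (∀ r : F, r ^ 2 ≠ d + 0 * r) := ⟨fun r hr => hd ⟨r, by rw [← sq, hr]; ring⟩⟩
  let E := QuadraticAlgebra F d 0
  haveI : CharZero E := inferInstance
  haveI : FiniteDimensional ℚ E := by
    have : FiniteDimensional F E := inferInstance
    haveI : IsScalarTower ℚ F E := IsScalarTower.of_algebraMap_eq fun x => by simp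
    exact Module.Finite.trans F E
  refine ⟨E, inferInstance, ⟨⟩, inferInstance, ⟨?_⟩⟩
  refine
  { δ := ⟨0, 1⟩
    σ := AlgEquiv.ofRingEquiv (f := starRingAut (R := E)) ?_
    hsq := ?_
    conj := ?_
    span := ?_ }
  · intro r
    ext <;> simp [E]
  · rw [sq]; ext <;> simp [E]
  · ext <;> simp [E]
  · intro x
    refine ⟨x.re, x.im, ?_⟩
    ext <;> simp [E]

variable {E : Type*} [Field E] [NumberField E] [Algebra F E]

noncomputable def dn (F : Type*) [Field F] [NumberField F] {E : Type*} [Field E] [NumberField E] [Algebra F E]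
    (P : HeightOneSpectrum (𝓞 E)) : HeightOneSpectrum (𝓞 F) := P.under (𝓞 F)

lemma dn_asIdeal (P : HeightOneSpectrum (𝓞 E)) : (dn F P).asIdeal = P.asIdeal.comap (algebraMap (𝓞 F) (𝓞 E)) := rfl

lemma val_dn (P : HeightOneSpectrum (𝓞 E)) : ∃ e : ℕ, e ≠ 0 ∧ ∀ x : F,
    P.valuation E (algebraMap F E x) = (dn F P).valuation F x ^ e := by
  haveI : P.asIdeal.LiesOver (dn F P).asIdeal := ⟨rfl⟩
  exact ⟨_, Ideal.IsDedekindDomain.ramificationIdx'_ne_zero_of_liesOver P.asIdeal (dn F P).ne_bot,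
    fun x => (HeightOneSpectrum.valuation_liesOver E (dn F P) P x).symm⟩

lemma val_dn_lt (P : HeightOneSpectrum (𝓞 E)) (x y : F) : P.valuation E (algebraMap F E x) <
    P.valuation E (algebraMap F E y) ↔ (dn F P).valuation F x < (dn F P).valuation F y := by
  obtain ⟨e, he, h⟩ := val_dn (F := F) P
  rw [h, h, pow_lt_pow_iff_left₀ zero_le zero_le he]

lemma val_dn_le (P : HeightOneSpectrum (𝓞 E)) (x y : F) : P.valuation E (algebraMap F E x) ≤
    P.valuation E (algebraMap F E y) ↔ (dn F P).valuation F x ≤ (dn F P).valuation F y := by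
  rw [← not_lt, val_dn_lt, not_lt]

lemma val_dn_eq_one (P : HeightOneSpectrum (𝓞 E)) (x : F) : P.valuation E (algebraMap F E x) = 1 ↔
    (dn F P).valuation F x = 1 := by
  obtain ⟨e, he, h⟩ := val_dn (F := F) P
  rw [h, pow_eq_one_iff]; simp [he]

lemma dn_surj (v : HeightOneSpectrum (𝓞 F)) : ∃ P : HeightOneSpectrum (𝓞 E), dn F P = v := by
  haveI := v.isMaximal
  obtain ⟨Q, hQ, hQv⟩ := Ideal.exists_maximal_ideal_liesOver_of_isIntegral (S := 𝓞 E) v.asIdeal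
  refine ⟨⟨Q, hQ.isPrime, ?_⟩, ?_⟩
  · rintro rfl
    apply v.ne_bot
    rw [hQv.over]
    simp [Ideal.under_def]
  · ext1
    exact hQv.over.symm

lemma dn_fin (v : HeightOneSpectrum (𝓞 F)) : {P : HeightOneSpectrum (𝓞 E) | dn F P = v}.Finite := by
  haveI := v.isMaximal
  have := IsDedekindDomain.primesOver_finite v.asIdeal (𝓞 E)
  refine Set.Finite.of_finite_image (f := HeightOneSpectrum.asIdeal) (this.subset ?_) ?_
  · rintro _ ⟨P, rfl, rfl⟩
    exact ⟨P.isPrime, ⟨rfl⟩⟩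
  · intro P _ Q _ h
    exact HeightOneSpectrum.ext h

lemma upS_fin (S : Finset (HeightOneSpectrum (𝓞 F))) : {P : HeightOneSpectrum (𝓞 E) | dn F P ∈ S}.Finite := by
  have : {P : HeightOneSpectrum (𝓞 E) | dn F P ∈ S} = ⋃ v ∈ S, {P | dn F P = v} := by
    ext; simp
  rw [this]
  exact S.finite_toSet.biUnion fun v _ => dn_fin v

noncomputable def upS (E : Type*) [Field E] [NumberField E] [Algebra F E] (S : Finset (HeightOneSpectrum (𝓞 F))) :
  Finset (HeightOneSpectrum (𝓞 E)) := (upS_fin S).toFinset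

lemma mem_upS {S : Finset (HeightOneSpectrum (𝓞 F))} {P : HeightOneSpectrum (𝓞 E)} : P ∈ upS E S ↔ dn F P ∈ S := by
  simp [upS]

/-- inclusion on units -/
noncomputable def inc (F E : Type*) [Field F] [Field E] [Algebra F E] : Fˣ →* Eˣ := Units.map (algebraMap F E).toMonoidHom
@[simp] lemma inc_val (x : Fˣ) : ((inc F E x : Eˣ) : E) = algebraMap F E x := rfl

lemma inc_inj : Function.Injective (inc F E) := by
  intro x y h
  ext
  exact (algebraMap F E).injective (by simpa using congrArg Units.val h)

lemma Sq_up (P : HeightOneSpectrum (𝓞 E)) {x : Fˣ} (h : x ∈ Sq ((dn F P).valuation F)) :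
    inc F E x ∈ Sq (P.valuation E) := by
  rw [mem_Sq] at h ⊢
  obtain ⟨y, hy, h⟩ := h
  refine ⟨algebraMap F E y, by simpa using hy, ?_⟩
  rw [← val_dn_lt] at h
  rwa [map_sub, map_mul, map_pow, map_ofNat] at h

noncomputable def cj (σ : E ≃ₐ[F] E) (P : HeightOneSpectrum (𝓞 E)) : HeightOneSpectrum (𝓞 E) :=
  HeightOneSpectrum.comap (RingOfIntegers.mapRingEquiv (σ : E ≃+* E)).toRingHom
   (RingOfIntegers.mapRingEquiv (σ : E ≃+* E)).surjective P

lemma mem_cj (σ : E ≃ₐ[F] E) (P : HeightOneSpectrum (𝓞 E)) (x : 𝓞 E) : x ∈ (cj σ P).asIdeal ↔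
  RingOfIntegers.mapRingEquiv (σ : E ≃+* E) x ∈ P.asIdeal := Iff.rfl

lemma cj_asIdeal (σ : E ≃ₐ[F] E) (P : HeightOneSpectrum (𝓞 E)) : (cj σ P).asIdeal =
   P.asIdeal.comap (RingOfIntegers.mapRingEquiv (σ : E ≃+* E)).toRingHom := rfl

lemma dn_cj (σ : E ≃ₐ[F] E) (P : HeightOneSpectrum (𝓞 E)) : dn F (cj σ P) = dn F P := by
  ext x
  rw [dn_asIdeal, dn_asIdeal, Ideal.mem_comap, Ideal.mem_comap, mem_cj]
  have : RingOfIntegers.mapRingEquiv (σ : E ≃+* E) (algebraMap (𝓞 F) (𝓞 E) x) = algebraMap (𝓞 F) (𝓞 E) x := by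
    ext
    rw [RingOfIntegers.mapRingEquiv_apply]
    exact σ.commutes (x : F)
  rw [this]

lemma val_cj (σ : E ≃ₐ[F] E) (P : HeightOneSpectrum (𝓞 E)) (x : E) :
    (cj σ P).valuation E x = P.valuation E (σ x) := by
  have key : ∀ x : 𝓞 E, (cj σ P).intValuation x = P.intValuation (RingOfIntegers.mapRingEquiv (σ : E ≃+* E) x) := by
    intro x
    have h : ∀ n : ℕ, (cj σ P).intValuation x ≤ WithZero.exp (-(n:ℤ)) ↔
        P.intValuation (RingOfIntegers.mapRingEquiv (σ : E ≃+* E) x) ≤ WithZero.exp (-(n:ℤ)) := by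
      intro n
      rw [HeightOneSpectrum.intValuation_le_pow_iff_mem, HeightOneSpectrum.intValuation_le_pow_iff_mem, cj_asIdeal]
      have : (P.asIdeal.comap (RingOfIntegers.mapRingEquiv (σ : E ≃+* E)).toRingHom) ^ n =
         (P.asIdeal ^ n).comap (RingOfIntegers.mapRingEquiv (σ : E ≃+* E)).toRingHom := by
        have e : ∀ I : Ideal (𝓞 E), I.comap (RingOfIntegers.mapRingEquiv (σ : E ≃+* E)).toRingHom = 
          I.map (RingOfIntegers.mapRingEquiv (σ : E ≃+* E)).symm.toRingHom := fun I =>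
            (Ideal.map_symm (I := I) (RingOfIntegers.mapRingEquiv (σ : E ≃+* E))).symm
        rw [e, e, Ideal.map_pow]
      rw [this]; rfl
    by_cases hx : x = 0
    · simp [hx]
    have h1 := HeightOneSpectrum.intValuation_eq_exp_neg_multiplicity (cj σ P) hx
    have h2 := HeightOneSpectrum.intValuation_eq_exp_neg_multiplicity P
      (r := RingOfIntegers.mapRingEquiv (σ : E ≃+* E) x) (by simpa using hx)
    apply le_antisymm
    · rw [h2, h, h2]
    · rw [h1, ← h, h1]
  obtain ⟨n, d, hd, rfl⟩ := IsFractionRing.div_surjective (A := 𝓞 E) x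
  rw [map_div₀, map_div₀, map_div₀, HeightOneSpectrum.valuation_of_algebraMap, HeightOneSpectrum.valuation_of_algebraMap,
    key, key, ← HeightOneSpectrum.valuation_of_algebraMap (K := E), ← HeightOneSpectrum.valuation_of_algebraMap (K := E)]
  rfl
end
end TNQ

open scoped WithZero
set_option linter.all false

namespace TNQ
section

lemma index_formula {G H : Type*} [CommGroup G] [CommGroup H] (ι : G →* H) (N : H →* G) (U : Subgroup G)
   (M : Subgroup H) (d : G) (hd : d ∈ U) (hdn : d ∉ sqOf U) (h1 : ∀ u ∈ U, ι u ∈ M) (h2 : ∀ m ∈ M, N m ∈ U)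
   (h3 : ∀ u, N (ι u) = u ^ 2) (h4 : ∀ x ∈ M, N x ∈ sqOf U → ∃ u ∈ U, ∃ m ∈ M, x = ι u * m ^ 2)
   (h5 : ∀ u ∈ U, ι u ∈ sqOf M ↔ u ∈ sqOf U ∨ u * d ∈ sqOf U) :
   (M.map N).relIndex U * 2 * (sqOf M).relIndex M = ((sqOf U).relIndex U) ^ 2 := by
  have e1 : (sqOf U).relIndex (M.map N) * (M.map N).relIndex U = (sqOf U).relIndex U := by
    apply Subgroup.relIndex_mul_relIndex
    · intro x hx
      obtain ⟨y, hy, rfl⟩ := mem_sqOf.1 hx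
      exact ⟨ι y, h1 y hy, h3 y⟩
    · rintro _ ⟨m, hm, rfl⟩
      exact h2 m hm
  have e2 : (sqOf U).relIndex (M.map N) = (U.map ι ⊔ sqOf M).relIndex M := by
    rw [← Subgroup.relIndex_comap, ← Subgroup.inf_relIndex_right]
    congr 1
    apply le_antisymm
    · rintro x ⟨hx, hxM⟩
      obtain ⟨u, hu, m, hm, rfl⟩ := h4 x hxM hx
      exact Subgroup.mul_mem_sup ⟨u, hu, rfl⟩ (mem_sqOf.2 ⟨m, hm, rfl⟩)
    · refine sup_le ?_ ?_
      · rintro _ ⟨u, hu, rfl⟩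
        exact ⟨by simpa [h3] using mem_sqOf.2 ⟨u, hu, rfl⟩, h1 u hu⟩
      · intro x hx
        obtain ⟨m, hm, rfl⟩ := mem_sqOf.1 hx
        refine ⟨?_, pow_mem hm 2⟩
        simpa using mem_sqOf.2 ⟨N m, h2 m hm, rfl⟩
  have e3 : (sqOf M).relIndex (U.map ι ⊔ sqOf M) * (U.map ι ⊔ sqOf M).relIndex M = (sqOf M).relIndex M := by
    apply Subgroup.relIndex_mul_relIndex
    · exact le_sup_right
    · refine sup_le ?_ (sqOf_le M)
      rintro _ ⟨u, hu, rfl⟩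
      exact h1 u hu
  have e4 : (sqOf M).relIndex (U.map ι ⊔ sqOf M) = ((sqOf M).comap ι).relIndex U := by
    rw [Subgroup.relIndex_sup_right, Subgroup.relIndex_comap]
  have e5 : (sqOf U).relIndex ((sqOf M).comap ι ⊓ U) * ((sqOf M).comap ι ⊓ U).relIndex U = (sqOf U).relIndex U := by
    apply Subgroup.relIndex_mul_relIndex
    · intro x hx
      exact ⟨(h5 x (sqOf_le U hx)).2 (Or.inl hx), sqOf_le U hx⟩
    · exact inf_le_right
  have e6 : (sqOf U).relIndex ((sqOf M).comap ι ⊓ U) = 2 := by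
    rw [Subgroup.relIndex, Subgroup.index_eq_two_iff]
    have hd2 : d * d ∈ sqOf U := mem_sqOf.2 ⟨d, hd, sq d⟩
    refine ⟨⟨d, (h5 d hd).2 (Or.inr hd2), hd⟩, ?_⟩
    rintro ⟨b, hb, hbU⟩
    simp only [Subgroup.mem_subgroupOf, Subgroup.coe_mul]
    have hb' := (h5 b hbU).1 hb
    rcases hb' with hb' | hb'
    · refine Or.inr ⟨hb', fun h => hdn ?_⟩
      simpa using mul_mem (inv_mem hb') h
    · refine Or.inl ⟨hb', fun h => hdn ?_⟩
      simpa using mul_mem (inv_mem h) hb'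
  rw [Subgroup.inf_relIndex_right] at e5
  rw [e6] at e5
  rw [← e3, e4, ← e2]
  rw [sq, ← e1]
  rw [← e1] at e5
  rw [e1] at e5 ⊢
  nlinarith [e1, e5]

universe u
variable {F : Type*} [Field F] [NumberField F] {E : Type*} [Field E] [NumberField E] [Algebra F E]

lemma mem_sqOf_USub {S : Finset (HeightOneSpectrum (𝓞 F))} {u : Fˣ} (hu : u ∈ USub S) :
    u ∈ sqOf (USub S) ↔ IsSquare (u : F) := by
  constructor
  · intro h
    obtain ⟨y, hy, rfl⟩ := mem_sqOf.1 h
    exact ⟨y, by simp [sq]⟩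
  · rintro ⟨y, hy⟩
    have hy0 : y ≠ 0 := by rintro rfl; simp at hy
    refine mem_sqOf.2 ⟨Units.mk0 y hy0, ?_, by ext; simp [hy, sq]⟩
    rw [mem_USub] at hu ⊢
    intro v hv
    have := hu v hv
    rw [hy, ← sq, map_pow, pow_eq_one_iff] at this
    simpa using this

namespace QuadData
variable {d : F}

lemma σ_apply (D : QuadData F E d) (α β : F) : D.σ (algebraMap F E α + algebraMap F E β * D.δ) = algebraMap F E α - algebraMap F E β * D.δ := by
  simp [D.conj]; ring

lemma σσ (D : QuadData F E d) (x : E) : D.σ (D.σ x) = x := by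
  obtain ⟨α, β, rfl⟩ := D.span x
  rw [D.σ_apply]; simp [D.conj]

lemma mul_σ (D : QuadData F E d) (α β : F) : (algebraMap F E α + algebraMap F E β * D.δ) * D.σ (algebraMap F E α + algebraMap F E β * D.δ)
   = algebraMap F E (α ^ 2 - d * β ^ 2) := by
  rw [D.σ_apply]; simp [← D.hsq]; ring

lemma δ_ne (D : QuadData F E d) (hd : ¬ IsSquare d) (x : F) : algebraMap F E x ≠ D.δ := by
  intro h
  apply hd
  refine ⟨x, (algebraMap F E).injective ?_⟩
  rw [← D.hsq, ← h]; simp [sq]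

lemma δ_ne_zero (D : QuadData F E d) (hd : ¬ IsSquare d) : D.δ ≠ 0 := fun h => D.δ_ne hd 0 (by simp [h])

lemma eq_zero (D : QuadData F E d) (hd : ¬ IsSquare d) {α β : F} (h : algebraMap F E α + algebraMap F E β * D.δ = 0) : α = 0 ∧ β = 0 := by
  by_cases hβ : β = 0
  · simp [hβ] at h; exact ⟨h, hβ⟩
  exfalso
  apply D.δ_ne hd (-α / β)
  have : algebraMap F E β ≠ 0 := by simpa using hβ
  rw [map_div₀, map_neg]
  field_simp
  linear_combination -h

lemma exists_nm (D : QuadData F E d) (x : Eˣ) : ∃ n : Fˣ, algebraMap F E n = x * D.σ x := by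
  obtain ⟨α, β, h⟩ := D.span x
  have h2 := D.mul_σ α β
  rw [← h] at h2
  refine ⟨Units.mk0 (α ^ 2 - d * β ^ 2) ?_, h2.symm⟩
  intro h0
  rw [h0, map_zero] at h2
  have : (x : E) ≠ 0 := x.ne_zero
  simp at h2

/-- norm -/
noncomputable def nm (D : QuadData F E d) : Eˣ →* Fˣ where
  toFun x := (D.exists_nm x).choose
  map_one' := by
    ext; apply (algebraMap F E).injective
    rw [(D.exists_nm 1).choose_spec]; simp
  map_mul' x y := by
    ext; apply (algebraMap F E).injective
    rw [(D.exists_nm (x * y)).choose_spec, Units.val_mul, Units.val_mul, map_mul (algebraMap F E), (D.exists_nm x).choose_spec, (D.exists_nm y).choose_spec]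
    simp; ring

lemma nm_spec (D : QuadData F E d) (x : Eˣ) : algebraMap F E (D.nm x) = x * D.σ x := (D.exists_nm x).choose_spec

lemma nm_inc (D : QuadData F E d) (x : Fˣ) : D.nm (inc F E x) = x ^ 2 := by
  ext; apply (algebraMap F E).injective
  rw [D.nm_spec]; simp [sq]

lemma nm_eq (D : QuadData F E d) (x : Eˣ) : ∃ y z : F, (D.nm x : F) = y ^ 2 - d * z ^ 2 := by
  obtain ⟨α, β, h⟩ := D.span x
  refine ⟨α, β, ?_⟩
  apply (algebraMap F E).injective
  rw [D.nm_spec, ← D.mul_σ, ← h]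

lemma nm_mem (D : QuadData F E d) {S : Finset (HeightOneSpectrum (𝓞 F))} {x : Eˣ} (hx : x ∈ USub (upS E S)) : D.nm x ∈ USub S := by
  rw [mem_USub] at hx ⊢
  intro v hv
  obtain ⟨P, rfl⟩ := dn_surj (E := E) v
  rw [← val_dn_eq_one, D.nm_spec, map_mul, ← val_cj, hx P (by rwa [mem_upS]), hx _ (by rwa [mem_upS, dn_cj]), one_mul]

lemma inc_mem (D : QuadData F E d) {S : Finset (HeightOneSpectrum (𝓞 F))} {x : Fˣ} (hx : x ∈ USub S) : inc F E x ∈ USub (upS E S) := by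
  rw [mem_USub] at hx ⊢
  intro P hP
  rw [inc_val, val_dn_eq_one]
  exact hx _ (by rwa [mem_upS] at hP)

lemma inc_sq (D : QuadData F E d) (hd : ¬ IsSquare d) {S : Finset (HeightOneSpectrum (𝓞 F))} (dd : Fˣ) (hdd : (dd : F) = d) (hdS : dd ∈ USub S)
   {u : Fˣ} (hu : u ∈ USub S) : inc F E u ∈ sqOf (USub (upS E S)) ↔ u ∈ sqOf (USub S) ∨ u * dd ∈ sqOf (USub S) := by
  rw [mem_sqOf_USub (D.inc_mem hu), mem_sqOf_USub hu, mem_sqOf_USub (mul_mem hu hdS), inc_val, Units.val_mul, hdd]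
  have hd0 : d ≠ 0 := hdd ▸ dd.ne_zero
  constructor
  · rintro ⟨y, hy⟩
    obtain ⟨α, β, rfl⟩ := D.span y
    have h0 := D.eq_zero hd (α := α ^ 2 + d * β ^ 2 - u) (β := 2 * α * β) (by
      simp only [map_sub, map_add, map_mul, map_pow, ← D.hsq, hy, map_ofNat]; ring)
    obtain ⟨h0, h1⟩ := h0
    have : α = 0 ∨ β = 0 := by simpa using h1
    rcases this with rfl | rfl
    · right
      exact ⟨d * β, by linear_combination -d * h0⟩
    · left
      exact ⟨α, by linear_combination -h0⟩
  · rintro (⟨y, hy⟩ | ⟨y, hy⟩)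
    · exact ⟨algebraMap F E y, by simp [hy]⟩
    · have hδ := D.δ_ne_zero hd
      refine ⟨algebraMap F E y / D.δ, ?_⟩
      field_simp
      rw [D.hsq, ← map_mul, hy]; simp [sq]

end QuadData
end
end TNQ

open scoped WithZero
set_option linter.all false

namespace TNQ
section

variable {F : Type*} [Field F] [NumberField F] {E : Type*} [Field E] [NumberField E] [Algebra F E]

namespace QuadData
variable {d : F}

lemma hilbert90 (D : QuadData F E d) (hd : ¬ IsSquare d) (x : Eˣ) (hx : D.nm x = 1) : ∃ y : Eˣ, (x : E) * D.σ y = y := by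
  have h := D.nm_spec x
  rw [hx] at h
  simp at h
  by_cases hx1 : 1 + (x : E) = 0
  · refine ⟨Units.mk0 D.δ (D.δ_ne_zero hd), ?_⟩
    simp [D.conj]
    linear_combination -D.δ * hx1
  · refine ⟨Units.mk0 _ hx1, ?_⟩
    simp [mul_add, ← h]; ring

lemma Hm1 (D : QuadData F E d) (hd : ¬ IsSquare d) {S : Finset (HeightOneSpectrum (𝓞 F))} (dd : Fˣ) (hdd : (dd : F) = d) (hdS : dd ∈ USub S)
   (h2 : ∀ v ∉ S, v.valuation F 2 = 1) (hS : ClTriv S) (x : Eˣ) (hx : x ∈ USub (upS E S)) (hx1 : D.nm x = 1) :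
   ∃ y ∈ USub (upS E S), (x : E) * D.σ y = y := by
  obtain ⟨y, hy⟩ := D.hilbert90 hd x hx1
  obtain ⟨α, β, hαβ⟩ := D.span y
  have hne : ∀ w : HeightOneSpectrum (𝓞 F), max (w.valuation F α) (w.valuation F β) ≠ 0 := by
    intro w h
    have h1 : w.valuation F α = 0 := le_antisymm (h ▸ le_max_left _ _) zero_le
    have h2 : w.valuation F β = 0 := le_antisymm (h ▸ le_max_right _ _) zero_le
    simp at h1 h2
    simp [h1, h2] at hαβ
  have hfin : ∀ γ : F, {w : HeightOneSpectrum (𝓞 F) | γ ≠ 0 ∧ w.valuation F γ ≠ 1}.Finite := by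
    intro γ
    by_cases hγ : γ = 0
    · simp [hγ]
    · exact (finite_val_ne_one (Units.mk0 γ hγ)).subset fun w hw => hw.2
  obtain ⟨c, hc⟩ := hS.exists_val (fun w => WithZero.log (max (w.valuation F α) (w.valuation F β))) (by
    refine ((hfin α).union (hfin β)).subset ?_
    intro w hw
    by_contra hn
    apply hw
    simp only [Set.mem_union, Set.mem_ofPred_eq, not_or, not_and, not_not] at hn
    have : max (w.valuation F α) (w.valuation F β) = 1 := by
      by_cases h1 : α = 0
      · by_cases h2 : β = 0
        · exact absurd (by simp [h1, h2]) (hne w)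
        · simp [h1, hn.2 h2]
      · by_cases h2 : β = 0
        · simp [h2, hn.1 h1]
        · simp [hn.1 h1, hn.2 h2]
    rw [this]; simp)
  refine ⟨y / inc F E c, ?_, ?_⟩
  · rw [mem_USub]
    intro P hP
    have hw : dn F P ∉ S := by rwa [mem_upS] at hP
    have hPx : P.valuation E x = 1 := (mem_USub.1 hx) P hP
    have hPσ : P.valuation E (D.σ y) = P.valuation E y := by
      have := congrArg (P.valuation E) hy
      rwa [map_mul, hPx, one_mul] at this
    have hδ : P.valuation E D.δ = 1 := by
      have := (mem_USub.1 hdS) _ hw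
      rw [hdd, ← val_dn_eq_one (E := E), ← D.hsq, map_pow, pow_eq_one_iff] at this
      simpa using this
    have h2' : P.valuation E 2 = 1 := by
      have := h2 _ hw
      rwa [← val_dn_eq_one (E := E), map_ofNat] at this
    have hcP : P.valuation E (algebraMap F E c) = max (P.valuation E (algebraMap F E α)) (P.valuation E (algebraMap F E β)) := by
      have := hc _ hw
      rw [WithZero.exp_log (hne _)] at this
      obtain ⟨e, he, h⟩ := val_dn (F := F) P
      rw [h, h, h, this]
      rcases le_total ((dn F P).valuation F α) ((dn F P).valuation F β) with h | h
      · rw [max_eq_right h, max_eq_right (pow_le_pow_left₀ zero_le h e)]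
      · rw [max_eq_left h, max_eq_left (pow_le_pow_left₀ zero_le h e)]
    have hσy : D.σ y = algebraMap F E α - algebraMap F E β * D.δ := by rw [hαβ, D.σ_apply]
    have : P.valuation E y = P.valuation E (algebraMap F E c) := by
      rw [hcP]
      apply le_antisymm
      · rw [hαβ]
        refine (Valuation.map_add _ _ _).trans ?_
        rw [map_mul, hδ, mul_one]
      · apply max_le
        · have : (2 : E) * algebraMap F E α = y + D.σ y := by rw [hσy, hαβ]; ring
          have h := congrArg (P.valuation E) this
          rw [map_mul, h2', one_mul] at h
          rw [h]
          refine (Valuation.map_add _ _ _).trans ?_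
          rw [hPσ, max_self]
        · have : (2 : E) * algebraMap F E β * D.δ = y - D.σ y := by rw [hσy, hαβ]; ring
          have h := congrArg (P.valuation E) this
          rw [map_mul, map_mul, h2', one_mul, hδ, mul_one] at h
          rw [h]
          refine (Valuation.map_sub _ _ _).trans ?_
          rw [hPσ, max_self]
    rw [Units.val_div_eq_div_val, map_div₀, this, inc_val, div_self]
    simp
  · have : algebraMap F E (c:F) ≠ 0 := by simp
    rw [Units.val_div_eq_div_val, map_div₀, inc_val, AlgEquiv.commutes, ← mul_div_assoc, hy]

lemma index_eq (D : QuadData F E d) (hd : ¬ IsSquare d) {S : Finset (HeightOneSpectrum (𝓞 F))} (dd : Fˣ) (hdd : (dd : F) = d) (hdS : dd ∈ USub S)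
   (h2 : ∀ v ∉ S, v.valuation F 2 = 1) (hS : ClTriv S) : 
   ((USub (upS E S)).map D.nm).relIndex (USub S) * 2 * 2 ^ (Fintype.card (InfinitePlace E) + (upS E S).card) = 
   2 ^ (2 * (Fintype.card (InfinitePlace F) + S.card)) := by
  rw [← relIndex_sqOf_USub, mul_comm 2 (Fintype.card _ + _), pow_mul, ← relIndex_sqOf_USub]
  refine index_formula (inc F E) D.nm (USub S) (USub (upS E S)) dd hdS ?_ (fun u hu => D.inc_mem hu) (fun m hm => D.nm_mem hm) D.nm_inc
    ?_ (fun u hu => D.inc_sq hd dd hdd hdS hu)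
  · rw [mem_sqOf_USub hdS, hdd]; exact hd
  · intro x hx hN
    obtain ⟨u, hu, hux⟩ := mem_sqOf.1 hN
    obtain ⟨y, hy, hxy⟩ := D.Hm1 hd dd hdd hdS h2 hS (x * inc F E u⁻¹) (mul_mem hx (D.inc_mem (inv_mem hu)))
      (by rw [map_mul, D.nm_inc, ← hux]; simp)
    refine ⟨u * (D.nm y)⁻¹, mul_mem hu (inv_mem (D.nm_mem hy)), y, hy, ?_⟩
    ext
    simp only [map_mul, map_inv, Units.val_mul, inc_val, Units.val_inv_eq_inv_val, D.nm_spec, Units.val_pow_eq_pow_val] at hxy ⊢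
    have h0 : algebraMap F E u ≠ 0 := by simp
    have h1 : (y : E) ≠ 0 := y.ne_zero
    have h3 : D.σ (y : E) ≠ 0 := by simp
    field_simp at hxy ⊢
    rw [hxy]

lemma cj_ne (D : QuadData F E d) (dd : Fˣ) (hdd : (dd : F) = d) (P : HeightOneSpectrum (𝓞 E)) (h : dd ∈ Sq ((dn F P).valuation F)) :
    cj D.σ P ≠ P := by
  intro hP
  obtain ⟨y, hy, h⟩ := (mem_Sq _).1 h
  rw [hdd, ← val_dn_lt (E := E), map_sub, ← D.hsq, map_pow, map_mul, map_pow, map_ofNat] at h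
  set z := algebraMap F E y
  have h1 : P.valuation E (D.δ - z) = P.valuation E (D.δ + z) := by
    conv_lhs => rw [← hP, val_cj]
    rw [map_sub, D.conj, AlgEquiv.commutes, ← Valuation.map_neg]
    congr 1; ring
  have h2 : P.valuation E (D.δ - z) < P.valuation E (2 * z) := by
    have : P.valuation E (D.δ - z) ^ 2 < P.valuation E (2 * z) ^ 2 := by
      calc _ = P.valuation E (D.δ ^ 2 - z ^ 2) := by
            rw [sq]; nth_rw 2 [h1]; rw [← map_mul]; congr 1; ring
        _ < _ := h
        _ = P.valuation E ((2 * z) ^ 2) := by congr 1; simp only [z, map_pow]; ring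
        _ = _ := by rw [map_pow]
    exact lt_of_pow_lt_pow_left₀ 2 zero_le this
  have h3 : P.valuation E (2 * z) < P.valuation E (2 * z) := by
    calc P.valuation E (2 * z) = P.valuation E ((D.δ + z) - (D.δ - z)) := by congr 1; ring
      _ ≤ _ := Valuation.map_sub _ _ _
      _ < _ := by rw [← h1, max_self]; exact h2
  exact lt_irrefl _ h3

open Classical in
lemma card_upS (D : QuadData F E d) (dd : Fˣ) (hdd : (dd : F) = d) (S : Finset (HeightOneSpectrum (𝓞 F))) :
    2 * S.card ≤ (upS E S).card + (S.filter fun w => dd ∉ Sq (w.valuation F)).card := by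
  rw [Finset.card_eq_sum_card_fiberwise (f := dn F) (s := upS E S) (t := S) (fun P hP => mem_upS.1 hP),
    Finset.card_filter, ← Finset.sum_add_distrib, mul_comm, ← smul_eq_mul]
  apply Finset.card_nsmul_le_sum
  intro w hw
  obtain ⟨P, rfl⟩ := dn_surj (E := E) w
  by_cases h : dd ∈ Sq ((dn F P).valuation F)
  swap
  · have : 1 ≤ (Finset.filter (fun x => dn F x = dn F P) (upS E S)).card :=
      Finset.card_pos.2 ⟨P, by simp [mem_upS, hw]⟩
    rw [if_pos h]
    omega
  · rw [if_neg (by simpa using h)]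
    have h3 := D.cj_ne dd hdd P h
    have : ({P, cj D.σ P} : Finset _) ⊆ Finset.filter (fun x => dn F x = dn F P) (upS E S) := by
      intro Q hQ
      simp only [Finset.mem_insert, Finset.mem_singleton] at hQ
      rcases hQ with rfl | rfl
      · simp [mem_upS, hw]
      · simp [mem_upS, hw, dn_cj]
    have := Finset.card_le_card this
    rw [Finset.card_pair h3.symm] at this
    omega

open Classical in
lemma card_inf (D : QuadData F E d) (hd : ¬ IsSquare d) (hpos : ∀ τ : F →+* ℝ, 0 < τ d) :
    2 * Fintype.card (InfinitePlace F) ≤ Fintype.card (InfinitePlace E) := by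
  rw [← Finset.card_univ, ← Finset.card_univ, 
    Finset.card_eq_sum_card_fiberwise (f := fun W : InfinitePlace E => W.comap (algebraMap F E)) (s := Finset.univ) (t := Finset.univ) (by simp),
    mul_comm, ← smul_eq_mul]
  apply Finset.card_nsmul_le_sum
  intro w hw
  obtain ⟨W, rfl⟩ := InfinitePlace.comap_surjective (K := E) (k := F) w
  have hne : W ≠ W.comap (D.σ : E →+* E) := by
    intro h
    rw [← InfinitePlace.mk_embedding W, InfinitePlace.comap_mk, InfinitePlace.mk_eq_iff] at h
    set ψ := W.embedding
    have hδ := D.δ_ne_zero hd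
    rcases h with h | h
    · have := congrArg (fun f => f D.δ) h
      simp [D.conj] at this
      have h4 : ψ D.δ = 0 := by
        have : ψ D.δ + ψ D.δ = 0 := by nth_rw 2 [this]; ring
        simpa using this
      exact hδ (by simpa using h4)
    · have hs := congrArg (fun f => f D.δ) h
      simp [D.conj] at hs
      have hreal : ComplexEmbedding.IsReal (ψ.comp (algebraMap F E)) := by
        rw [ComplexEmbedding.isReal_iff]
        ext x
        have := congrArg (fun f => f (algebraMap F E x)) h
        simpa using this
      have hp := hpos hreal.embedding
      have hp2 := hreal.coe_embedding_apply d
      simp only [RingHom.comp_apply, ← D.hsq, map_pow] at hp2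
      have hre : (ψ D.δ).re = 0 := by
        have := congrArg Complex.re hs
        simp at this
        linarith
      have h5 := congrArg Complex.re hp2
      rw [Complex.ofReal_re, sq, Complex.mul_re, hre] at h5
      nlinarith [mul_self_nonneg (ψ D.δ).im]
  have : ({W, W.comap (D.σ : E →+* E)} : Finset _) ⊆ Finset.filter (fun x => x.comap (algebraMap F E) = W.comap (algebraMap F E)) Finset.univ := by
    intro Q hQ
    simp only [Finset.mem_insert, Finset.mem_singleton] at hQ
    rcases hQ with rfl | rfl
    · simp 
    · simp only [Finset.mem_filter, Finset.mem_univ, true_and]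
      rw [← InfinitePlace.comap_comp]
      congr 1
      ext; simp
  have := Finset.card_le_card this
  rw [Finset.card_pair hne] at this
  exact this

open Classical in
/-- Lemma 1 -/
theorem norm_index (D : QuadData F E d) (hd : ¬ IsSquare d) {S : Finset (HeightOneSpectrum (𝓞 F))} (dd : Fˣ) (hdd : (dd : F) = d) (hdS : dd ∈ USub S)
   (h2 : ∀ v ∉ S, v.valuation F 2 = 1) (hS : ClTriv S) (hpos : ∀ τ : F →+* ℝ, 0 < τ d) :
   ((USub (upS E S)).map D.nm).relIndex (USub S) * 2 ≤ 2 ^ (S.filter fun w => dd ∉ Sq (w.valuation F)).card ∧ 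
   ((USub (upS E S)).map D.nm).relIndex (USub S) ≠ 0 := by
  have h := D.index_eq hd dd hdd hdS h2 hS
  have h3 := D.card_upS dd hdd S
  have h4 := D.card_inf hd hpos
  constructor
  · have hp : 0 < 2 ^ (Fintype.card (InfinitePlace E) + (upS E S).card) := by positivity
    refine le_of_mul_le_mul_right ?_ hp
    rw [h, ← pow_add]
    exact Nat.pow_le_pow_right (by norm_num) (by omega)
  · intro h0
    rw [h0, zero_mul, zero_mul] at h
    have : 0 < 2 ^ (2 * (Fintype.card (InfinitePlace F) + S.card)) := by positivity
    omega
end QuadData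
end
end TNQ

open scoped WithZero Topology ENNReal
open Filter
set_option linter.all false

namespace TNQ
section

variable (L : Type*) [Field L] [NumberField L]

noncomputable def wt (s : ℝ) (P : HeightOneSpectrum (𝓞 L)) : ℝ≥0∞ := ENNReal.ofReal ((Ideal.absNorm P.asIdeal : ℝ) ^ (-s))

noncomputable def wm (s : ℝ) (m : Multiset (HeightOneSpectrum (𝓞 L))) : ℝ≥0∞ := (m.map (wt L s)).prod

noncomputable def idl (m : Multiset (HeightOneSpectrum (𝓞 L))) : Ideal (𝓞 L) := (m.map HeightOneSpectrum.asIdeal).prod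

lemma idl_inj : Function.Injective (idl L) := by
  intro m n h
  have key : ∀ m : Multiset (HeightOneSpectrum (𝓞 L)), UniqueFactorizationMonoid.normalizedFactors (idl L m) =
      m.map HeightOneSpectrum.asIdeal := by
    intro m
    apply UniqueFactorizationMonoid.normalizedFactors_prod_of_prime
    intro p hp
    obtain ⟨P, _, rfl⟩ := Multiset.mem_map.1 hp
    exact P.prime
  have h2 := key m
  rw [h, key n] at h2
  exact (Multiset.map_injective (fun P Q h => HeightOneSpectrum.ext h) h2).symm

lemma idl_surj (I : Ideal (𝓞 L)) (hI : I ≠ 0) : ∃ m, idl L m = I := by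
  refine ⟨(UniqueFactorizationMonoid.normalizedFactors I).pmap (fun p (hp : Prime p) => ⟨p, Ideal.isPrime_of_prime hp, hp.ne_zero⟩)
    (fun p hp => UniqueFactorizationMonoid.prime_of_normalized_factor p hp), ?_⟩
  rw [idl, Multiset.map_pmap]
  simp only [Multiset.pmap_eq_map, Multiset.map_id']
  exact (associated_iff_eq.1 (UniqueFactorizationMonoid.prod_normalizedFactors hI))

lemma idl_ne (m) : idl L m ≠ 0 := by
  rw [idl, Ne, Multiset.prod_eq_zero_iff]
  intro h
  obtain ⟨P, _, hP⟩ := Multiset.mem_map.1 h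
  exact P.ne_bot hP

lemma wm_eq (s : ℝ) (m) : wm L s m = ENNReal.ofReal ((Ideal.absNorm (idl L m) : ℝ) ^ (-s)) := by
  induction m using Multiset.induction_on with
  | empty => simp [wm, idl]
  | cons P m ih =>
    have h1 : wm L s (P ::ₘ m) = wt L s P * wm L s m := by simp [wm]
    have h2 : idl L (P ::ₘ m) = P.asIdeal * idl L m := by simp [idl]
    rw [h1, h2, ih, wt, ← ENNReal.ofReal_mul (by positivity), map_mul, Nat.cast_mul, Real.mul_rpow (by positivity) (by positivity)]

noncomputable def Z (s : ℝ) : ℝ≥0∞ := ∑' m, wm L s m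

noncomputable def rr (s : ℝ) (n : ℕ) : ℝ := if n = 0 then 0 else (Nat.card {I : Ideal (𝓞 L) // Ideal.absNorm I = n} : ℝ) * (n : ℝ) ^ (-s)

lemma rr_nonneg (s : ℝ) (n : ℕ) : 0 ≤ rr L s n := by
  unfold rr; split_ifs <;> positivity

lemma Z_eq (s : ℝ) : Z L s = ∑' n, ENNReal.ofReal (rr L s n) := by
  rw [Z, ← (Equiv.sigmaFiberEquiv (fun m => Ideal.absNorm (idl L m))).tsum_eq, ENNReal.tsum_sigma']
  congr 1
  ext n
  have : ∀ b : {m // Ideal.absNorm (idl L m) = n}, wm L s ((Equiv.sigmaFiberEquiv fun m ↦ Ideal.absNorm (idl L m)) ⟨n, b⟩)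
    = ENNReal.ofReal ((n : ℝ) ^ (-s)) := by
    rintro ⟨m, rfl⟩
    exact wm_eq L s m
  simp only [this]
  by_cases hn : n = 0
  · have : IsEmpty {m // Ideal.absNorm (idl L m) = n} := ⟨fun ⟨m, hm⟩ => by
      rw [hn, Ideal.absNorm_eq_zero_iff] at hm
      exact idl_ne L m hm⟩
    simp [rr, hn] 
  · let e : {m // Ideal.absNorm (idl L m) = n} ≃ {I : Ideal (𝓞 L) // Ideal.absNorm I = n} :=
      Equiv.ofBijective (fun m => ⟨idl L m.1, m.2⟩) ⟨fun a b h => Subtype.ext (idl_inj L (congrArg Subtype.val h)), fun I => by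
        obtain ⟨m, hm⟩ := idl_surj L I.1 (by
          intro h; apply hn; rw [← I.2, h]; simp)
        exact ⟨⟨m, by rw [hm]; exact I.2⟩, Subtype.ext hm⟩⟩
    haveI : Finite {I : Ideal (𝓞 L) // Ideal.absNorm I = n} := Ideal.finite_setOfPred_absNorm_eq n
    haveI : Finite {m // Ideal.absNorm (idl L m) = n} := Finite.of_equiv _ e.symm
    rw [ENNReal.tsum_const, rr, if_neg hn, ← Nat.card_congr e, ENNReal.ofReal_mul (by positivity), ENNReal.ofReal_natCast]
    congr 1
    rw [ENat.card_eq_coe_natCard]; rfl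

lemma zeta_eq (s : ℝ) : dedekindZeta L (s : ℂ) = ((∑' n, rr L s n : ℝ) : ℂ) := by
  rw [dedekindZeta, LSeries, Complex.ofReal_tsum]
  congr 1
  ext n
  rw [LSeries.term_def, rr]
  split_ifs with h
  · simp
  · rw [Complex.ofReal_mul, Complex.ofReal_cpow (by positivity), Complex.ofReal_neg, Complex.cpow_neg, div_eq_mul_inv]; simp

theorem zeta_main : ∃ κ > 0, ∃ R : ℝ → ℝ, Tendsto (fun s => (s-1) * R s) (𝓝[>] 1) (𝓝 κ) ∧ (∀ s, 0 ≤ R s) ∧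
    ∀ᶠ s in 𝓝[>] (1:ℝ), Z L s = ENNReal.ofReal (R s) := by
  refine ⟨_, dedekindZeta_residue_pos L, fun s => ∑' n, rr L s n, ?_, fun s => tsum_nonneg (rr_nonneg L s), ?_⟩
  · have := (Complex.continuous_re.tendsto _).comp (tendsto_sub_one_mul_dedekindZeta_nhdsGT L)
    refine (this.congr fun s => ?_)
    simp only [Function.comp]
    rw [zeta_eq, ← Complex.ofReal_one, ← Complex.ofReal_sub, ← Complex.ofReal_mul, Complex.ofReal_re]
  · have := (tendsto_sub_one_mul_dedekindZeta_nhdsGT L).eventually_ne (by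
      simpa using dedekindZeta_residue_ne_zero L : ((dedekindZeta_residue L : ℝ) : ℂ) ≠ 0)
    filter_upwards [this] with s hs
    rw [zeta_eq] at hs
    have hsum : Summable (rr L s) := by
      by_contra h
      rw [tsum_eq_zero_of_not_summable h] at hs
      simp at hs
    rw [Z_eq, ENNReal.ofReal_tsum_of_nonneg (rr_nonneg L s) hsum]
end
end TNQ

open scoped WithZero Topology ENNReal
open Filter
set_option linter.all false

namespace TNQ
section
universe u
variable (L : Type u) [Field L] [NumberField L]

open Classical in
noncomputable def fS (s : ℝ) (S : Finset (HeightOneSpectrum (𝓞 L))) (m : Multiset (HeightOneSpectrum (𝓞 L))) : ℝ≥0∞ :=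
  if ∀ P ∈ m, P ∉ S then wm L s m else 0

lemma fS_le (s : ℝ) (S m) : fS L s S m ≤ wm L s m := by
  unfold fS; split_ifs <;> simp

lemma wt_le (s : ℝ) (hs : 1 < s) (P : HeightOneSpectrum (𝓞 L)) : wt L s P ≤ 2⁻¹ := by
  have h1 : (2 : ℝ) ≤ Ideal.absNorm P.asIdeal := by
    have h0 : Ideal.absNorm P.asIdeal ≠ 0 := by
      rw [Ne, Ideal.absNorm_eq_zero_iff]; exact P.ne_bot
    have h1 : Ideal.absNorm P.asIdeal ≠ 1 := by
      rw [Ne, Ideal.absNorm_eq_one_iff]; exact P.isPrime.ne_top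
    exact_mod_cast (by omega : 2 ≤ Ideal.absNorm P.asIdeal)
  have : ((Ideal.absNorm P.asIdeal : ℝ) ^ (-s)) ≤ 2⁻¹ := by
    rw [Real.rpow_neg (by positivity)]
    apply inv_anti₀ (by norm_num)
    calc (2:ℝ) ≤ _ := h1
      _ = (Ideal.absNorm P.asIdeal : ℝ) ^ (1:ℝ) := by simp
      _ ≤ _ := Real.rpow_le_rpow_of_exponent_le (by linarith) hs.le
  rw [wt]
  refine (ENNReal.ofReal_le_ofReal this).trans ?_
  rw [ENNReal.ofReal_inv_of_pos (by norm_num)]; simp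

open Classical in
lemma sum_fS (s : ℝ) (hs : 1 < s) (hZ : Z L s ≠ ∞) (S : Finset (HeightOneSpectrum (𝓞 L))) :
    Z L s ≤ 2 ^ S.card * ∑' m, fS L s S m := by
  induction S using Finset.induction_on with
  | empty => simp [fS, Z]
  | insert P S hP ih =>
    refine ih.trans ?_
    rw [Finset.card_insert_of_notMem hP, pow_succ, mul_assoc]
    gcongr
    set A := ∑' m, fS L s S m
    set B := ∑' m, fS L s (insert P S) m
    have hA : A ≠ ∞ := ne_top_of_le_ne_top hZ (ENNReal.tsum_le_tsum (fS_le L s S))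
    have hAB : A ≤ B + 2⁻¹ * A := by
      calc A ≤ ∑' m, (fS L s (insert P S) m + if P ∈ m then fS L s S m else 0) := by
            apply ENNReal.tsum_le_tsum
            intro m
            by_cases h : P ∈ m
            · simp [h]
            · simp only [h, if_false, add_zero]
              unfold fS
              by_cases h2 : ∀ Q ∈ m, Q ∉ S
              · rw [if_pos h2, if_pos]
                intro Q hQ
                simp only [Finset.mem_insert, not_or]
                exact ⟨by rintro rfl; exact h hQ, h2 Q hQ⟩
              · rw [if_neg h2]; simp
        _ = B + ∑' m, (if P ∈ m then fS L s S m else 0) := ENNReal.tsum_add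
        _ ≤ B + 2⁻¹ * A := by
            gcongr
            have hinj : Function.Injective (fun m : Multiset (HeightOneSpectrum (𝓞 L)) => P ::ₘ m) := fun a b h => by simpa using h
            rw [← hinj.tsum_eq, ← ENNReal.tsum_mul_left]
            · apply ENNReal.tsum_le_tsum
              intro m
              simp only [Multiset.mem_cons_self, if_true]
              unfold fS
              by_cases h2 : ∀ Q ∈ m, Q ∉ S
              · rw [if_pos h2]
                split_ifs
                · have h1 : wm L s (P ::ₘ m) = wt L s P * wm L s m := by simp [wm]
                  rw [h1]
                  gcongr
                  exact wt_le L s hs P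
                · exact zero_le
              · rw [if_neg, if_neg h2]; simp
                intro h
                exact h2 fun Q hQ => h Q (Multiset.mem_cons_of_mem hQ)
            · intro m hm
              by_cases h : P ∈ m
              · exact ⟨m.erase P, Multiset.cons_erase h⟩
              · simp [h] at hm
    have hB : A - 2⁻¹ * A ≤ B := tsub_le_iff_right.2 hAB
    have h2A : 2⁻¹ * A + 2⁻¹ * A = A := by rw [← add_mul, ENNReal.inv_two_add_inv_two, one_mul]
    have h3 : 2⁻¹ * A ≤ B := by
      have h4 : 2⁻¹ * A ≠ ∞ := ENNReal.mul_ne_top (by simp) hA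
      have : 2⁻¹ * A + 2⁻¹ * A ≤ B + 2⁻¹ * A := by rw [h2A]; exact hAB
      exact (ENNReal.add_le_add_iff_right h4).1 this
    calc A = 2 * (2⁻¹ * A) := by rw [← mul_assoc, ENNReal.mul_inv_cancel (by simp) (by simp), one_mul]
      _ ≤ _ := by gcongr

variable {L}
open Classical in
theorem no_split {E : Type*} [Field E] [NumberField E] [Algebra L E] (S : Finset (HeightOneSpectrum (𝓞 L)))
   (h : ∀ P ∉ S, ∃ Q Q' : HeightOneSpectrum (𝓞 E), Q ≠ Q' ∧ dn L Q = P ∧ dn L Q' = P ∧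
     Ideal.absNorm Q.asIdeal ≤ Ideal.absNorm P.asIdeal ∧ Ideal.absNorm Q'.asIdeal ≤ Ideal.absNorm P.asIdeal) : False := by
  have h' : ∀ P, ∃ Q Q' : HeightOneSpectrum (𝓞 E), dn L Q = P ∧ dn L Q' = P ∧ (P ∉ S → (Q ≠ Q' ∧
     Ideal.absNorm Q.asIdeal ≤ Ideal.absNorm P.asIdeal ∧ Ideal.absNorm Q'.asIdeal ≤ Ideal.absNorm P.asIdeal)) := by
    intro P
    by_cases hP : P ∈ S
    · obtain ⟨Q, hQ⟩ := dn_surj (E := E) P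
      exact ⟨Q, Q, hQ, hQ, fun h => absurd hP h⟩
    · obtain ⟨Q, Q', h1, h2, h3, h4, h5⟩ := h P hP
      exact ⟨Q, Q', h2, h3, fun _ => ⟨h1, h4, h5⟩⟩
  choose Q Q' hQ hQ' hQQ using h'
  obtain ⟨κ, hκ, R, hR, hR0, hRZ⟩ := zeta_main L
  obtain ⟨κ', hκ', R', hR', hR0', hRZ'⟩ := zeta_main E
  have key : ∀ s : ℝ, 1 < s → (∑' m, fS L s S m) * (∑' m, fS L s S m) ≤ Z E s := by
    intro s hs
    rw [← ENNReal.tsum_mul_right]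
    simp_rw [← ENNReal.tsum_mul_left]
    rw [← ENNReal.tsum_prod' (f := fun p : _ × _ => fS L s S p.1 * fS L s S p.2)]
    let X := {m : Multiset (HeightOneSpectrum (𝓞 L)) // ∀ P ∈ m, P ∉ S}
    let j : X × X → Multiset (HeightOneSpectrum (𝓞 L)) × Multiset (HeightOneSpectrum (𝓞 L)) := fun p => (p.1.1, p.2.1)
    have hj : Function.Injective j := by
      rintro ⟨a, b⟩ ⟨c, d⟩ h
      simp only [j, Prod.mk.injEq] at h
      exact Prod.ext (Subtype.ext h.1) (Subtype.ext h.2)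
    rw [← hj.tsum_eq]
    swap
    · rintro ⟨m, n⟩ hmn
      simp only [fS, Function.mem_support, ne_eq, mul_eq_zero, not_or] at hmn
      have h1 : ∀ P ∈ m, P ∉ S := by
        by_contra h; exact hmn.1 (if_neg h)
      have h2 : ∀ P ∈ n, P ∉ S := by
        by_contra h; exact hmn.2 (if_neg h)
      exact ⟨(⟨m, h1⟩, ⟨n, h2⟩), rfl⟩
    let i : X × X → Multiset (HeightOneSpectrum (𝓞 E)) := fun p => p.1.1.map Q + p.2.1.map Q'
    have hi : Function.Injective i := by
      have rec1 : ∀ p : X × X, ((i p).filter (fun R => R = Q (dn L R))).map (dn L) = p.1.1 := by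
        rintro ⟨⟨m, hm⟩, ⟨n, hn⟩⟩
        simp only [i, Multiset.filter_add]
        have e1 : (Multiset.map Q m).filter (fun R => R = Q (dn L R)) = Multiset.map Q m := by
          rw [Multiset.filter_eq_self]
          intro R hR
          obtain ⟨P, _, rfl⟩ := Multiset.mem_map.1 hR
          rw [hQ]
        have e2 : (Multiset.map Q' n).filter (fun R => R = Q (dn L R)) = 0 := by
          rw [Multiset.filter_eq_nil]
          intro R hR
          obtain ⟨P, hP, rfl⟩ := Multiset.mem_map.1 hR
          rw [hQ']
          exact (hQQ P (hn P hP)).1.symm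
        rw [e1, e2, add_zero, Multiset.map_map]
        simp [Function.comp_def, hQ]
      have rec2 : ∀ p : X × X, ((i p).filter (fun R => R ≠ Q (dn L R))).map (dn L) = p.2.1 := by
        rintro ⟨⟨m, hm⟩, ⟨n, hn⟩⟩
        simp only [i, Multiset.filter_add]
        have e1 : (Multiset.map Q m).filter (fun R => R ≠ Q (dn L R)) = 0 := by
          rw [Multiset.filter_eq_nil]
          intro R hR
          obtain ⟨P, _, rfl⟩ := Multiset.mem_map.1 hR
          rw [hQ]; simp
        have e2 : (Multiset.map Q' n).filter (fun R => R ≠ Q (dn L R)) = Multiset.map Q' n := by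
          rw [Multiset.filter_eq_self]
          intro R hR
          obtain ⟨P, hP, rfl⟩ := Multiset.mem_map.1 hR
          rw [hQ']
          exact (hQQ P (hn P hP)).1.symm
        rw [e1, e2, zero_add, Multiset.map_map]
        simp [Function.comp_def, hQ']
      intro p p' hpp
      refine Prod.ext (Subtype.ext ?_) (Subtype.ext ?_)
      · rw [← rec1, ← rec1, hpp]
      · rw [← rec2, ← rec2, hpp]
    refine le_trans ?_ (ENNReal.tsum_comp_le_tsum_of_injective hi (wm E s))
    apply ENNReal.tsum_le_tsum
    rintro ⟨⟨m, hm⟩, ⟨n, hn⟩⟩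
    have hw : ∀ (T : HeightOneSpectrum (𝓞 E)) (P : HeightOneSpectrum (𝓞 L)), Ideal.absNorm T.asIdeal ≤ Ideal.absNorm P.asIdeal → wt L s P ≤ wt E s T := by
      intro T P hTP
      apply ENNReal.ofReal_le_ofReal
      have h0 : Ideal.absNorm T.asIdeal ≠ 0 := by
        rw [Ne, Ideal.absNorm_eq_zero_iff]; exact T.ne_bot
      apply Real.rpow_le_rpow_of_nonpos (by positivity) (by exact_mod_cast hTP) (by linarith)
    simp only [j, i]
    refine (mul_le_mul' (fS_le L s S m) (fS_le L s S n)).trans ?_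
    simp only [wm, Multiset.map_add, Multiset.prod_add, Multiset.map_map]
    apply mul_le_mul'
    · exact Multiset.prod_map_le_prod_map _ _ fun P hP => hw _ _ (hQQ P (hm P hP)).2.1
    · exact Multiset.prod_map_le_prod_map _ _ fun P hP => hw _ _ (hQQ P (hn P hP)).2.2
  have key2 : ∀ᶠ s in 𝓝[>] (1:ℝ), ((s - 1) * R s) ^ 2 ≤ (2 ^ S.card) ^ 2 * ((s - 1) * ((s - 1) * R' s)) := by
    filter_upwards [hRZ, hRZ', self_mem_nhdsWithin] with s h1 h2 hs
    have hs : 1 < s := hs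
    have h3 := sum_fS L s hs (by rw [h1]; simp) S
    have h4 : Z L s * Z L s ≤ (2 ^ S.card) ^ 2 * Z E s := by
      refine (mul_le_mul' h3 h3).trans ?_
      calc _ = (2 ^ S.card) ^ 2 * ((∑' m, fS L s S m) * (∑' m, fS L s S m)) := by ring
        _ ≤ _ := by gcongr; exact key s hs
    rw [h1, h2, ← ENNReal.ofReal_mul (hR0 s)] at h4
    have h5 : ((2 : ℝ≥0∞) ^ S.card) ^ 2 = ENNReal.ofReal ((2 ^ S.card) ^ 2) := by
      rw [ENNReal.ofReal_pow (by positivity), ENNReal.ofReal_pow (by positivity)]; simp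
    rw [h5, ← ENNReal.ofReal_mul (by positivity), ENNReal.ofReal_le_ofReal_iff (mul_nonneg (by positivity) (hR0' s))] at h4
    calc _ = (s - 1) ^ 2 * (R s * R s) := by ring
      _ ≤ (s - 1) ^ 2 * ((2 ^ S.card) ^ 2 * R' s) := by gcongr
      _ = _ := by ring
  have l1 : Tendsto (fun s : ℝ => ((s - 1) * R s) ^ 2) (𝓝[>] 1) (𝓝 (κ ^ 2)) := hR.pow 2
  have l2 : Tendsto (fun s : ℝ => ((2:ℝ) ^ S.card) ^ 2 * ((s - 1) * ((s - 1) * R' s))) (𝓝[>] 1) (𝓝 (((2:ℝ) ^ S.card) ^ 2 * (0 * κ'))) := by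
    refine Tendsto.const_mul _ (Tendsto.mul ?_ hR')
    have : Tendsto (fun s : ℝ => s - 1) (𝓝 1) (𝓝 (1 - 1)) := (continuous_id.sub continuous_const).tendsto 1
    rw [sub_self] at this
    exact this.mono_left nhdsWithin_le_nhds
  have := le_of_tendsto_of_tendsto l1 l2 key2
  simp at this
  nlinarith [sq_nonneg κ, pow_pos hκ 2]

lemma finrank_le {F E : Type*} [Field F] [Field E] [Algebra F E] {d : F} (D : QuadData F E d) : Module.finrank F E ≤ 2 := by
  have : Submodule.span F (Set.range ![(1:E), D.δ]) = ⊤ := by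
    rw [eq_top_iff]
    rintro x -
    obtain ⟨α, β, rfl⟩ := D.span x
    have h1 : (1:E) ∈ Submodule.span F (Set.range ![(1:E), D.δ]) := Submodule.subset_span ⟨0, rfl⟩
    have h2 : D.δ ∈ Submodule.span F (Set.range ![(1:E), D.δ]) := Submodule.subset_span ⟨1, rfl⟩
    rw [Algebra.algebraMap_eq_smul_one, ← Algebra.smul_def]
    exact add_mem (Submodule.smul_mem _ _ h1) (Submodule.smul_mem _ _ h2)
  have := finrank_le_of_span_eq_top this
  simpa using this

theorem exists_nonSq (x : Lˣ) (hx : ¬ IsSquare (x : L)) (S : Finset (HeightOneSpectrum (𝓞 L))) :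
    ∃ P ∉ S, x ∉ Sq (P.valuation L) := by
  by_contra hcon
  push Not at hcon
  obtain ⟨E, _, _, _, ⟨D⟩⟩ := exists_quadData (x : L) hx
  refine no_split (E := E) S fun P hP => ?_
  obtain ⟨Q, hQ⟩ := dn_surj (E := E) P
  have hne := D.cj_ne x rfl Q (by rw [hQ]; exact hcon P hP)
  have hN : Ideal.absNorm (cj D.σ Q).asIdeal = Ideal.absNorm Q.asIdeal := by
    have e : (𝓞 E ⧸ (cj D.σ Q).asIdeal) ≃+* (𝓞 E ⧸ Q.asIdeal) := 
      Ideal.quotientEquiv _ _ (RingOfIntegers.mapRingEquiv (D.σ : E ≃+* E)) (by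
        rw [cj_asIdeal]
        exact (Ideal.map_comap_of_surjective _ (RingOfIntegers.mapRingEquiv (D.σ : E ≃+* E)).surjective _).symm)
    rw [Ideal.absNorm_apply, Ideal.absNorm_apply, Submodule.cardQuot_apply, Submodule.cardQuot_apply]
    exact Nat.card_congr e.toEquiv
  have hle : Ideal.absNorm Q.asIdeal ≤ Ideal.absNorm P.asIdeal := by
    have hdvd : Q.asIdeal * (cj D.σ Q).asIdeal ∣ P.asIdeal.map (algebraMap (𝓞 L) (𝓞 E)) := by
      have h1 : ∀ R : HeightOneSpectrum (𝓞 E), dn L R = P → R.asIdeal ∣ P.asIdeal.map (algebraMap (𝓞 L) (𝓞 E)) := by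
        intro R hR
        rw [Ideal.dvd_iff_le, Ideal.map_le_iff_le_comap, ← hR, dn_asIdeal]
      refine IsCoprime.mul_dvd ?_ (h1 _ hQ) (h1 _ (by rw [dn_cj, hQ]))
      have := Q.isMaximal
      have := (cj D.σ Q).isMaximal
      exact Ideal.isCoprime_of_isMaximal (fun h => hne (HeightOneSpectrum.ext h.symm))
    have h2 := Nat.le_of_dvd (by
      rw [Nat.pos_iff_ne_zero, Ne, Ideal.absNorm_eq_zero_iff, Ideal.map_eq_bot_iff_of_injective (FaithfulSMul.algebraMap_injective _ _)]
      exact P.ne_bot) (map_dvd Ideal.absNorm hdvd)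
    rw [map_mul, hN, Ideal.absNorm_algebraMap, ← IsFractionRing.finrank_eq (𝓞 L) L (𝓞 E) E] at h2
    have h0 : 1 ≤ Ideal.absNorm P.asIdeal := by
      rw [Nat.one_le_iff_ne_zero, Ne, Ideal.absNorm_eq_zero_iff]; exact P.ne_bot
    have h3 := Nat.pow_le_pow_right h0 (finrank_le D)
    nlinarith
  exact ⟨Q, cj D.σ Q, hne.symm, hQ, by rw [dn_cj, hQ], hle, hN ▸ hle⟩
end
end TNQ

open scoped WithZero
set_option linter.all false

namespace TNQ
section
universe u
variable {F : Type u} [Field F] [NumberField F]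

/-- the residue field -/
def kk (w : HeightOneSpectrum (𝓞 F)) : Type u := 𝓞 F ⧸ w.asIdeal

noncomputable instance kkField (w : HeightOneSpectrum (𝓞 F)) : Field (kk w) :=
  haveI := w.isMaximal
  (Ideal.Quotient.field w.asIdeal : Field (𝓞 F ⧸ w.asIdeal))

instance kkFinite (w : HeightOneSpectrum (𝓞 F)) : Finite (kk w) :=
  (Ideal.finiteQuotientOfFreeOfNeBot w.asIdeal w.ne_bot : Finite (𝓞 F ⧸ w.asIdeal))

noncomputable instance kkFintype (w : HeightOneSpectrum (𝓞 F)) : Fintype (kk w) := Fintype.ofFinite _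

noncomputable def toK (w : HeightOneSpectrum (𝓞 F)) : 𝓞 F →+* kk w :=
  haveI := w.isMaximal
  (Ideal.Quotient.mk w.asIdeal : 𝓞 F →+* 𝓞 F ⧸ w.asIdeal)

lemma toK_eq_zero {w : HeightOneSpectrum (𝓞 F)} {r : 𝓞 F} : toK w r = 0 ↔ w.valuation F (r : F) < 1 := by
  rw [show (r : F) = algebraMap (𝓞 F) F r from rfl, w.valuation_lt_one_iff_mem]
  exact Ideal.Quotient.eq_zero_iff_mem

lemma toK_eq {w : HeightOneSpectrum (𝓞 F)} {r s : 𝓞 F} : toK w r = toK w s ↔ w.valuation F ((r : F) - s) < 1 := by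
  rw [← sub_eq_zero, ← map_sub, toK_eq_zero]; simp

lemma toK_surj (w : HeightOneSpectrum (𝓞 F)) : Function.Surjective (toK w) :=
  Ideal.Quotient.mk_surjective

lemma val_int_le (w : HeightOneSpectrum (𝓞 F)) (r : 𝓞 F) : w.valuation F (r : F) ≤ 1 := w.valuation_le_one r

lemma exists_rep (w : HeightOneSpectrum (𝓞 F)) {x : F} (hx : w.valuation F x ≤ 1) :
    ∃ r : 𝓞 F, w.valuation F (x - r) < 1 := by
  obtain ⟨r, hr⟩ := w.exists_valuation_sub_lt_of_integer hx 1
  exact ⟨r, by rw [Valuation.map_sub_swap]; simpa using hr⟩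

open Classical in
/-- the residue of an integral element (zero otherwise) -/
noncomputable def res (w : HeightOneSpectrum (𝓞 F)) (x : F) : kk w :=
  if h : w.valuation F x ≤ 1 then toK w (exists_rep w h).choose else 0

lemma res_of {w : HeightOneSpectrum (𝓞 F)} {x : F} {r : 𝓞 F} (h : w.valuation F (x - r) < 1) : res w x = toK w r := by
  have hx : w.valuation F x ≤ 1 := by
    have := w.valuation F |>.map_add (x - r) r
    rw [sub_add_cancel] at this
    exact this.trans (max_le h.le (val_int_le w r))
  rw [res, dif_pos hx, toK_eq]
  have h2 := (exists_rep w hx).choose_spec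
  have : (((exists_rep w hx).choose : 𝓞 F) : F) - r = (x - r) - (x - ((exists_rep w hx).choose : 𝓞 F)) := by ring
  rw [this]
  exact Valuation.map_sub_lt _ h h2

variable {w : HeightOneSpectrum (𝓞 F)} {x y : F}

lemma res_int (r : 𝓞 F) : res w (r : F) = toK w r := res_of (by simp)

lemma res_add (hx : w.valuation F x ≤ 1) (hy : w.valuation F y ≤ 1) : res w (x + y) = res w x + res w y := by
  obtain ⟨r, hr⟩ := exists_rep w hx
  obtain ⟨s, hs⟩ := exists_rep w hy
  rw [res_of hr, res_of hs, ← map_add]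
  apply res_of
  rw [show x + y - ((r + s : 𝓞 F) : F) = (x - r) + (y - s) by push_cast; ring]
  exact Valuation.map_add_lt _ hr hs

lemma res_mul (hx : w.valuation F x ≤ 1) (hy : w.valuation F y ≤ 1) : res w (x * y) = res w x * res w y := by
  obtain ⟨r, hr⟩ := exists_rep w hx
  obtain ⟨s, hs⟩ := exists_rep w hy
  rw [res_of hr, res_of hs, ← map_mul]
  apply res_of
  rw [show x * y - ((r * s : 𝓞 F) : F) = (x - r) * y + r * (y - s) by push_cast; ring]
  apply Valuation.map_add_lt
  · rw [map_mul]; exact (mul_le_of_le_one_right zero_le hy).trans_lt hr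
  · rw [map_mul]; exact (mul_le_of_le_one_left zero_le (val_int_le w r)).trans_lt hs

lemma res_neg (hx : w.valuation F x ≤ 1) : res w (-x) = - res w x := by
  obtain ⟨r, hr⟩ := exists_rep w hx
  rw [res_of hr, ← map_neg]
  apply res_of
  rw [show -x - ((-r : 𝓞 F) : F) = -(x - r) by push_cast; ring, Valuation.map_neg]
  exact hr

lemma res_sub (hx : w.valuation F x ≤ 1) (hy : w.valuation F y ≤ 1) : res w (x - y) = res w x - res w y := by
  rw [sub_eq_add_neg, res_add hx (by rwa [Valuation.map_neg]), res_neg hy, sub_eq_add_neg]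

lemma res_pow (hx : w.valuation F x ≤ 1) (n : ℕ) : res w (x ^ n) = res w x ^ n := by
  induction n with
  | zero => simpa using res_int (w := w) (1 : 𝓞 F)
  | succ k ih => rw [pow_succ, pow_succ, res_mul (by rw [map_pow]; exact pow_le_one' hx k) hx, ih]

lemma res_one : res w (1 : F) = 1 := by simpa using res_int (w := w) (1 : 𝓞 F)
lemma res_nat (n : ℕ) : res w (n : F) = n := by simpa using res_int (w := w) (n : 𝓞 F)
lemma res_two : res w (2 : F) = 2 := by simpa using res_nat (w := w) 2
lemma res_four : res w (4 : F) = 4 := by simpa using res_nat (w := w) 4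

lemma res_eq_zero (hx : w.valuation F x ≤ 1) : res w x = 0 ↔ w.valuation F x < 1 := by
  obtain ⟨r, hr⟩ := exists_rep w hx
  rw [res_of hr, toK_eq_zero]
  constructor <;> intro h
  · have := Valuation.map_add_lt _ hr h
    simpa using this
  · have := Valuation.map_sub_lt _ h hr
    simpa using this

lemma res_eq (hx : w.valuation F x ≤ 1) (hy : w.valuation F y ≤ 1) : res w x = res w y ↔ w.valuation F (x - y) < 1 := by
  rw [← sub_eq_zero, ← res_sub hx hy, res_eq_zero ((Valuation.map_sub _ _ _).trans (max_le hx hy))]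

lemma res_ne_zero (hx : w.valuation F x ≤ 1) : res w x ≠ 0 ↔ w.valuation F x = 1 := by
  rw [Ne, res_eq_zero hx, not_lt]; exact ⟨fun h => le_antisymm hx h, fun h => h.ge⟩

lemma res_surj (w : HeightOneSpectrum (𝓞 F)) (α : kk w) : ∃ x : F, w.valuation F x ≤ 1 ∧ res w x = α := by
  obtain ⟨r, rfl⟩ := toK_surj w α
  exact ⟨r, val_int_le w r, res_int r⟩

/-- squares at an odd place, for units -/
lemma Sq_iff_res (h2 : w.valuation F 2 = 1) {x : Fˣ} (hx : w.valuation F (x : F) = 1) :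
    x ∈ Sq (w.valuation F) ↔ IsSquare (res w (x : F)) := by
  have h4 : w.valuation F 4 = 1 := by rw [val_four, h2, one_mul]
  rw [mem_Sq]
  constructor
  · rintro ⟨y, hy0, hy⟩
    rw [map_mul, h4, one_mul] at hy
    have h1 := Valuation.map_eq_of_sub_lt (v := w.valuation F) (x := y ^ 2) (y := (x : F)) hy
    have hy2 : w.valuation F y ^ 2 = 1 := by rw [← map_pow, ← h1, hx]
    have hy1 : w.valuation F y = 1 := by
      rcases (pow_eq_one_iff).1 hy2 with h | h
      · exact h
      · omega
    refine ⟨res w y, ?_⟩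
    rw [← sq, ← res_pow hy1.le, res_eq hx.le (by rw [map_pow, hy2])]
    rw [map_pow, hy2] at hy; exact hy
  · rintro ⟨α, hα⟩
    obtain ⟨y, hy, rfl⟩ := res_surj w α
    rw [← res_mul hy hy, res_eq hx.le (by rw [map_mul]; exact mul_le_one' hy hy)] at hα
    have h1 : w.valuation F (y * y) = 1 := by
      rw [Valuation.map_eq_of_sub_lt (v := w.valuation F) (x := (x:F)) (y := y * y), hx]
      rw [Valuation.map_sub_swap, hx]; exact hα
    refine ⟨y, ?_, ?_⟩
    · rintro rfl; simp at h1
    · rw [sq, map_mul, h1, h4, one_mul]; exact hα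

lemma Sq_mul_of_not (h2 : w.valuation F 2 = 1) {x y : Fˣ} (hx : w.valuation F (x : F) = 1) (hy : w.valuation F (y : F) = 1)
    (hxs : x ∉ Sq (w.valuation F)) (hys : y ∉ Sq (w.valuation F)) : x * y ∈ Sq (w.valuation F) := by
  classical
  rw [Sq_iff_res h2 hx, ← quadraticChar_neg_one_iff_not_isSquare] at hxs
  rw [Sq_iff_res h2 hy, ← quadraticChar_neg_one_iff_not_isSquare] at hys
  have hxy : w.valuation F ((x * y : Fˣ) : F) = 1 := by rw [Units.val_mul, map_mul, hx, hy, one_mul]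
  rw [Sq_iff_res h2 hxy, ← quadraticChar_one_iff_isSquare ((res_ne_zero hxy.le).2 hxy), Units.val_mul,
    res_mul hx.le hy.le, map_mul, hxs, hys]
  norm_num

/-- (D) -/
theorem exists_sep {S : Finset (HeightOneSpectrum (𝓞 F))} (h2 : ∀ v ∉ S, v.valuation F 2 = 1) {a u : Fˣ}
    (ha : a ∈ USub S) (hu : u ∈ USub S) (has : ¬ IsSquare (a : F)) (hus : u ∉ sqOf (USub S))
    (hua : u * a ∉ sqOf (USub S)) : ∃ w ∉ S, a ∈ Sq (w.valuation F) ∧ u ∉ Sq (w.valuation F) := by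
  obtain ⟨E, _, _, _, ⟨D⟩⟩ := exists_quadData (a : F) has
  have h := D.inc_sq has a rfl ha hu
  rw [mem_sqOf_USub (D.inc_mem hu)] at h
  obtain ⟨P, hP, hPu⟩ := exists_nonSq (inc F E u) (by tauto) (upS E S)
  rw [mem_upS] at hP
  have huw : u ∉ Sq ((dn F P).valuation F) := fun h => hPu (Sq_up P h)
  refine ⟨dn F P, hP, ?_, huw⟩
  by_contra haw
  have hm := Sq_up (E := E) P (Sq_mul_of_not (h2 _ hP) (mem_USub.1 hu _ hP) (mem_USub.1 ha _ hP) huw haw)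
  have hA : inc F E a ∈ Sq (P.valuation E) := by
    have h0 := D.δ_ne_zero has
    have : inc F E a = (Units.mk0 D.δ h0) ^ 2 := by
      ext; rw [inc_val]; simp [D.hsq]
    rw [this]
    exact sq_mem_Sq _ _
  rw [map_mul] at hm
  exact hPu ((Subgroup.mul_mem_cancel_right _ hA).1 hm)

end
end TNQ

open scoped WithZero
set_option linter.all false

namespace TNQ
section
lemma relIndex_le_of_inj {G ι : Type*} [Group G] [Finite ι] (H T : Subgroup G) (f : G → ι)
    (h : ∀ x ∈ T, ∀ y ∈ T, f x = f y → x⁻¹ * y ∈ H) : H.relIndex T ≤ Nat.card ι ∧ H.relIndex T ≠ 0 := by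
  let g : (T ⧸ H.subgroupOf T) → ι := fun q => f (q.out : T)
  have hg : Function.Injective g := by
    intro p q hpq
    have := h _ p.out.2 _ q.out.2 hpq
    rw [← QuotientGroup.out_eq' p, ← QuotientGroup.out_eq' q]
    rw [QuotientGroup.eq, Subgroup.mem_subgroupOf]
    simpa using this
  haveI := Finite.of_injective g hg
  refine ⟨Nat.card_le_card_of_injective g hg, ?_⟩
  rw [Subgroup.relIndex, Subgroup.index]
  exact Nat.card_ne_zero.2 ⟨⟨QuotientGroup.mk 1⟩, this⟩

lemma index_le_of_inj {G ι : Type*} [Group G] [Finite ι] (H : Subgroup G) (f : G → ι)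
    (h : ∀ x y, f x = f y → x⁻¹ * y ∈ H) : H.index ≤ Nat.card ι ∧ H.index ≠ 0 := by
  have := relIndex_le_of_inj H ⊤ f (fun x _ y _ => h x y)
  rwa [Subgroup.relIndex_top_right] at this

lemma index_sq_sup {A : Type*} [CommGroup A] (U : Subgroup A) (hU : U.index ≠ 0) :
    ((powMonoidHom 2 : A →* A).range ⊔ U).index = U.relIndex (U.comap (powMonoidHom 2)) := by
  set f : A →* A := powMonoidHom 2
  have hle : U ≤ U.comap f := fun x hx => by
    rw [Subgroup.mem_comap]; exact pow_mem hx 2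
  have h1 := Subgroup.relIndex_mul_index hle
  have h2 := Subgroup.relIndex_mul_index (le_sup_right : U ≤ f.range ⊔ U)
  rw [Subgroup.relIndex_sup_right, ← Subgroup.index_comap] at h2
  have h3 : (U.comap f).index ≠ 0 := by
    intro h; rw [h] at h1; simp at h1; exact hU h1.symm
  have h4 : (U.comap f).index * (f.range ⊔ U).index = (U.comap f).index * U.relIndex (U.comap f) := by
    rw [h2, mul_comm, h1]
  exact Nat.eq_of_mul_eq_mul_left (Nat.pos_of_ne_zero h3) h4

universe u
variable {F : Type u} [Field F] [NumberField F] (w : HeightOneSpectrum (𝓞 F))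

lemma exists_repn (n : ℕ) {z : F} (hz : w.valuation F z ≤ 1) :
    ∃ r : 𝓞 F, w.valuation F (r - z) < WithZero.exp (-(n:ℤ)) := by
  obtain ⟨r, hr⟩ := w.exists_valuation_sub_lt_of_integer hz (Units.mk0 (WithZero.exp (-(n:ℤ))) WithZero.exp_ne_zero)
  exact ⟨r, hr⟩

open Classical in
noncomputable def repn (n : ℕ) (z : F) : 𝓞 F ⧸ (w.asIdeal ^ n) :=
  if h : w.valuation F z ≤ 1 then Ideal.Quotient.mk _ (exists_repn w n h).choose else 0

lemma repn_inj (n : ℕ) {z z' : F} (hz : w.valuation F z ≤ 1) (hz' : w.valuation F z' ≤ 1) (h : repn w n z = repn w n z') :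
    w.valuation F (z - z') ≤ WithZero.exp (-(n:ℤ)) := by
  rw [repn, repn, dif_pos hz, dif_pos hz', Ideal.Quotient.eq, ← w.intValuation_le_pow_iff_mem,
    ← HeightOneSpectrum.valuation_of_algebraMap (K := F)] at h
  have h1 := (exists_repn w n hz).choose_spec
  have h2 := (exists_repn w n hz').choose_spec
  set r := (exists_repn w n hz).choose
  set r' := (exists_repn w n hz').choose
  change w.valuation F (algebraMap (𝓞 F) F (r - r')) ≤ _ at h
  rw [map_sub] at h
  have : z - z' = (algebraMap (𝓞 F) F r - algebraMap (𝓞 F) F r') - (r - z) + (r' - z') := by ring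
  rw [this]
  exact (Valuation.map_add _ _ _).trans (max_le ((Valuation.map_sub _ _ _).trans (max_le h h1.le)) h2.le)

lemma card_repn (n : ℕ) : Nat.card (𝓞 F ⧸ (w.asIdeal ^ n)) = Ideal.absNorm w.asIdeal ^ n := by
  rw [← map_pow, Ideal.absNorm_apply, Submodule.cardQuot_apply]

instance fin_repn (n : ℕ) : Finite (𝓞 F ⧸ (w.asIdeal ^ n)) :=
  Ideal.finiteQuotientOfFreeOfNeBot _ (pow_ne_zero _ w.ne_bot)

/-- unit group at w -/
def VV : Subgroup Fˣ where
  carrier := {x | w.valuation F (x : F) = 1}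
  one_mem' := by simp
  mul_mem' := by
    intro x y hx hy
    simp only [Set.mem_ofPred_eq, Units.val_mul, map_mul] at *
    rw [hx, hy, one_mul]
  inv_mem' := by
    intro x hx
    simp only [Set.mem_ofPred_eq] at *
    rw [Units.val_inv_eq_inv_val, map_inv₀, hx, inv_one]

lemma mem_VV {x : Fˣ} : x ∈ VV w ↔ w.valuation F (x : F) = 1 := Iff.rfl

lemma index_VV_sup : (VV w ⊔ Sq (w.valuation F)).index ≤ 2 ∧ (VV w ⊔ Sq (w.valuation F)).index ≠ 0 := by
  have := index_le_of_inj (VV w ⊔ Sq (w.valuation F)) (fun x => decide (lval w x % 2 = 0)) ?_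
  · simpa using this
  intro x y hxy
  obtain ⟨c, hc⟩ := w.valuation_exists_uniformizer F
  have hc0 : c ≠ 0 := by rintro rfl; rw [map_zero] at hc; exact WithZero.exp_ne_zero hc.symm
  have hlv : lval w (x⁻¹ * y) = lval w y - lval w x := by
    have := lval_mul w x (x⁻¹ * y)
    rw [mul_inv_cancel_left] at this; omega
  have heven : ∃ k, lval w (x⁻¹ * y) = 2 * k := by
    simp only [decide_eq_decide] at hxy
    exact ⟨lval w (x⁻¹ * y) / 2, by omega⟩
  obtain ⟨k, hk⟩ := heven
  set C := Units.mk0 c hc0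
  have : x⁻¹ * y = (x⁻¹ * y * (C ^ k) ^ 2) * ((C ^ k)⁻¹) ^ 2 := by
    rw [mul_assoc, ← mul_pow]; simp
  rw [this]
  refine Subgroup.mul_mem_sup ?_ (sq_mem_Sq _ _)
  rw [mem_VV, Units.val_mul, map_mul, ← exp_lval, hk]
  simp only [C, Units.val_pow_eq_pow_val, Units.val_zpow_eq_zpow_val, Units.val_mk0, map_pow, map_zpow₀, hc]
  rw [← WithZero.exp_zsmul, ← WithZero.exp_nsmul, ← WithZero.exp_add, ← WithZero.exp_zero]
  congr 1; simp

lemma index_Sq {e : ℕ} (he : w.valuation F 2 = WithZero.exp (-(e:ℤ))) :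
    (Sq (w.valuation F)).index ≤ 4 * Ideal.absNorm w.asIdeal ^ e ∧ (Sq (w.valuation F)).index ≠ 0 := by
  set v := w.valuation F with hv
  have h4 : v 4 = WithZero.exp (-(2*e:ℤ)) := by
    rw [val_four, he, ← WithZero.exp_add]; congr 1; ring
  have hfin : (U1 v).relIndex (VV w) ≠ 0 := by
    refine (relIndex_le_of_inj (U1 v) (VV w) (fun x => repn w (2*e+1) (x : F)) ?_).2
    intro x hx y hy hxy
    rw [mem_VV] at hx hy
    have h1 := repn_inj w _ hx.le hy.le hxy
    rw [mem_U1]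
    have : ((x⁻¹ * y : Fˣ) : F) - 1 = -((x - y) * (x : F)⁻¹) := by
      have := x.ne_zero
      push_cast; field_simp; ring
    rw [this, Valuation.map_neg, map_mul, map_inv₀, hx, inv_one, mul_one, h4]
    refine h1.trans_lt ?_
    rw [WithZero.exp_lt_exp]; push_cast; omega
  have hle : (Sq v).relIndex (VV w) ≤ 2 * Ideal.absNorm w.asIdeal ^ e ∧ (Sq v).relIndex (VV w) ≠ 0 := by
    have hI := index_sq_sup ((U1 v).subgroupOf (VV w)) hfin
    set B := (powMonoidHom 2 : (VV w) →* (VV w)).range ⊔ (U1 v).subgroupOf (VV w) with hB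
    have hBS : B ≤ (Sq v).subgroupOf (VV w) := by
      rw [hB, sup_le_iff]
      constructor
      · rintro _ ⟨y, rfl⟩
        rw [Subgroup.mem_subgroupOf]
        exact sq_mem_Sq v (y : Fˣ)
      · intro x hx
        rw [Subgroup.mem_subgroupOf] at *
        exact le_sup_right (a := sqSub F) hx
    have hb : B.index ≤ 2 * Ideal.absNorm w.asIdeal ^ e ∧ B.index ≠ 0 := by
      rw [hI]
      obtain ⟨c, hc⟩ := w.valuation_exists_uniformizer F
      have hc0 : c ≠ 0 := by rintro rfl; rw [map_zero] at hc; exact WithZero.exp_ne_zero hc.symm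
      classical
      have key := relIndex_le_of_inj ((U1 v).subgroupOf (VV w)) (((U1 v).subgroupOf (VV w)).comap (powMonoidHom 2))
        (fun x => (decide (v (((x : Fˣ) : F) - 1) < v 2), 
          repn w e (((if v (((x : Fˣ) : F) - 1) < v 2 then 1 else -1) * ((x : Fˣ) : F) - 1) / (2 * c)))) ?_
      · rw [Nat.card_prod, card_repn] at key
        simpa using key
      · have hsmall : ∀ x : VV w, x ∈ ((U1 v).subgroupOf (VV w)).comap (powMonoidHom 2) →
            v (((if v (((x : Fˣ) : F) - 1) < v 2 then 1 else -1) * ((x : Fˣ) : F) - 1) / (2 * c)) ≤ 1 := by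
          intro x hx
          rw [Subgroup.mem_comap, Subgroup.mem_subgroupOf, mem_U1] at hx
          have hx' : v (((x : Fˣ) : F) - 1) * v (((x : Fˣ) : F) + 1) < v 2 * v 2 := by
            rw [← map_mul, ← val_four]
            convert hx using 2
            simp; ring
          have : v ((if v (((x : Fˣ) : F) - 1) < v 2 then 1 else -1) * ((x : Fˣ) : F) - 1) < v 2 := by
            split_ifs with h
            · rwa [one_mul]
            · rw [show (-1 : F) * ((x : Fˣ) : F) - 1 = -(((x : Fˣ) : F) + 1) by ring, Valuation.map_neg]
              by_contra h'
              exact absurd hx' (not_lt.2 (mul_le_mul' (not_lt.1 h) (not_lt.1 h')))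
          rw [map_div₀, map_mul]
          generalize v ((if v (((x : Fˣ) : F) - 1) < v 2 then 1 else -1) * ((x : Fˣ) : F) - 1) = g at this
          rcases eq_or_ne g 0 with rfl | hg
          · simp
          rw [he, hv, hc]
          rw [he] at this
          rw [← WithZero.exp_log hg] at this ⊢
          rw [WithZero.exp_lt_exp] at this
          rw [← WithZero.exp_add, ← WithZero.exp_sub, ← WithZero.exp_zero, WithZero.exp_le_exp]
          omega
        intro x hx y hy hxy
        simp only [Prod.mk.injEq, decide_eq_decide] at hxy
        have h1 := repn_inj w _ (hsmall x hx) (hsmall y hy) hxy.2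
        rw [Subgroup.mem_subgroupOf, mem_U1]
        have : (((x⁻¹ * y : VV w) : Fˣ) : F) - 1 = -((((x:Fˣ):F) - ((y:Fˣ):F)) * ((x:Fˣ) : F)⁻¹) := by
          have := (x:Fˣ).ne_zero
          push_cast; field_simp; ring
        rw [this, Valuation.map_neg, map_mul, map_inv₀, show v ((x:Fˣ):F) = 1 from x.2, inv_one, mul_one, h4]
        have e1 : (if v (((y : Fˣ) : F) - 1) < v 2 then (1:F) else -1) = (if v (((x : Fˣ) : F) - 1) < v 2 then 1 else -1) := by
          simp only [hxy.1]
        rw [e1] at h1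
        generalize he2 : (if v (((x : Fˣ) : F) - 1) < v 2 then (1:F) else -1) = ε at h1
        have hε : v ε = 1 := by rw [← he2]; split_ifs <;> simp
        have : (ε * ((x:Fˣ):F) - 1) / (2 * c) - (ε * ((y:Fˣ):F) - 1) / (2 * c) = ε * (((x:Fˣ):F) - ((y:Fˣ):F)) / (2 * c) := by ring
        rw [this, map_div₀, map_mul, map_mul, hε, one_mul, ← hv, he] at h1
        rw [hv, hc] at h1
        rw [hv]
        generalize w.valuation F (((x:Fˣ):F) - ((y:Fˣ):F)) = g at h1
        rcases eq_or_ne g 0 with rfl | hg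
        · simp
        rw [← WithZero.exp_log hg] at h1 ⊢
        rw [← WithZero.exp_add, ← WithZero.exp_sub, WithZero.exp_le_exp] at h1
        rw [WithZero.exp_lt_exp]
        omega
    have hd := Subgroup.index_dvd_of_le hBS
    exact ⟨(Nat.le_of_dvd (Nat.pos_of_ne_zero hb.2) hd).trans hb.1, fun h => hb.2 (by
      rw [Subgroup.relIndex] at h; rw [h] at hd; exact Nat.eq_zero_of_zero_dvd hd)⟩
  have h1 := Subgroup.relIndex_mul_index (le_sup_right : Sq v ≤ VV w ⊔ Sq v)
  rw [Subgroup.relIndex_sup_right] at h1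
  have h2 := index_VV_sup w
  rw [← h1]
  refine ⟨?_, mul_ne_zero hle.2 h2.2⟩
  calc _ ≤ (2 * Ideal.absNorm w.asIdeal ^ e) * 2 := Nat.mul_le_mul hle.1 h2.1
    _ = _ := by ring

/-- the subgroup of totally positive elements -/
def Pos (F : Type u) [Field F] : Subgroup Fˣ where
  carrier := {x | ∀ τ : F →+* ℝ, 0 < τ x}
  one_mem' := by simp
  mul_mem' := by
    intro x y hx hy τ
    rw [Units.val_mul, map_mul]; exact mul_pos (hx τ) (hy τ)
  inv_mem' := by
    intro x hx τ
    rw [Units.val_inv_eq_inv_val, map_inv₀]; exact inv_pos.2 (hx τ)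

lemma mem_Pos {x : Fˣ} : x ∈ Pos F ↔ ∀ τ : F →+* ℝ, 0 < τ x := Iff.rfl

lemma card_real : Finite (F →+* ℝ) ∧ Nat.card (F →+* ℝ) ≤ InfinitePlace.nrRealPlaces F := by
  classical
  let g : (F →+* ℝ) → { φ : F →+* ℂ // ComplexEmbedding.IsReal φ } := fun τ =>
    ⟨Complex.ofRealHom.comp τ, by
      ext x; simp [ComplexEmbedding.conjugate]⟩
  have hg : Function.Injective g := by
    intro τ τ' h
    ext x
    have := congrArg (fun φ => φ.1 x) h
    simpa [g] using this
  refine ⟨Finite.of_injective g hg, ?_⟩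
  rw [← InfinitePlace.card_real_embeddings, ← Nat.card_eq_fintype_card]
  exact Nat.card_le_card_of_injective g hg

lemma index_Pos : (Pos F).index ≤ 2 ^ InfinitePlace.nrRealPlaces F ∧ (Pos F).index ≠ 0 := by
  classical
  obtain ⟨hf, hc⟩ := card_real (F := F)
  have := index_le_of_inj (Pos F) (fun x => (fun τ : F →+* ℝ => decide (0 < τ x))) ?_
  · refine ⟨this.1.trans ?_, this.2⟩
    rw [Nat.card_fun]
    simpa using Nat.pow_le_pow_right (by norm_num : 0 < 2) hc
  · intro x y hxy τ
    have h := congrFun hxy τ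
    simp only [decide_eq_decide] at h
    rw [Units.val_mul, Units.val_inv_eq_inv_val, map_mul, map_inv₀]
    have hx : τ x ≠ 0 := by simp
    have hy : τ y ≠ 0 := by simp
    rcases lt_or_gt_of_ne hx with h1 | h1
    · have h2 : τ y < 0 := lt_of_le_of_ne (not_lt.1 (fun h' => absurd (h.2 h') (not_lt.2 h1.le))) hy
      exact mul_pos_of_neg_of_neg (inv_lt_zero.2 h1) h2
    · exact mul_pos (inv_pos.2 h1) (h.1 h1)

lemma exists_e : ∃ e : ℕ, w.valuation F 2 = WithZero.exp (-(e:ℤ)) := by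
  have h0 : w.valuation F 2 ≠ 0 := by simp
  have h1 := val_two_le (w.valuation F)
  rw [← WithZero.exp_log h0, ← WithZero.exp_zero, WithZero.exp_le_exp] at h1
  refine ⟨(- WithZero.log (w.valuation F 2)).toNat, ?_⟩
  conv_lhs => rw [← WithZero.exp_log h0]
  congr 1; omega

/-- locally square at all of `S` and totally positive -/
noncomputable def QQ (S : Finset (HeightOneSpectrum (𝓞 F))) : Subgroup Fˣ :=
  (⨅ v : S, Sq (v.1.valuation F)) ⊓ Pos F

lemma mem_QQ {S : Finset (HeightOneSpectrum (𝓞 F))} {x : Fˣ} :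
    x ∈ QQ S ↔ (∀ v ∈ S, x ∈ Sq (v.valuation F)) ∧ x ∈ Pos F := by
  simp [QQ, Subgroup.mem_inf, Subgroup.mem_iInf]

theorem index_QQ (S : Finset (HeightOneSpectrum (𝓞 F))) :
    (QQ S).index ≤ 4 ^ (Fintype.card (InfinitePlace F) + S.card) ∧ (QQ S).index ≠ 0 := by
  classical
  choose e he using fun w : HeightOneSpectrum (𝓞 F) => exists_e w
  have h1 : (⨅ v : S, Sq (v.1.valuation F)).index ≠ 0 := Subgroup.index_iInf_ne_zero fun v => (index_Sq v.1 (he v)).2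
  refine ⟨?_, Subgroup.index_inf_ne_zero h1 index_Pos.2⟩
  have hN : ∏ v ∈ S, Ideal.absNorm v.asIdeal ^ e v ≤ 2 ^ Module.finrank ℚ F := by
    have hd : ∏ v ∈ S, v.asIdeal ^ e v ∣ Ideal.span {(2 : 𝓞 F)} := by
      apply Finset.prod_dvd_of_coprime
      · intro v hv v' hv' hne
        apply IsCoprime.pow
        rw [Ideal.isCoprime_iff_sup_eq]
        haveI := v.isMaximal
        haveI := v'.isMaximal
        exact Ideal.IsMaximal.coprime_of_ne v.isMaximal v'.isMaximal (fun h => hne (HeightOneSpectrum.ext h))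
      · intro v hv
        rw [Ideal.dvd_span_singleton, ← v.intValuation_le_pow_iff_mem, ← HeightOneSpectrum.valuation_of_algebraMap (K := F)]
        have h2 : ((2 : 𝓞 F) : F) = 2 := by norm_cast
        exact le_of_eq ((congrArg (v.valuation F) h2).trans (he v))
    have h2 := map_dvd (Ideal.absNorm (S := 𝓞 F)) hd
    rw [map_prod] at h2
    simp only [map_pow] at h2
    have h3 : Ideal.absNorm (Ideal.span {(2 : 𝓞 F)}) = 2 ^ Module.finrank ℚ F := by
      rw [Ideal.absNorm_span_singleton]
      have : (2 : 𝓞 F) = algebraMap ℤ (𝓞 F) 2 := by simp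
      rw [this, Algebra.norm_algebraMap, RingOfIntegers.rank]
      simp [Int.natAbs_pow]
    rw [h3] at h2
    exact Nat.le_of_dvd (by positivity) h2
  calc (QQ S).index ≤ (⨅ v : S, Sq (v.1.valuation F)).index * (Pos F).index := Subgroup.index_inf_le
    _ ≤ (∏ v : S, (Sq (v.1.valuation F)).index) * 2 ^ InfinitePlace.nrRealPlaces F :=
      Nat.mul_le_mul (Subgroup.index_iInf_le _) index_Pos.1
    _ ≤ (∏ v : S, (4 * Ideal.absNorm v.1.asIdeal ^ e v)) * 2 ^ InfinitePlace.nrRealPlaces F :=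
      Nat.mul_le_mul_right _ (Finset.prod_le_prod' fun v _ => (index_Sq v.1 (he v)).1)
    _ = 4 ^ S.card * (∏ v ∈ S, Ideal.absNorm v.asIdeal ^ e v) * 2 ^ InfinitePlace.nrRealPlaces F := by
      rw [Finset.prod_coe_sort S (fun v => 4 * Ideal.absNorm v.asIdeal ^ e v), Finset.prod_mul_distrib, Finset.prod_const]
    _ ≤ 4 ^ S.card * 2 ^ Module.finrank ℚ F * 2 ^ InfinitePlace.nrRealPlaces F := by gcongr
    _ = _ := by
      rw [InfinitePlace.card_eq_nrRealPlaces_add_nrComplexPlaces, ← InfinitePlace.card_add_two_mul_card_eq_rank,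
        show 4 = 2 ^ 2 by norm_num, ← pow_mul, ← pow_mul, ← pow_add, ← pow_add]
      congr 1; ring
end
end TNQ

open scoped WithZero
set_option linter.all false

namespace TNQ
section
universe u
variable {F : Type u} [Field F] [NumberField F] {w : HeightOneSpectrum (𝓞 F)}

lemma lval_congr {x y : Fˣ} (h : w.valuation F (x : F) = w.valuation F (y : F)) : lval w x = lval w y := by
  rw [lval, lval, h]

lemma lval_inv (x : Fˣ) : lval w x⁻¹ = - lval w x := by
  have := lval_mul w x x⁻¹
  rw [mul_inv_cancel, lval_one] at this; omega

lemma lval_sq (x : Fˣ) : lval w (x ^ 2) = 2 * lval w x := by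
  rw [sq, lval_mul]; ring

lemma val_eq_iff_lval {x y : Fˣ} : w.valuation F (x : F) = w.valuation F (y : F) ↔ lval w x = lval w y := by
  rw [← exp_lval, ← exp_lval, WithZero.exp_inj]

lemma inert_even (h2 : w.valuation F 2 = 1) {c x : Fˣ} (hc : lval w c % 2 = 0) (hcs : c ∉ Sq (w.valuation F)) {y z : F}
    (hx : (x : F) = y ^ 2 - c * z ^ 2) : lval w x % 2 = 0 := by
  rcases eq_or_ne z 0 with rfl | hz
  · have hy : y ≠ 0 := by rintro rfl; simp at hx
    have : x = (Units.mk0 y hy) ^ 2 := by ext; simp [hx]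
    rw [this, lval_sq]; omega
  rcases eq_or_ne y 0 with rfl | hy
  · have : w.valuation F (x : F) = w.valuation F ((c * (Units.mk0 z hz) ^ 2 : Fˣ) : F) := by
      rw [hx]; simp
    rw [lval_congr this, lval_mul, lval_sq]; omega
  set Y := Units.mk0 y hy
  set Z := Units.mk0 z hz
  have hYv : ((Y ^ 2 : Fˣ) : F) = y ^ 2 := by simp [Y]
  have hZv : ((c * Z ^ 2 : Fˣ) : F) = c * z ^ 2 := by simp [Z]
  rw [← hYv, ← hZv] at hx
  rcases lt_trichotomy (w.valuation F ((Y ^ 2 : Fˣ) : F)) (w.valuation F ((c * Z ^ 2 : Fˣ) : F)) with h | h | h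
  · have := Valuation.map_sub_eq_of_lt_right _ h
    rw [← hx] at this
    rw [lval_congr this, lval_mul, lval_sq]; omega
  · set c' : Fˣ := c * (Z * Y⁻¹) ^ 2 with hc'
    have hl : lval w c' = 0 := by
      have := val_eq_iff_lval.1 h
      rw [lval_mul, lval_sq, lval_sq] at this
      rw [hc', lval_mul, lval_sq, lval_mul, lval_inv]; omega
    have hv1 : w.valuation F (c' : F) = 1 := (lval_eq_zero w c').1 hl
    have hcs' : c' ∉ Sq (w.valuation F) := by
      rw [hc', Subgroup.mul_mem_cancel_right _ (sq_mem_Sq _ _)]; exact hcs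
    have hX : (x * (Y⁻¹) ^ 2 : Fˣ) = (1 : F) - c' := by
      rw [hc']; push_cast; rw [hx]; push_cast; 
      have := Y.ne_zero
      field_simp
    have : w.valuation F ((x * (Y⁻¹) ^ 2 : Fˣ) : F) = 1 := by
      rw [hX]
      apply le_antisymm
      · exact (Valuation.map_sub _ _ _).trans (by simp [hv1])
      · by_contra hlt
        apply hcs'
        rw [mem_Sq]
        refine ⟨1, one_ne_zero, ?_⟩
        rw [Valuation.map_sub_swap, one_pow, mul_one, val_four, h2, one_mul]
        exact not_le.1 hlt
    have := (lval_eq_zero w _).2 this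
    rw [lval_mul, lval_sq, lval_inv] at this; omega
  · have := Valuation.map_sub_eq_of_lt_left _ h
    rw [← hx] at this
    rw [lval_congr this, lval_sq]; omega

lemma ram_sq (h2 : w.valuation F 2 = 1) {c x : Fˣ} (hc : lval w c % 2 ≠ 0) {y z : F}
    (hx : (x : F) = y ^ 2 - c * z ^ 2) (hx1 : w.valuation F (x : F) = 1) : x ∈ Sq (w.valuation F) := by
  have hl := (lval_eq_zero w x).2 hx1
  rcases eq_or_ne z 0 with rfl | hz
  · have hy : y ≠ 0 := by rintro rfl; simp at hx
    have : x = (Units.mk0 y hy) ^ 2 := by ext; simp [hx]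
    rw [this]; exact sq_mem_Sq _ _
  rcases eq_or_ne y 0 with rfl | hy
  · have : w.valuation F (x : F) = w.valuation F ((c * (Units.mk0 z hz) ^ 2 : Fˣ) : F) := by
      rw [hx]; simp
    rw [lval_congr this, lval_mul, lval_sq] at hl; omega
  set Y := Units.mk0 y hy
  set Z := Units.mk0 z hz
  have hYv : ((Y ^ 2 : Fˣ) : F) = y ^ 2 := by simp [Y]
  have hZv : ((c * Z ^ 2 : Fˣ) : F) = c * z ^ 2 := by simp [Z]
  rw [← hYv, ← hZv] at hx
  rcases lt_trichotomy (w.valuation F ((Y ^ 2 : Fˣ) : F)) (w.valuation F ((c * Z ^ 2 : Fˣ) : F)) with h | h | h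
  · have := Valuation.map_sub_eq_of_lt_right _ h
    rw [← hx] at this
    rw [lval_congr this, lval_mul, lval_sq] at hl; omega
  · have := val_eq_iff_lval.1 h
    rw [lval_mul, lval_sq, lval_sq] at this; omega
  · refine Sq_of_close _ (sq_mem_Sq _ Y) ?_
    rw [map_mul, val_four, h2, one_mul, one_mul, Valuation.map_sub_swap, hx, sub_sub_cancel]
    exact h

lemma exists_not_NAt (h2 : w.valuation F 2 = 1) {c : Fˣ} (hcs : c ∉ Sq (w.valuation F)) :
    ∃ x : Fˣ, x ∉ NAt (w.valuation F) (c : F) := by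
  have h4 : w.valuation F 4 = 1 := by rw [val_four, h2, one_mul]
  by_cases hc : lval w c % 2 = 0
  · obtain ⟨π, hπ⟩ := w.valuation_exists_uniformizer F
    have hπ0 : π ≠ 0 := by rintro rfl; rw [map_zero] at hπ; exact WithZero.exp_ne_zero hπ.symm
    refine ⟨Units.mk0 π hπ0, fun h => ?_⟩
    rw [mem_NAt] at h
    obtain ⟨y, z, h0, h1⟩ := h
    rw [map_mul, h4, one_mul] at h1
    have h3 := Valuation.map_eq_of_sub_lt _ h1
    have h5 := inert_even h2 hc hcs (x := Units.mk0 _ h0) rfl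
    have h6 : lval w (Units.mk0 _ h0) = -1 := by
      rw [lval, Units.val_mk0, ← h3, Units.val_mk0, hπ, WithZero.log_exp]
    omega
  · have hchar : ringChar (kk w) ≠ 2 := by
      intro h
      have h20 : (2 : kk w) = 0 := by
        have := ringChar.Nat.cast_ringChar (R := kk w)
        rw [h] at this; exact_mod_cast this
      rw [← res_two, res_eq_zero h2.le, h2] at h20
      exact lt_irrefl _ h20
    obtain ⟨α, hα⟩ := FiniteField.exists_nonsquare hchar
    obtain ⟨x, hx, rfl⟩ := res_surj w α
    have hx1 : w.valuation F x = 1 := by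
      rw [← res_ne_zero hx]; intro h; rw [h] at hα; exact hα ⟨0, by simp⟩
    have hx0 : x ≠ 0 := by rintro rfl; simp at hx1
    refine ⟨Units.mk0 x hx0, fun h => ?_⟩
    rw [mem_NAt] at h
    obtain ⟨y, z, h0, h1⟩ := h
    have h1' := h1
    rw [map_mul, h4, one_mul] at h1
    have h3 := Valuation.map_eq_of_sub_lt _ h1
    have h5 := ram_sq h2 hc (x := Units.mk0 _ h0) rfl (by rw [Units.val_mk0, ← h3]; exact hx1)
    have h6 := Sq_of_close _ h5 (x := Units.mk0 x hx0) h1'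
    rw [Sq_iff_res h2 hx1] at h6
    exact hα h6

lemma le_relIndex_of_inj {G ι : Type*} [Group G] [Finite ι] (H T : Subgroup G) (f : ι → G) (hf : ∀ i, f i ∈ T)
    (h : ∀ i j, (f i)⁻¹ * f j ∈ H → i = j) (h0 : H.relIndex T ≠ 0) : Nat.card ι ≤ H.relIndex T := by
  let g : ι → (T ⧸ H.subgroupOf T) := fun i => QuotientGroup.mk ⟨f i, hf i⟩
  have hg : Function.Injective g := by
    intro i j hij
    simp only [g] at hij
    rw [QuotientGroup.eq, Subgroup.mem_subgroupOf] at hij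
    exact h i j (by simpa using hij)
  haveI : Finite (T ⧸ H.subgroupOf T) := by
    rw [Subgroup.relIndex, Subgroup.index] at h0
    exact (Nat.card_ne_zero.1 h0).2
  exact Nat.card_le_card_of_injective g hg

/-- (T) -/
theorem exists_T {S : Finset (HeightOneSpectrum (𝓞 F))} (h2 : ∀ v ∉ S, v.valuation F 2 = 1) {a : Fˣ}
    (ha : a ∈ USub S) (has : ¬ IsSquare (a : F)) (k : ℕ) (hk : k + 1 ≤ Fintype.card (InfinitePlace F) + S.card) :
    ∃ T : Finset (HeightOneSpectrum (𝓞 F)), T.card = k ∧ (∀ w ∈ T, w ∉ S) ∧ (∀ w ∈ T, a ∈ Sq (w.valuation F)) ∧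
      ∀ A : Finset (HeightOneSpectrum (𝓞 F)), ∃ u ∈ USub S, ∀ w ∈ T, (u ∈ Sq (w.valuation F) ↔ w ∉ A) := by
  classical
  induction k with
  | zero => exact ⟨∅, by simp, by simp, by simp, fun A => ⟨1, one_mem _, by simp⟩⟩
  | succ k ih =>
    obtain ⟨T, hTc, hTS, hTa, hTu⟩ := ih (by omega)
    have hmul : ∀ {w}, w ∉ S → ∀ {u u' : Fˣ}, u ∈ USub S → u' ∈ USub S → u ∉ Sq (w.valuation F) → u' ∉ Sq (w.valuation F) →
      u * u' ∈ Sq (w.valuation F) := fun {w} hw {u u'} hu hu' h h' =>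
        Sq_mul_of_not (h2 _ hw) (hu _ hw) (hu' _ hw) h h'
    have hex : ∃ u ∈ USub S, (∀ w ∈ T, u ∈ Sq (w.valuation F)) ∧ u ∉ sqOf (USub S) ∧ u * a ∉ sqOf (USub S) := by
      by_contra hcon
      push Not at hcon
      set KT : Subgroup Fˣ := (⨅ w : T, Sq (w.1.valuation F)) ⊓ USub S with hKT
      have hKTm : ∀ u, u ∈ KT ↔ (∀ w ∈ T, u ∈ Sq (w.valuation F)) ∧ u ∈ USub S := by
        intro u; simp [hKT, Subgroup.mem_inf, Subgroup.mem_iInf]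
      have i1 := relIndex_le_of_inj KT (USub S) (fun u => (fun w : T => decide (u ∈ Sq (w.1.valuation F)))) ?_
      · have i2 := relIndex_le_of_inj (sqOf (USub S)) KT (fun u => decide (u ∈ sqOf (USub S))) ?_
        · have i3 := Subgroup.relIndex_mul_relIndex (sqOf (USub S)) KT (USub S) (by
            intro x hx
            rw [hKTm]
            refine ⟨fun w _ => ?_, sqOf_le _ hx⟩
            obtain ⟨y, hy, rfl⟩ := mem_sqOf.1 hx
            exact sq_mem_Sq _ _) inf_le_right
          rw [relIndex_sqOf_USub] at i3
          have i4 : 2 ^ (Fintype.card (InfinitePlace F) + S.card) ≤ 2 ^ (k + 1) := by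
            rw [← i3, pow_succ, mul_comm]
            refine Nat.mul_le_mul ?_ ?_
            · have := i1.1
              rw [Nat.card_fun] at this
              simpa [hTc] using this
            · simpa using i2.1
          have := (Nat.pow_le_pow_iff_right (by norm_num : 1 < 2)).1 i4
          omega
        · intro x hx y hy hxy
          simp only [decide_eq_decide] at hxy
          rw [hKTm] at hx hy
          by_cases h : x ∈ sqOf (USub S)
          · exact mul_mem (inv_mem h) (hxy.1 h)
          · have h' : y ∉ sqOf (USub S) := fun h' => h (hxy.2 h')
            have e1 := hcon x hx.2 hx.1 h
            have e2 := hcon y hy.2 hy.1 h'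
            have e3 := mul_mem (inv_mem e1) e2
            rwa [show (x * a)⁻¹ * (y * a) = x⁻¹ * y by rw [mul_inv]; rw [mul_mul_mul_comm, inv_mul_cancel, mul_one]] at e3
      · intro x hx y hy hxy
        rw [hKTm]
        refine ⟨fun w hw => ?_, mul_mem (inv_mem hx) hy⟩
        have hh := congrFun hxy ⟨w, hw⟩
        simp only [decide_eq_decide] at hh
        by_cases h : x ∈ Sq (w.valuation F)
        · exact mul_mem (inv_mem h) (hh.1 h)
        · exact hmul (hTS w hw) (inv_mem hx) hy (fun h' => h (by simpa using inv_mem h')) (fun h' => h (hh.2 h'))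
    obtain ⟨u, huS, huT, hu1, hu2⟩ := hex
    obtain ⟨w, hwS, hwa, hwu⟩ := exists_sep h2 ha huS has hu1 hu2
    have hwT : w ∉ T := fun h => hwu (huT w h)
    refine ⟨insert w T, by rw [Finset.card_insert_of_notMem hwT, hTc], ?_, ?_, ?_⟩
    · intro w' hw'
      rcases Finset.mem_insert.1 hw' with rfl | h
      exacts [hwS, hTS _ h]
    · intro w' hw'
      rcases Finset.mem_insert.1 hw' with rfl | h
      exacts [hwa, hTa _ h]
    · intro A
      obtain ⟨y, hyS, hy⟩ := hTu A
      by_cases hc : y ∈ Sq (w.valuation F) ↔ w ∉ A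
      · refine ⟨y, hyS, fun w' hw' => ?_⟩
        rcases Finset.mem_insert.1 hw' with rfl | h
        exacts [hc, hy _ h]
      · refine ⟨y * u, mul_mem hyS huS, fun w' hw' => ?_⟩
        rcases Finset.mem_insert.1 hw' with rfl | h
        · by_cases hyw : y ∈ Sq (w'.valuation F)
          · rw [Subgroup.mul_mem_cancel_left _ hyw]; tauto
          · have := hmul hwS hyS huS hyw hwu
            tauto
        · rw [Subgroup.mul_mem_cancel_right _ (huT _ h)]; exact hy _ h

/-- (5) -/
theorem sq_of_QQ {S T : Finset (HeightOneSpectrum (𝓞 F))} (h2 : ∀ v ∉ S, v.valuation F 2 = 1) (hcl : ClTriv S)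
    (hTS : ∀ w ∈ T, w ∉ S)
    (hTu : ∀ A : Finset (HeightOneSpectrum (𝓞 F)), ∃ u ∈ USub S, ∀ w ∈ T, (u ∈ Sq (w.valuation F) ↔ w ∉ A))
    [DecidableEq (HeightOneSpectrum (𝓞 F))]
    {c : Fˣ} (hc : c ∈ USub (S ∪ T)) (hcQ : c ∈ QQ S) : IsSquare (c : F) := by
  classical
  by_contra hns
  rw [mem_QQ] at hcQ
  obtain ⟨E, _, _, _, ⟨D⟩⟩ := exists_quadData (c : F) hns
  obtain ⟨hn1, hn0⟩ := D.norm_index hns c rfl hc (fun v hv => h2 v fun h => hv (Finset.mem_union_left _ h))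
    (hcl.mono Finset.subset_union_left) hcQ.2
  set M := (S ∪ T).filter fun w => c ∉ Sq (w.valuation F) with hM
  have hMT : ∀ w ∈ M, w ∈ T ∧ w ∉ S ∧ c ∉ Sq (w.valuation F) := by
    intro w hw
    rw [hM, Finset.mem_filter, Finset.mem_union] at hw
    rcases hw.1 with h | h
    · exact absurd (hcQ.1 w h) hw.2
    · exact ⟨h, hTS w h, hw.2⟩
  choose u huS huT using hTu
  have hπ : ∀ w, ∃ π : Fˣ, w ∉ S → (w.valuation F (π : F) = WithZero.exp (-1) ∧
    ∀ u ∉ S, u ≠ w → u.valuation F (π : F) = 1) := by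
    intro w
    by_cases h : w ∈ S
    · exact ⟨1, fun h' => absurd h h'⟩
    · obtain ⟨π, h⟩ := hcl w h; exact ⟨π, fun _ => h⟩
  choose π hπ using hπ
  set In := M.filter fun w => lval w c % 2 = 0 with hIn
  let g : Finset M → Fˣ := fun A => u (A.map (Function.Embedding.subtype _)) * ∏ w ∈ (A.map (Function.Embedding.subtype _)) ∩ In, π w
  have hlo : ∀ w ∈ M, ∀ v, v ∉ S → lval v (π w) = if v = w then -1 else 0 := by
    intro w hw v hv
    split_ifs with h
    · subst h; rw [lval, (hπ v hv).1, WithZero.log_exp]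
    · exact (lval_eq_zero _ _).2 ((hπ w (hMT w hw).2.1).2 v hv h)
  have hlg : ∀ A : Finset M, ∀ v ∈ In, lval v (g A) = if v ∈ (A.map (Function.Embedding.subtype _)) then -1 else 0 := by
    intro A v hv
    have hvM : v ∈ M := (Finset.mem_filter.1 hv).1
    simp only [g]
    rw [lval_mul, (lval_eq_zero _ _).2 (huS _ v (hMT v hvM).2.1), lval_prod, zero_add]
    rw [Finset.sum_congr rfl (fun w hw => hlo w (Finset.mem_filter.1 (Finset.mem_inter.1 hw).2).1 v (hMT v hvM).2.1)]
    rw [Finset.sum_ite_eq]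
    by_cases hA : v ∈ (A.map (Function.Embedding.subtype (fun x => x ∈ M)))
    · rw [if_pos (Finset.mem_inter.2 ⟨hA, hv⟩), if_pos hA]
    · rw [if_neg (fun h => hA (Finset.mem_inter.1 h).1), if_neg hA]
  have hle := le_relIndex_of_inj ((USub (upS E (S ∪ T))).map D.nm) (USub (S ∪ T)) g ?_ ?_ hn0
  · rw [Nat.card_eq_fintype_card, Fintype.card_finset, Fintype.card_coe] at hle
    have : 0 < 2 ^ M.card := by positivity
    omega
  · intro A
    refine mul_mem (USub_mono Finset.subset_union_left (huS _)) (prod_mem fun w hw => ?_)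
    have hwM := hMT w (Finset.mem_filter.1 (Finset.mem_inter.1 hw).2).1
    rw [mem_USub]
    intro v hv
    rw [Finset.mem_union, not_or] at hv
    exact (hπ w hwM.2.1).2 v hv.1 (fun h => hv.2 (h ▸ hwM.1))
  · intro A B hAB
    obtain ⟨x, hx, hxe⟩ := Subgroup.mem_map.1 hAB
    obtain ⟨y, z, hyz⟩ := D.nm_eq x
    rw [hxe] at hyz
    have hin : (A.map (Function.Embedding.subtype _)) ∩ In = (B.map (Function.Embedding.subtype _)) ∩ In := by
      ext v
      rw [Finset.mem_inter, Finset.mem_inter]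
      refine and_congr_left fun hv => ?_
      have hvM := hMT v (Finset.mem_filter.1 hv).1
      have := inert_even (h2 v hvM.2.1) (Finset.mem_filter.1 hv).2 hvM.2.2 hyz
      rw [lval_mul, lval_inv, hlg A v hv, hlg B v hv] at this
      split_ifs at this <;> first | omega | tauto
    have hq : (g A)⁻¹ * g B = (u (A.map (Function.Embedding.subtype _)))⁻¹ * u (B.map (Function.Embedding.subtype _)) := by
      simp only [g]
      rw [hin, mul_inv]
      rw [mul_mul_mul_comm, inv_mul_cancel, mul_one]
    rw [hq] at hyz
    ext ⟨v, hv⟩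
    have hvM := hMT v hv
    have hmem : v ∈ A.map (Function.Embedding.subtype _) ↔ v ∈ B.map (Function.Embedding.subtype _) := by
      by_cases hvI : v ∈ In
      · have := congrArg (fun s => v ∈ s) hin
        simpa [hvI] using this
      · have hodd : lval v c % 2 ≠ 0 := fun h => hvI (Finset.mem_filter.2 ⟨hv, h⟩)
        have := ram_sq (h2 v hvM.2.1) hodd hyz (mem_USub.1 (mul_mem (inv_mem (huS _)) (huS _)) v hvM.2.1)
        have h1 := huT (A.map (Function.Embedding.subtype _)) v hvM.1
        have h2 := huT (B.map (Function.Embedding.subtype _)) v hvM.1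
        have h3 : u (A.map (Function.Embedding.subtype _)) ∈ Sq (v.valuation F) ↔ u (B.map (Function.Embedding.subtype _)) ∈ Sq (v.valuation F) := by
          constructor
          · intro h
            have := mul_mem h this
            rwa [mul_inv_cancel_left] at this
          · intro h
            rw [Subgroup.mul_mem_cancel_right _ h] at this
            simpa using inv_mem this
        tauto
    simpa [hv] using hmem
end
end TNQ

open scoped WithZero
set_option linter.all false

namespace TNQ
section
universe u
variable {F : Type u} [Field F] [NumberField F]

lemma close_swap {v : Valuation F ℤᵐ⁰} {x y : F} (h : v (x - y) < v (4 * y)) : v (y - x) < v (4 * x) := by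
  have h1 : v (4 * y) ≤ v y := by
    rw [map_mul]; exact mul_le_of_le_one_left zero_le (val_four_le v)
  have h2 := Valuation.map_eq_of_sub_lt _ (h.trans_le h1)
  rw [Valuation.map_sub_swap, map_mul, h2, ← map_mul]; exact h

lemma weak_approx_unit (S : Finset (HeightOneSpectrum (𝓞 F))) (x : HeightOneSpectrum (𝓞 F) → Fˣ) :
    ∃ g : Fˣ, ∀ v ∈ S, v.valuation F ((g : F) - x v) < v.valuation F (4 * (x v : F)) := by
  rcases S.eq_empty_or_nonempty with rfl | ⟨w, hw⟩
  · exact ⟨1, by simp⟩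
  obtain ⟨g, hg⟩ := weak_approx S (fun v => (x v : F)) (fun v => v.valuation F (4 * (x v : F))) (by
    intro v _; simp)
  have hg0 : g ≠ 0 := by
    rintro rfl
    have := hg w hw
    rw [zero_sub, Valuation.map_neg, map_mul] at this
    exact absurd this (not_lt.2 (mul_le_of_le_one_left zero_le (val_four_le _)))
  exact ⟨Units.mk0 g hg0, hg⟩

open Classical in
lemma index_NAt (M : Finset (HeightOneSpectrum (𝓞 F))) (a : Fˣ) (hM : ∀ v ∈ M, v.valuation F 2 = 1 ∧ a ∉ Sq (v.valuation F))
    (h0 : (⨅ v : M, NAt (v.1.valuation F) (a : F)).index ≠ 0) :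
    2 ^ M.card ≤ (⨅ v : M, NAt (v.1.valuation F) (a : F)).index := by
  have hx : ∀ v, ∃ x : Fˣ, v ∈ M → x ∉ NAt (v.valuation F) (a : F) := by
    intro v
    by_cases h : v ∈ M
    · obtain ⟨x, hx⟩ := exists_not_NAt (hM v h).1 (hM v h).2
      exact ⟨x, fun _ => hx⟩
    · exact ⟨1, fun h' => absurd h' h⟩
  choose x hx using hx
  have hg : ∀ A : Finset M, ∃ g : Fˣ, ∀ v : M, g ∈ NAt (v.1.valuation F) (a : F) ↔ v ∉ A := by
    intro A
    obtain ⟨g, hg⟩ := weak_approx_unit M (fun v => if v ∈ A.map (Function.Embedding.subtype _) then x v else 1)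
    refine ⟨g, fun v => ?_⟩
    have h1 := hg v.1 v.2
    by_cases hv : v ∈ A
    · rw [if_pos (by simpa using hv)] at h1
      refine ⟨fun h => absurd (NAt_of_close _ h (close_swap h1)) (hx v.1 v.2), fun h => absurd hv h⟩
    · rw [if_neg (by simpa using hv)] at h1
      exact ⟨fun _ => hv, fun _ => NAt_of_close _ (one_mem _) h1⟩
  choose g hg using hg
  rw [← Subgroup.relIndex_top_right] at h0 ⊢
  have := le_relIndex_of_inj (⨅ v : M, NAt (v.1.valuation F) (a : F)) ⊤ g (fun _ => Subgroup.mem_top _) ?_ h0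
  · rw [Nat.card_eq_fintype_card, Fintype.card_finset, Fintype.card_coe] at this
    exact this
  · intro A B hAB
    rw [Subgroup.mem_iInf] at hAB
    ext v
    have h := hAB v
    have h3 : g A ∈ NAt (v.1.valuation F) (a : F) ↔ g B ∈ NAt (v.1.valuation F) (a : F) := by
      constructor
      · intro h'
        have := mul_mem h' h
        rwa [mul_inv_cancel_left] at this
      · intro h'
        rw [Subgroup.mul_mem_cancel_right _ h'] at h
        simpa using inv_mem h
    rw [hg, hg] at h3
    tauto

theorem thmA' (a b : Fˣ) (ha : a ∈ Pos F) (hdy : ∀ v : HeightOneSpectrum (𝓞 F), v.valuation F 2 ≠ 1 → a ∈ Sq (v.valuation F))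
    (hb : ∀ v : HeightOneSpectrum (𝓞 F), a ∉ Sq (v.valuation F) → b ∈ NAt (v.valuation F) (a : F)) :
    b ∈ normSub (a : F) := by
  classical
  by_cases has : IsSquare (a : F)
  · obtain ⟨r, hr⟩ := has
    have hr0 : r ≠ 0 := by rintro rfl; simp at hr
    refine ⟨(b + 1) / 2, (b - 1) / (2 * r), ?_⟩
    rw [hr]; field_simp; ring
  obtain ⟨S0, hS0⟩ := exists_ClTriv (F := F)
  have f2 : {v : HeightOneSpectrum (𝓞 F) | v.valuation F 2 ≠ 1}.Finite :=
    finite_val_ne_one (Units.mk0 (2 : F) two_ne_zero)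
  set S := S0 ∪ f2.toFinset ∪ (finite_val_ne_one a).toFinset ∪ (finite_val_ne_one b).toFinset with hS
  have h2 : ∀ v ∉ S, v.valuation F 2 = 1 := by
    intro v hv; by_contra h; apply hv; simp [hS, h]
  have haS : a ∈ USub S := by
    intro v hv; by_contra h; apply hv; simp [hS, h]
  have hbS : b ∈ USub S := by
    intro v hv; by_contra h; apply hv; simp [hS, h]
  have hcl : ClTriv S := hS0.mono (by
    intro v hv; simp [hS, hv])
  have hr1 : 1 ≤ Fintype.card (InfinitePlace F) := Fintype.card_pos
  obtain ⟨T, hTc, hTS, hTa, hTu⟩ := exists_T h2 haS has (Fintype.card (InfinitePlace F) + S.card - 1) (by omega)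
  set s := Fintype.card (InfinitePlace F) + S.card with hs
  have hdis : Disjoint S T := Finset.disjoint_left.2 fun v hv hv' => hTS v hv' hv
  have hcard : (S ∪ T).card = S.card + (s - 1) := by rw [Finset.card_union_of_disjoint hdis, hTc]
  set U := USub (S ∪ T) with hU
  have i1 : (QQ S).relIndex U = 2 ^ (2 * s - 1) := by
    have : (QQ S) ⊓ U = sqOf U ⊓ U := by
      ext x
      rw [Subgroup.mem_inf, Subgroup.mem_inf]
      refine and_congr_left fun hx => ?_
      constructor
      · intro h
        rw [mem_sqOf_USub hx]
        exact sq_of_QQ h2 hcl hTS hTu hx h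
      · intro h
        obtain ⟨y, hy, rfl⟩ := mem_sqOf.1 h
        rw [mem_QQ]
        refine ⟨fun v _ => sq_mem_Sq _ _, fun τ => ?_⟩
        have : τ y ≠ 0 := by simp
        simp only [Units.val_pow_eq_pow_val, map_pow]; positivity
    rw [← Subgroup.inf_relIndex_right, this, Subgroup.inf_relIndex_right, relIndex_sqOf_USub, hcard]
    congr 1; omega
  obtain ⟨q1, q0⟩ := index_QQ S
  have i2 : (U ⊔ QQ S).index ≤ 2 ∧ (U ⊔ QQ S).index ≠ 0 := by
    have h := Subgroup.relIndex_mul_index (le_sup_right : QQ S ≤ U ⊔ QQ S)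
    rw [Subgroup.relIndex_sup_right, i1] at h
    constructor
    · have h4 : 4 ^ s = 2 ^ (2 * s - 1) * 2 := by
        rw [← pow_succ, show 4 = 2 ^ 2 by norm_num, ← pow_mul]; congr 1; omega
      rw [← h, ← hs, h4] at q1
      exact Nat.le_of_mul_le_mul_left q1 (by positivity)
    · intro h0; rw [h0] at h; simp at h; exact q0 h.symm
  set M := (S ∪ T).filter fun w => a ∉ Sq (w.valuation F) with hM
  have hMm : ∀ v ∈ M, v ∈ S ∧ v.valuation F 2 = 1 ∧ a ∉ Sq (v.valuation F) := by
    intro v hv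
    rw [hM, Finset.mem_filter, Finset.mem_union] at hv
    refine ⟨?_, ?_, hv.2⟩
    · rcases hv.1 with h | h
      · exact h
      · exact absurd (hTa v h) hv.2
    · by_contra h; exact hv.2 (hdy v h)
  set Nn := ⨅ v : M, NAt (v.1.valuation F) (a : F) with hNn
  have hQN : QQ S ≤ Nn := by
    intro x hx
    rw [mem_QQ] at hx
    rw [hNn, Subgroup.mem_iInf]
    exact fun v => Sq_le_NAt _ _ (hx.1 v.1 (hMm v.1 v.2).1)
  have hN0 : Nn.index ≠ 0 := fun h => q0 (Nat.eq_zero_of_zero_dvd (h ▸ Subgroup.index_dvd_of_le hQN))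
  have i3 := index_NAt M a (fun v hv => (hMm v hv).2) hN0
  have i4 : (U ⊔ Nn).index ≤ 2 :=
    (Nat.le_of_dvd (Nat.pos_of_ne_zero i2.2) (Subgroup.index_dvd_of_le (sup_le_sup_left hQN U))).trans i2.1
  have i5 : 2 ^ M.card ≤ Nn.relIndex U * 2 := by
    have h := Subgroup.relIndex_mul_index (le_sup_right : Nn ≤ U ⊔ Nn)
    rw [Subgroup.relIndex_sup_right] at h
    refine i3.trans ?_
    rw [← hNn, ← h]
    exact Nat.mul_le_mul_left _ i4
  obtain ⟨E, _, _, _, ⟨D⟩⟩ := exists_quadData (a : F) has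
  have haS' : a ∈ U := USub_mono Finset.subset_union_left haS
  obtain ⟨hn1, hn0⟩ := D.norm_index has a rfl haS' (fun v hv => h2 v fun h => hv (Finset.mem_union_left _ h))
    (hcl.mono Finset.subset_union_left) ha
  set NU := (USub (upS E (S ∪ T))).map D.nm with hNU
  have hle : NU ≤ Nn ⊓ U := by
    intro x hx
    obtain ⟨y, hy, rfl⟩ := Subgroup.mem_map.1 hx
    refine Subgroup.mem_inf.2 ⟨?_, D.nm_mem hy⟩
    rw [hNn, Subgroup.mem_iInf]
    exact fun v => normSub_le_NAt _ _ (D.nm_eq y)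
  have i6 := Subgroup.relIndex_mul_relIndex NU (Nn ⊓ U) U hle inf_le_right
  rw [Subgroup.inf_relIndex_right] at i6
  have hle2 : NU.relIndex U ≤ Nn.relIndex U := by
    have : NU.relIndex U * 2 ≤ Nn.relIndex U * 2 := hn1.trans i5
    omega
  have hpos : 0 < Nn.relIndex U := by
    apply Nat.pos_of_ne_zero; intro h; rw [h] at i6; simp at i6; exact hn0 i6.symm
  have i7 : NU.relIndex (Nn ⊓ U) = 1 := by
    rw [← i6] at hle2
    have h1 : NU.relIndex (Nn ⊓ U) ≤ 1 := by
      by_contra h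
      have := Nat.mul_le_mul_right (Nn.relIndex U) (not_le.1 h)
      omega
    have h0 : NU.relIndex (Nn ⊓ U) ≠ 0 := by
      intro h; rw [h] at i6; simp at i6; exact hn0 i6.symm
    omega
  rw [Subgroup.relIndex_eq_one] at i7
  have hbN : b ∈ Nn ⊓ U := by
    refine Subgroup.mem_inf.2 ⟨?_, USub_mono Finset.subset_union_left hbS⟩
    rw [hNn, Subgroup.mem_iInf]
    exact fun v => hb v.1 (hMm v.1 v.2).2.2
  obtain ⟨y, hy, hye⟩ := Subgroup.mem_map.1 (i7 hbN)
  rw [mem_normSub, ← hye]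
  exact D.nm_eq y

lemma approx_sq (v : Valuation F ℤᵐ⁰) (a x0 : F) (ε : ℤᵐ⁰) (hε : ε ≠ 0) :
    ∃ γ : ℤᵐ⁰, γ ≠ 0 ∧ ∀ x, v (x - x0) < γ → v (a * x ^ 2 - a * x0 ^ 2) < ε := by
  set C := max 1 (v a * max 1 (v (2 * x0))) with hC
  have hC0 : C ≠ 0 := by
    have : (1 : ℤᵐ⁰) ≤ C := le_max_left _ _
    intro h; rw [h] at this; exact absurd this (by simp)
  refine ⟨min 1 (ε * C⁻¹), ?_, fun x hx => ?_⟩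
  · rcases min_choice 1 (ε * C⁻¹) with h | h <;> rw [h]
    · exact one_ne_zero
    · exact mul_ne_zero hε (inv_ne_zero hC0)
  · have h1 := hx.trans_le (min_le_left _ _)
    have h2 := hx.trans_le (min_le_right _ _)
    rw [show a * x ^ 2 - a * x0 ^ 2 = (x - x0) * (a * ((x - x0) + 2 * x0)) by ring, map_mul]
    have h3 : v (a * ((x - x0) + 2 * x0)) ≤ C := by
      rw [map_mul]
      refine le_trans ?_ (le_max_right _ _)
      gcongr
      exact (Valuation.map_add _ _ _).trans (max_le_max h1.le le_rfl)
    calc v (x - x0) * v (a * ((x - x0) + 2 * x0)) ≤ v (x - x0) * C := by gcongr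
      _ < (ε * C⁻¹) * C := by
        exact mul_lt_mul_of_pos_right h2 (zero_lt_iff.2 hC0)
      _ = ε := by rw [mul_assoc, inv_mul_cancel₀ hC0, mul_one]

/-- Hasse–Minkowski for the conic, totally positive case -/
theorem thmA (a b : Fˣ) (ha : a ∈ Pos F) (hb : b ∈ Pos F)
    (hloc : ∀ v : HeightOneSpectrum (𝓞 F), LocSolv (v.valuation F) (a : F) (b : F)) :
    ∃ x y z : F, ¬ (x = 0 ∧ y = 0) ∧ z ^ 2 = a * x ^ 2 + b * y ^ 2 := by
  classical
  have f2 : {v : HeightOneSpectrum (𝓞 F) | v.valuation F 2 ≠ 1}.Finite :=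
    finite_val_ne_one (Units.mk0 (2 : F) two_ne_zero)
  have hxy : ∃ x y : F, ¬ (x = 0 ∧ y = 0) ∧ ∀ v : HeightOneSpectrum (𝓞 F), v.valuation F 2 ≠ 1 →
      ∃ z : Fˣ, z ∈ Sq (v.valuation F) ∧ v.valuation F ((a * x ^ 2 + b * y ^ 2) - z) < v.valuation F (4 * (z : F)) := by
    choose x0 y0 z0 hz0 hz0s using hloc
    have h4 : ∀ v : HeightOneSpectrum (𝓞 F), v.valuation F (4 * (z0 v : F)) ≠ 0 := by intro v; simp
    choose γ hγ0 hγ using fun v : HeightOneSpectrum (𝓞 F) => approx_sq (v.valuation F) (a : F) (x0 v) _ (h4 v)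
    choose γ' hγ0' hγ' using fun v : HeightOneSpectrum (𝓞 F) => approx_sq (v.valuation F) (b : F) (y0 v) _ (h4 v)
    obtain ⟨x, hx⟩ := weak_approx f2.toFinset x0 γ (fun v _ => hγ0 v)
    obtain ⟨y, hy⟩ := weak_approx f2.toFinset y0 γ' (fun v _ => hγ0' v)
    have hclose : ∀ v : HeightOneSpectrum (𝓞 F), v.valuation F 2 ≠ 1 →
        v.valuation F ((a * x ^ 2 + b * y ^ 2) - z0 v) < v.valuation F (4 * (z0 v : F)) := by
      intro v hv
      have hv' : v ∈ f2.toFinset := by simpa using hv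
      rw [hz0 v, show (a * x ^ 2 + b * y ^ 2 : F) - (a * x0 v ^ 2 + b * y0 v ^ 2) =
        (a * x ^ 2 - a * x0 v ^ 2) + (b * y ^ 2 - b * y0 v ^ 2) by ring, ← hz0 v]
      exact Valuation.map_add_lt _ (hγ v _ (hx v hv')) (hγ' v _ (hy v hv'))
    by_cases h0 : x = 0 ∧ y = 0
    · refine ⟨1, 0, by simp, fun v hv => absurd (hclose v hv) ?_⟩
      rw [h0.1, h0.2]
      simp only [ne_eq, OfNat.ofNat_ne_zero, not_false_eq_true, zero_pow, mul_zero, add_zero, zero_sub, Valuation.map_neg, not_lt]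
      rw [map_mul]; exact mul_le_of_le_one_left zero_le (val_four_le _)
    · exact ⟨x, y, h0, fun v hv => ⟨z0 v, hz0s v, hclose v hv⟩⟩
  obtain ⟨x, y, h0, hdy⟩ := hxy
  -- the new pair
  have hpos : ∀ τ : F →+* ℝ, 0 < τ (a * x ^ 2 + b * y ^ 2) := by
    intro τ
    have h1 := ha τ
    have h2 := hb τ
    rw [map_add, map_mul, map_mul, map_pow, map_pow]
    by_cases hx : x = 0
    · have hy : τ y ≠ 0 := by
        rw [Ne, map_eq_zero]; exact fun h => h0 ⟨hx, h⟩
      positivity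
    · have hx : τ x ≠ 0 := by rwa [Ne, map_eq_zero]
      positivity
  by_cases hA0 : (a * x ^ 2 + b * y ^ 2 : F) = 0
  · exact ⟨x, y, 0, h0, by rw [hA0]; simp⟩
  set A := Units.mk0 _ hA0 with hA
  have hAv : (A : F) = a * x ^ 2 + b * y ^ 2 := rfl
  have hAsq : ∀ v : HeightOneSpectrum (𝓞 F), v.valuation F 2 ≠ 1 → A ∈ Sq (v.valuation F) := by
    intro v hv
    obtain ⟨z, hz, h⟩ := hdy v hv
    exact Sq_of_close _ hz h
  have key := thmA' A (a * b * A) hpos hAsq ?_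
  · obtain ⟨Y, Z, h⟩ := key
    refine ⟨Z * x - b * y, Z * y + a * x, Y, ?_, ?_⟩
    · rintro ⟨h1, h2⟩
      apply hA0
      linear_combination x * h2 - y * h1
    · push_cast at h
      rw [hAv] at h
      linear_combination -h
  · intro v hv
    have h2 : v.valuation F 2 = 1 := by by_contra h; exact hv (hAsq v h)
    have h4 : v.valuation F 4 = 1 := by rw [val_four, h2, one_mul]
    obtain ⟨X, Y, z, hz, hzs⟩ := hloc v
    obtain ⟨s, t, hst, hst'⟩ : ∃ s t : F, X = s * x - t * (b * y) ∧ Y = s * y + t * (a * x) := by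
      refine ⟨(a * X * x + b * Y * y) / A, (x * Y - y * X) / A, ?_, ?_⟩
      · rw [hAv]; field_simp; ring
      · rw [hAv]; field_simp; ring
    have hz' : (z : F) = A * s ^ 2 + (a * b * A) * t ^ 2 := by
      rw [hz, hAv, hst, hst']; ring
    have ht : t ≠ 0 := by
      rintro rfl
      have hs : s ≠ 0 := by rintro rfl; simp at hz'
      have : z = A * (Units.mk0 s hs) ^ 2 := by ext; simp [hz']
      rw [this, Subgroup.mul_mem_cancel_right _ (sq_mem_Sq _ _)] at hzs
      exact hv hzs
    rw [mem_Sq] at hzs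
    obtain ⟨ζ, hζ0, hζ⟩ := hzs
    rw [map_mul, h4, one_mul] at hζ
    have hbig : v.valuation F (ζ ^ 2) ≤ v.valuation F (ζ ^ 2 - A * s ^ 2) := by
      by_contra hlt
      rw [not_le] at hlt
      have hs : s ≠ 0 := by rintro rfl; simp at hlt
      have : A * (Units.mk0 s hs) ^ 2 ∈ Sq (v.valuation F) := by
        rw [mem_Sq]
        refine ⟨ζ, hζ0, ?_⟩
        rw [map_mul, h4, one_mul, Valuation.map_sub_swap]
        simpa using hlt
      rw [Subgroup.mul_mem_cancel_right _ (sq_mem_Sq _ _)] at this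
      exact hv this
    rw [mem_NAt]
    have hvt : v.valuation F t ≠ 0 := by simpa using ht
    have hn : (ζ / t) ^ 2 - A * (s / t) ^ 2 = (ζ ^ 2 - A * s ^ 2) * (t⁻¹) ^ 2 := by field_simp
    have hlt := hζ.trans_le hbig
    refine ⟨ζ / t, s / t, ?_, ?_⟩
    · rw [hn]
      refine mul_ne_zero ?_ (by simpa using ht)
      intro h; rw [h] at hlt; simp at hlt
    · have e1 : ((a * b * A : Fˣ) : F) - ((ζ / t) ^ 2 - A * (s / t) ^ 2) = (z - ζ ^ 2) * (t⁻¹) ^ 2 := by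
        rw [hz']; push_cast; field_simp; ring
      rw [e1, map_mul _ 4, h4, one_mul, hn, map_mul, map_mul]
      exact mul_lt_mul_of_pos_right hlt (by rw [zero_lt_iff]; simpa using ht)
end
end TNQ

open scoped WithZero
set_option linter.all false
namespace TNQ
section
variable {F : Type*} [Field F] {a b : F}

/-- reduced norm -/
def qN (x : ℍ[F,a,b]) : F := x.re ^ 2 - a * x.imI ^ 2 - b * x.imJ ^ 2 + a * b * x.imK ^ 2

/-- square of the pure part -/
def qf (a b u t s : F) : F := a * u ^ 2 + b * t ^ 2 - a * b * s ^ 2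

lemma qN_eq (x : ℍ[F,a,b]) : qN x = x.re ^ 2 - qf a b x.imI x.imJ x.imK := by simp only [qN, qf]; ring

lemma qN_mul (x y : ℍ[F,a,b]) : qN (x * y) = qN x * qN y := by
  simp [qN]; ring

lemma qN_smul (c : F) (x : ℍ[F,a,b]) : qN (c • x) = c ^ 2 * qN x := by
  simp [qN]; ring

lemma qN_star (x : ℍ[F,a,b]) : qN (star x) = qN x := by
  simp [qN]

lemma qN_one_add (x : ℍ[F,a,b]) : qN (1 + x) = 1 + 2 * x.re + qN x := by
  simp [qN]; ring

lemma qN_coe_add (c : F) (x : ℍ[F,a,b]) : qN (c • 1 + x) = c ^ 2 + c * (2 * x.re) + qN x := by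
  simp [qN]; ring

lemma qN_neg (x : ℍ[F,a,b]) : qN (-x) = qN x := by
  simp [qN]

lemma mul_star_self' (x : ℍ[F,a,b]) : x * star x = qN x • 1 := by
  ext <;> simp [qN] <;> ring

lemma star_mul_self' (x : ℍ[F,a,b]) : star x * x = qN x • 1 := by
  ext <;> simp [qN] <;> ring

lemma norm_eq_one_iff (x : ℍ[F,a,b]) : x * star x = 1 ↔ qN x = 1 := by
  rw [mul_star_self']
  constructor
  · intro h
    have := congrArg (fun z : ℍ[F,a,b] => z.re) h
    simpa using this
  · intro h; rw [h, one_smul]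

lemma trace_eq_iff (x : ℍ[F,a,b]) (s : F) : x + star x = algebraMap F _ s ↔ 2 * x.re = s := by
  rw [QuaternionAlgebra.self_add_star', zero_mul, add_zero]
  constructor
  · intro h
    exact congrArg (fun z : ℍ[F,a,b] => z.re) h
  · intro h; rw [h]; rfl
end

lemma exists_nat_exp {x : ℤᵐ⁰} (h0 : x ≠ 0) (h1 : x ≤ 1) : ∃ n : ℕ, x = WithZero.exp (-(n : ℤ)) := by
  refine ⟨(-WithZero.log x).toNat, ?_⟩
  rw [← WithZero.exp_log h0] at h1 ⊢
  rw [← WithZero.exp_zero, WithZero.exp_le_exp] at h1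
  rw [WithZero.log_exp, Int.toNat_of_nonneg (by omega), neg_neg]

lemma lt_one_iff_exp {x : ℤᵐ⁰} : x < 1 ↔ x ≤ WithZero.exp (-1 : ℤ) := by
  rcases eq_or_ne x 0 with rfl | h
  · simp
  · rw [← WithZero.exp_log h, ← WithZero.exp_zero, WithZero.exp_lt_exp, WithZero.exp_le_exp]; omega

section
variable {F : Type*} [Field F] [CharZero F] {a b : F} (v : Valuation F ℤᵐ⁰)

/-- ramification of the quaternion algebra at `v` -/
def Ram (v : Valuation F ℤᵐ⁰) (a b : F) : Prop := ∀ u t s : F, ∀ x : Fˣ, (x : F) = qf a b u t s → x ∉ Sq v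

variable {v}

lemma Ram.aniso (ha : a ≠ 0) (hb : b ≠ 0) (h : Ram v a b) {u t s : F} (h0 : qf a b u t s = 0) : u = 0 ∧ t = 0 ∧ s = 0 := by
  have h1 : (1 : Fˣ) ∈ Sq v := one_mem _
  unfold qf at h0
  refine ⟨?_, ?_, ?_⟩ <;> by_contra hn
  · refine h (1 + (1 - a) / (2 * a * u) * u) ((1 - a) / (2 * a * u) * t) ((1 - a) / (2 * a * u) * s) 1 ?_ h1
    rw [Units.val_one]; unfold qf; generalize hl : (1 - a) / (2 * a * u) = l
    have hl' : 1 - a = l * (2 * a * u) := by rw [← hl]; field_simp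
    linear_combination hl' - l ^ 2 * h0
  · refine h ((1 - b) / (2 * b * t) * u) (1 + (1 - b) / (2 * b * t) * t) ((1 - b) / (2 * b * t) * s) 1 ?_ h1
    rw [Units.val_one]; unfold qf; generalize hl : (1 - b) / (2 * b * t) = l
    have hl' : 1 - b = l * (2 * b * t) := by rw [← hl]; field_simp
    linear_combination hl' - l ^ 2 * h0
  · refine h ((1 + a * b) / (-2 * a * b * s) * u) ((1 + a * b) / (-2 * a * b * s) * t) (1 + (1 + a * b) / (-2 * a * b * s) * s) 1 ?_ h1
    rw [Units.val_one]; unfold qf; generalize hl : (1 + a * b) / (-2 * a * b * s) = l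
    have hl' : 1 + a * b = l * (-2 * a * b * s) := by rw [← hl]; field_simp
    linear_combination hl' - l ^ 2 * h0

lemma Ram.val_le (h : Ram v a b) (x : ℍ[F,a,b]) : v (4 * x.re ^ 2) ≤ v (qN x) := by
  by_contra hn
  rw [not_le] at hn
  have hf : qf a b x.imI x.imJ x.imK - x.re ^ 2 = - qN x := by rw [qN_eq]; ring
  have hf0 : qf a b x.imI x.imJ x.imK ≠ 0 := by
    intro h0
    rw [qN_eq, h0, sub_zero, map_mul] at hn
    exact absurd hn (not_lt.2 (mul_le_of_le_one_left zero_le (val_four_le v)))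
  refine h _ _ _ (Units.mk0 _ hf0) rfl ((mem_Sq v).2 ⟨x.re, ?_, ?_⟩)
  · intro h0; rw [h0] at hn; simp at hn
  · rw [Units.val_mk0, hf, Valuation.map_neg]; exact hn

lemma Ram.tr_sq (h : Ram v a b) (x : ℍ[F,a,b]) : v (2 * x.re) ^ 2 ≤ v (qN x) := by
  rw [← map_pow, show (2 * x.re) ^ 2 = 4 * x.re ^ 2 by ring]; exact h.val_le x

lemma Ram.tr_le (h : Ram v a b) {x : ℍ[F,a,b]} (hx : v (qN x) ≤ 1) : v (2 * x.re) ≤ 1 := by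
  have := (h.tr_sq x).trans hx
  exact (pow_le_one_iff two_ne_zero).1 this

lemma Ram.qN_ne (ha : a ≠ 0) (hb : b ≠ 0) (h : Ram v a b) {x : ℍ[F,a,b]} (hx : qN x = 0) : x = 0 := by
  have h1 := h.val_le x
  rw [hx, map_zero, le_zero_iff, map_eq_zero] at h1
  have h2 : x.re = 0 := by simpa using h1
  rw [qN_eq, h2] at hx
  obtain ⟨e1, e2, e3⟩ := h.aniso ha hb (u := x.imI) (t := x.imJ) (s := x.imK) (by linear_combination -hx)
  ext <;> simp [*]

lemma Ram.add_le' (ha : a ≠ 0) (hb : b ≠ 0) (h : Ram v a b) {x y : ℍ[F,a,b]} (hxy : v (qN x) ≤ v (qN y)) :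
    v (qN (x + y)) ≤ v (qN y) := by
  by_cases hy : qN y = 0
  · have hx : qN x = 0 := by simpa [hy] using hxy
    rw [h.qN_ne ha hb hy, h.qN_ne ha hb hx]; simp [qN]
  · set z := (qN y)⁻¹ • (x * star y) with hz
    have e1 : x + y = (1 + z) * y := by
      rw [add_mul, one_mul, hz, smul_mul_assoc, mul_assoc, star_mul_self', mul_smul_comm, mul_one, smul_smul,
        inv_mul_cancel₀ hy, one_smul, add_comm]
    have e2 : v (qN z) ≤ 1 := by
      rw [hz, qN_smul, qN_mul, qN_star, show (qN y)⁻¹ ^ 2 * (qN x * qN y) = qN x / qN y by field_simp, map_div₀]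
      exact div_le_one_of_le₀ hxy zero_le
    rw [e1, qN_mul, map_mul, qN_one_add]
    refine mul_le_of_le_one_left zero_le (v.map_add_le (v.map_add_le (by simp) (h.tr_le e2)) e2)

lemma Ram.add_le (ha : a ≠ 0) (hb : b ≠ 0) (h : Ram v a b) {x y : ℍ[F,a,b]} {γ : ℤᵐ⁰} (hx : v (qN x) ≤ γ) (hy : v (qN y) ≤ γ) :
    v (qN (x + y)) ≤ γ := by
  rcases le_total (v (qN x)) (v (qN y)) with h1 | h1
  · exact (h.add_le' ha hb h1).trans hy
  · rw [add_comm]; exact (h.add_le' ha hb h1).trans hx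
end
end TNQ

open scoped WithZero
set_option linter.all false
namespace TNQ
section
variable {F : Type*} [Field F] [NumberField F] {a b : F} {w : HeightOneSpectrum (𝓞 F)}

lemma even_char (h2 : w.valuation F 2 < 1) : CharP (kk w) 2 := by
  have h : (2 : kk w) = 0 := by
    rw [← res_two (F := F), res_eq_zero (val_two_le _)]; exact h2
  exact CharTwo.of_one_ne_zero_of_two_eq_zero one_ne_zero h

lemma exists_center (h : Ram (w.valuation F) a b)
    (hd : ∀ x : ℍ[F,a,b], w.valuation F (qN x) ≤ 1 → w.valuation F ((2 * x.re) ^ 2 - 4 * qN x) < 1)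
    {x : ℍ[F,a,b]} (hx : w.valuation F (qN x) ≤ 1) :
    ∃ c : F, w.valuation F c ≤ 1 ∧ w.valuation F (qN ((-c) • 1 + x)) < 1 := by
  have hd' := hd x hx
  have ht := h.tr_le hx
  rcases eq_or_ne (w.valuation F 2) 1 with h2 | h2
  · refine ⟨x.re, ?_, ?_⟩
    · rwa [map_mul, h2, one_mul] at ht
    · rw [qN_coe_add]
      have : (2 * x.re) ^ 2 - 4 * qN x = (- 2 * 2) * ((-x.re) ^ 2 + -x.re * (2 * x.re) + qN x) := by ring
      rw [this] at hd'
      simpa [h2] using hd'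
  · have h2' : w.valuation F 2 < 1 := lt_of_le_of_ne (val_two_le _) h2
    have hc := even_char h2'
    have h4 : w.valuation F (4 * qN x) < 1 := by
      rw [map_mul, val_four]
      refine (mul_le_of_le_one_right zero_le hx).trans_lt ?_
      exact (mul_le_of_le_one_right zero_le h2'.le).trans_lt h2'
    have ht2 : w.valuation F ((2 * x.re) ^ 2) < 1 := by
      have := Valuation.map_add_lt _ hd' h4
      rwa [sub_add_cancel] at this
    have ht1 : w.valuation F (2 * x.re) < 1 := by
      rw [map_pow] at ht2; exact (pow_lt_one_iff two_ne_zero).1 ht2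
    obtain ⟨α, hα⟩ := (FiniteField.isSquare_of_char_two (ringChar.eq (kk w) 2) (res w (qN x)))
    obtain ⟨c, hc1, hc2⟩ := res_surj w α
    refine ⟨c, hc1, ?_⟩
    rw [qN_coe_add]
    have e1 : w.valuation F (c ^ 2 - qN x) < 1 := by
      rw [← res_eq (by rw [map_pow]; exact pow_le_one' hc1 2) hx, res_pow hc1, hc2, hα, sq]
    have e2 : w.valuation F (2 * qN x) < 1 := by
      rw [map_mul]; exact (mul_le_of_le_one_right zero_le hx).trans_lt h2'
    have e3 : w.valuation F (c * (2 * x.re)) < 1 := by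
      rw [map_mul]; exact (mul_le_of_le_one_left zero_le hc1).trans_lt ht1
    rw [show (-c) ^ 2 + -c * (2 * x.re) + qN x = (c ^ 2 - qN x) - c * (2 * x.re) + 2 * qN x by ring]
    exact Valuation.map_add_lt _ (Valuation.map_sub_lt _ e1 e3) e2

/-- scaling out a uniformizer -/
lemma exists_div {π : F} (hπ : w.valuation F π = WithZero.exp (-1 : ℤ)) {x : ℍ[F,a,b]}
    (hx : w.valuation F (qN x) ≤ WithZero.exp (-2 : ℤ)) : ∃ z : ℍ[F,a,b], w.valuation F (qN z) ≤ 1 ∧ x = π • z := by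
  have hπ0 : π ≠ 0 := by rintro rfl; rw [map_zero] at hπ; exact WithZero.exp_ne_zero hπ.symm
  refine ⟨π⁻¹ • x, ?_, by rw [smul_smul, mul_inv_cancel₀ hπ0, one_smul]⟩
  rw [qN_smul, map_mul, map_pow, map_inv₀, hπ, ← WithZero.exp_neg, ← WithZero.exp_nsmul]
  refine (mul_le_mul_right hx _).trans ?_
  rw [← WithZero.exp_add]; simp

lemma exists_decomp (ha : a ≠ 0) (hb : b ≠ 0) (h : Ram (w.valuation F) a b)
    (hd : ∀ x : ℍ[F,a,b], w.valuation F (qN x) ≤ 1 → w.valuation F ((2 * x.re) ^ 2 - 4 * qN x) < 1)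
    {π : F} (hπ : w.valuation F π = WithZero.exp (-1 : ℤ)) : ∃ p : ℍ[F,a,b], w.valuation F (qN p) ≤ 1 ∧
      ∀ x : ℍ[F,a,b], w.valuation F (qN x) ≤ 1 → ∃ α β : F, ∃ z : ℍ[F,a,b], w.valuation F α ≤ 1 ∧
        w.valuation F β ≤ 1 ∧ w.valuation F (qN z) ≤ 1 ∧ x = α • 1 + β • p + π • z := by
  by_cases hp : ∃ p : ℍ[F,a,b], w.valuation F (qN p) = WithZero.exp (-1 : ℤ)
  · obtain ⟨p, hp⟩ := hp
    have hp0 : qN p ≠ 0 := by intro h0; rw [h0, map_zero] at hp; exact WithZero.exp_ne_zero hp.symm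
    refine ⟨p, by rw [hp]; exact (lt_one_iff_exp.2 le_rfl).le, fun x hx => ?_⟩
    obtain ⟨c, hc, hcx⟩ := exists_center h hd hx
    set y := (-c) • 1 + x with hy
    set y' := (qN p)⁻¹ • (y * star p) with hy'
    have e1 : y = y' * p := by
      rw [hy', smul_mul_assoc, mul_assoc, star_mul_self', mul_smul_comm, mul_one, smul_smul,
        inv_mul_cancel₀ hp0, one_smul]
    have e2 : w.valuation F (qN y') ≤ 1 := by
      rw [hy', qN_smul, qN_mul, qN_star, show (qN p)⁻¹ ^ 2 * (qN y * qN p) = qN y / qN p by field_simp, map_div₀]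
      exact div_le_one_of_le₀ (by rw [hp]; exact lt_one_iff_exp.1 hcx) zero_le
    obtain ⟨c', hc', hcy⟩ := exists_center h hd e2
    obtain ⟨z, hz, hze⟩ := exists_div (x := ((-c') • 1 + y') * p) hπ (by
      rw [qN_mul, map_mul, hp, show (-2 : ℤ) = -1 + -1 by norm_num, WithZero.exp_add]
      exact mul_le_mul_left (lt_one_iff_exp.1 hcy) _)
    refine ⟨c, c', z, hc, hc', hz, ?_⟩
    rw [← hze, add_mul, ← e1, hy]
    simp only [neg_smul, neg_mul, smul_mul_assoc, one_mul]
    abel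
  · push Not at hp
    refine ⟨0, by simp [qN], fun x hx => ?_⟩
    obtain ⟨c, hc, hcx⟩ := exists_center h hd hx
    obtain ⟨z, hz, hze⟩ := exists_div (x := (-c) • 1 + x) hπ (by
      have h1 := lt_one_iff_exp.1 hcx
      rcases eq_or_ne (w.valuation F (qN ((-c) • 1 + x))) 0 with h0 | h0
      · rw [h0]; exact zero_le
      · have h3 := lt_of_le_of_ne h1 (hp _)
        rw [← WithZero.exp_log h0, WithZero.exp_lt_exp] at h3
        rw [← WithZero.exp_log h0, WithZero.exp_le_exp]; omega)
    refine ⟨c, 0, z, hc, by simp, hz, ?_⟩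
    rw [← hze]
    simp only [neg_smul, smul_zero]
    abel

lemma exists_unit_disc (ha : a ≠ 0) (hb : b ≠ 0) (h : Ram (w.valuation F) a b) :
    ∃ x : ℍ[F,a,b], w.valuation F (qN x) ≤ 1 ∧ w.valuation F ((2 * x.re) ^ 2 - 4 * qN x) = 1 := by
  by_contra hcon
  push Not at hcon
  have hd : ∀ x : ℍ[F,a,b], w.valuation F (qN x) ≤ 1 → w.valuation F ((2 * x.re) ^ 2 - 4 * qN x) < 1 := by
    intro x hx
    refine lt_of_le_of_ne (Valuation.map_sub_le _ ?_ ?_) (hcon x hx)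
    · rw [map_pow]; exact pow_le_one' (h.tr_le hx) 2
    · rw [map_mul]; exact mul_le_one' (val_four_le _) hx
  obtain ⟨π, hπ⟩ := w.valuation_exists_uniformizer F
  obtain ⟨p, hp, hdec⟩ := exists_decomp ha hb h hd hπ
  have hπ0 : π ≠ 0 := by rintro rfl; rw [map_zero] at hπ; exact WithZero.exp_ne_zero hπ.symm
  -- scaled basis vectors
  have hscale : ∀ x : ℍ[F,a,b], ∃ c : F, c ≠ 0 ∧ w.valuation F (qN (c • x)) ≤ 1 := by
    intro x
    rcases eq_or_ne (qN x) 0 with h0 | h0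
    · exact ⟨1, one_ne_zero, by simp [h0]⟩
    · obtain ⟨n, hn⟩ := exists_exp_lt (w.valuation F (qN x))⁻¹ (by simpa using h0)
      refine ⟨π ^ n, pow_ne_zero _ hπ0, ?_⟩
      rw [qN_smul, map_mul]
      have h1 : w.valuation F ((π ^ n) ^ 2) ≤ (w.valuation F (qN x))⁻¹ := by
        refine le_trans ?_ hn.le
        rw [map_pow, map_pow, hπ, ← WithZero.exp_nsmul, ← WithZero.exp_nsmul, WithZero.exp_le_exp]
        simp
        omega
      refine (mul_le_mul_left h1 _).trans ?_
      rw [inv_mul_cancel₀ (by simpa using h0)]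
  let P : ℕ → Prop := fun n => ∃ x y : ℍ[F,a,b], w.valuation F (qN x) ≤ 1 ∧ w.valuation F (qN y) ≤ 1 ∧
    w.valuation F (qN (x * y - y * x)) = WithZero.exp (-(n : ℤ))
  have hmul : ∀ x y : ℍ[F,a,b], w.valuation F (qN x) ≤ 1 → w.valuation F (qN y) ≤ 1 → w.valuation F (qN (x * y)) ≤ 1 := by
    intro x y hx hy; rw [qN_mul, map_mul]; exact mul_le_one' hx hy
  have hcom : ∀ x y : ℍ[F,a,b], w.valuation F (qN x) ≤ 1 → w.valuation F (qN y) ≤ 1 → w.valuation F (qN (x * y - y * x)) ≤ 1 := by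
    intro x y hx hy
    rw [sub_eq_add_neg]
    exact h.add_le ha hb (hmul _ _ hx hy) (by rw [qN_neg]; exact hmul _ _ hy hx)
  have hP : ∃ n, P n := by
    obtain ⟨c, hc, hcx⟩ := hscale ⟨0, 1, 0, 0⟩
    obtain ⟨c', hc', hcx'⟩ := hscale ⟨0, 0, 1, 0⟩
    obtain ⟨n, hn⟩ := exists_nat_exp (x := w.valuation F (qN ((c • (⟨0, 1, 0, 0⟩ : ℍ[F,a,b])) * (c' • (⟨0, 0, 1, 0⟩ : ℍ[F,a,b])) -
       (c' • (⟨0, 0, 1, 0⟩ : ℍ[F,a,b])) * (c • (⟨0, 1, 0, 0⟩ : ℍ[F,a,b]))))) (by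
        rw [Ne, map_eq_zero]
        have : qN ((c • (⟨0, 1, 0, 0⟩ : ℍ[F,a,b])) * (c' • (⟨0, 0, 1, 0⟩ : ℍ[F,a,b])) -
           (c' • (⟨0, 0, 1, 0⟩ : ℍ[F,a,b])) * (c • (⟨0, 1, 0, 0⟩ : ℍ[F,a,b]))) = 4 * a * b * c ^ 2 * c' ^ 2 := by
          simp [qN]; ring
        rw [this]; simp [ha, hb, hc, hc']) (hcom _ _ hcx hcx')
    exact ⟨n, _, _, hcx, hcx', hn⟩
  classical
  obtain ⟨x, y, hx, hy, hxy⟩ := Nat.find_spec hP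
  set n := Nat.find hP with hn
  have hmin : ∀ x y : ℍ[F,a,b], w.valuation F (qN x) ≤ 1 → w.valuation F (qN y) ≤ 1 →
      w.valuation F (qN (x * y - y * x)) ≤ WithZero.exp (-(n : ℤ)) := by
    intro x y hx hy
    rcases eq_or_ne (w.valuation F (qN (x * y - y * x))) 0 with h0 | h0
    · rw [h0]; exact zero_le
    · obtain ⟨m, hm⟩ := exists_nat_exp h0 (hcom x y hx hy)
      rw [hm, WithZero.exp_le_exp]
      have := Nat.find_min' hP ⟨x, y, hx, hy, hm⟩
      omega
  obtain ⟨α, β, z, hα, hβ, hz, rfl⟩ := hdec x hx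
  obtain ⟨α', β', z', hα', hβ', hz', rfl⟩ := hdec y hy
  have key : (α • 1 + β • p + π • z) * (α' • 1 + β' • p + π • z') - (α' • 1 + β' • p + π • z') * (α • 1 + β • p + π • z)
     = π • (β • (p * z' - z' * p) + (β' • (z * p - p * z) + π • (z * z' - z' * z))) := by
    simp only [add_mul, mul_add, smul_mul_assoc, mul_smul_comm, one_mul, mul_one, smul_add, smul_sub, smul_smul]
    module
  have hπ1 : w.valuation F π ≤ 1 := by rw [hπ]; exact (lt_one_iff_exp.2 le_rfl).le
  have hs : ∀ (c : F) (u : ℍ[F,a,b]), w.valuation F c ≤ 1 → w.valuation F (qN u) ≤ WithZero.exp (-(n : ℤ)) →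
      w.valuation F (qN (c • u)) ≤ WithZero.exp (-(n : ℤ)) := by
    intro c u hc hu
    rw [qN_smul, map_mul, map_pow]
    exact (mul_le_of_le_one_left zero_le (pow_le_one' hc 2)).trans hu
  have hbd := h.add_le ha hb (hs β _ hβ (hmin p z' hp hz')) (h.add_le ha hb (hs β' _ hβ' (hmin z p hz hp)) (hs π _ hπ1 (hmin z z' hz hz')))
  rw [key, qN_smul, map_mul, map_pow, hπ] at hxy
  have := hxy.symm.le.trans (mul_le_mul_right hbd _)
  rw [← WithZero.exp_nsmul, ← WithZero.exp_add, WithZero.exp_le_exp] at this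
  simp at this
end
end TNQ

open scoped WithZero
set_option linter.all false
namespace TNQ
section
variable {k : Type*} [Field k] [Fintype k]

lemma as_index [CharP k 2] {α β : k} (hα : ∀ δ, δ - δ ^ 2 ≠ α) (hβ : ∀ δ, δ - δ ^ 2 ≠ β) : ∃ δ, δ - δ ^ 2 = α + β := by
  let φ : k →+ k :=
    { toFun := fun δ => δ - δ ^ 2
      map_zero' := by simp
      map_add' := by intro x y; rw [CharTwo.add_sq]; ring }
  have hker : Nat.card φ.ker = 2 := by
    have : (φ.ker : Set k) = {0, 1} := by
      ext x
      simp only [SetLike.mem_coe, AddMonoidHom.mem_ker, Set.mem_insert_iff, Set.mem_singleton_iff]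
      change x - x ^ 2 = 0 ↔ _
      rw [show x - x ^ 2 = x * (1 - x) by ring, mul_eq_zero, sub_eq_zero, eq_comm (a := (1:k))]
    rw [← SetLike.coe_sort_coe, this, Nat.card_coe_set_eq, Set.ncard_pair zero_ne_one]
  have hidx : φ.range.index = 2 := by
    have h1 := AddSubgroup.card_mul_index φ.ker
    rw [AddSubgroup.index_ker, hker] at h1
    have h2 := AddSubgroup.card_mul_index φ.range
    rw [← h1, mul_comm 2] at h2
    exact Nat.eq_of_mul_eq_mul_left Nat.card_pos h2
  have := (AddSubgroup.add_mem_iff_of_index_two hidx (a := α) (b := β)).2 (by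
    have e1 : α ∉ φ.range := by rintro ⟨δ, h⟩; exact hα δ h
    have e2 : β ∉ φ.range := by rintro ⟨δ, h⟩; exact hβ δ h
    tauto)
  exact this

lemma pigeon (τ : k) : ∃ σ : k, (∀ ρ, ρ ^ 2 - σ * ρ + 1 ≠ 0) ∧
    ((∀ ρ, ρ ^ 2 - (τ - σ) * ρ + 1 ≠ 0) ∨ τ - σ = 2 ∨ τ - σ = -2) := by
  classical
  let A : Finset k := Finset.univ.filter fun ρ => ρ ≠ 0 ∧ ρ ≠ 1 ∧ ρ ≠ -1
  let R : Finset k := Finset.univ.filter fun σ => ∃ ρ, ρ ^ 2 - σ * ρ + 1 = 0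
  let B : Finset k := R.filter fun σ => σ ≠ 2 ∧ σ ≠ -2
  have hmaps : ∀ ρ ∈ A, ρ + ρ⁻¹ ∈ B := by
    intro ρ hρ
    obtain ⟨h0, h1, h2⟩ := (Finset.mem_filter.1 hρ).2
    simp only [B, R, Finset.mem_filter, Finset.mem_univ, true_and]
    refine ⟨⟨ρ, by field_simp; ring⟩, ?_, ?_⟩
    · intro h; apply h1; field_simp at h
      have : (ρ - 1) ^ 2 = 0 := by linear_combination h
      exact sub_eq_zero.1 (pow_eq_zero_iff two_ne_zero |>.1 this)
    · intro h; apply h2; field_simp at h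
      have : (ρ + 1) ^ 2 = 0 := by linear_combination h
      exact eq_neg_of_add_eq_zero_left (pow_eq_zero_iff two_ne_zero |>.1 this)
  have hAB : 2 * B.card ≤ A.card := by
    rw [Finset.card_eq_sum_card_fiberwise (f := fun ρ : k => ρ + ρ⁻¹) (t := B) (fun x hx => hmaps x hx)]
    rw [mul_comm, ← smul_eq_mul]
    refine Finset.card_nsmul_le_sum _ _ _ fun σ hσ => ?_
    simp only [B, R, Finset.mem_filter, Finset.mem_univ, true_and] at hσ
    obtain ⟨⟨ρ, hρ⟩, h2, h3⟩ := hσ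
    have h0 : ρ ≠ 0 := by rintro rfl; simp at hρ
    have hs : σ = ρ + ρ⁻¹ := by field_simp; linear_combination -hρ
    have h1 : ρ ≠ 1 := by rintro rfl; apply h2; rw [hs]; norm_num
    have h1' : ρ ≠ -1 := by rintro rfl; apply h3; rw [hs]; norm_num
    refine Finset.one_lt_card.2 ⟨ρ, ?_, ρ⁻¹, ?_, ?_⟩
    · simp [A, h0, h1, h1', hs]
    · have : ρ⁻¹ ≠ -1 := by intro h; apply h1'; rw [← inv_inv ρ, h]; norm_num
      simp [A, h0, h1, this, hs, add_comm]
    · intro h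
      have : (ρ - 1) * (ρ + 1) = 0 := by
        field_simp at h; linear_combination h
      rcases mul_eq_zero.1 this with h | h
      · exact h1 (sub_eq_zero.1 h)
      · exact h1' (eq_neg_of_add_eq_zero_left h)
  have hA : A.card + ({1, -1} : Finset k).card + 1 ≤ Fintype.card k := by
    have hd : Disjoint A (insert 0 ({1, -1} : Finset k)) := by
      rw [Finset.disjoint_left]; intro x hx hx'
      obtain ⟨h0, h1, h2⟩ := (Finset.mem_filter.1 hx).2
      simp at hx'; tauto
    have h := Finset.card_union_of_disjoint hd
    rw [Finset.card_insert_of_notMem (by simp)] at h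
    have := Finset.card_le_univ (A ∪ insert 0 ({1, -1} : Finset k))
    omega
  have h21 : ({2, -2} : Finset k).card ≤ ({1, -1} : Finset k).card := by
    have : ({2, -2} : Finset k) = ({1, -1} : Finset k).image (fun x => 2 * x) := by simp [Finset.image_insert]
    rw [this]; exact Finset.card_image_le
  have hR : R.card ≤ B.card + ({2, -2} : Finset k).card := by
    have : R ⊆ B ∪ {2, -2} := by
      intro x hx
      simp only [B, Finset.mem_union, Finset.mem_filter, Finset.mem_insert, Finset.mem_singleton]; tauto
    exact (Finset.card_le_card this).trans (Finset.card_union_le _ _)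
  have hcard : (R ∪ B.image (fun x => τ - x)).card < (Finset.univ : Finset k).card := by
    have h1 := Finset.card_union_le R (B.image (fun x => τ - x))
    have h2 : (B.image (fun x => τ - x)).card ≤ B.card := Finset.card_image_le
    rw [Finset.card_univ]; omega
  obtain ⟨σ, -, hσ⟩ := Finset.exists_mem_notMem_of_card_lt_card hcard
  rw [Finset.mem_union, not_or] at hσ
  refine ⟨σ, ?_, ?_⟩
  · intro ρ h; exact hσ.1 (Finset.mem_filter.2 ⟨Finset.mem_univ _, ρ, h⟩)
  · by_contra hn
    push Not at hn
    obtain ⟨⟨ρ, h1⟩, h2, h3⟩ := hn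
    exact hσ.2 (Finset.mem_image.2 ⟨τ - σ, Finset.mem_filter.2 ⟨Finset.mem_filter.2 ⟨Finset.mem_univ _, ρ, h1⟩, h2, h3⟩, by ring⟩)
end

section
variable {F : Type*} [Field F] [NumberField F] {a b : F} {w : HeightOneSpectrum (𝓞 F)}

lemma as_nonSq {A : F} (hA : w.valuation F A ≤ 1) {z : Fˣ} (hz : (z : F) = 1 - 4 * A) (h2 : w.valuation F 2 < 1)
    (hns : z ∉ Sq (w.valuation F)) (δ : kk w) : δ - δ ^ 2 ≠ res w A := by
  intro h
  obtain ⟨D, hD, rfl⟩ := res_surj w δ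
  have hD2 : w.valuation F (D ^ 2) ≤ 1 := by rw [map_pow]; exact pow_le_one' hD 2
  rw [← res_pow hD, ← res_sub hD hD2, res_eq (Valuation.map_sub_le _ hD hD2) hA] at h
  have h1 : w.valuation F (1 - 2 * D) = 1 := by
    apply val_eq_one_of_sub
    rw [show 1 - 2 * D - 1 = -(2 * D) by ring, Valuation.map_neg, map_mul]
    exact (mul_le_of_le_one_right zero_le hD).trans_lt h2
  refine hns ((mem_Sq _).2 ⟨1 - 2 * D, ?_, ?_⟩)
  · intro h0; rw [h0, map_zero] at h1; exact zero_ne_one h1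
  · rw [hz, map_mul, map_pow, h1, one_pow, mul_one,
      show 1 - 4 * A - (1 - 2 * D) ^ 2 = 4 * (D - D ^ 2 - A) by ring, map_mul]
    have := mul_lt_mul_of_pos_left h (val_four_pos (w.valuation F))
    rwa [mul_one] at this

lemma disc_mul_Sq {T N s M : F} (hT : w.valuation F T ≤ 1) (hN : w.valuation F N ≤ 1) (hs : w.valuation F s ≤ 1)
    (hM : w.valuation F M ≤ 1) {e d : Fˣ} (he : (e : F) = T ^ 2 - 4 * N) (hd : (d : F) = s ^ 2 - 4 * M)
    (he1 : w.valuation F (e : F) = 1) (hd1 : w.valuation F (d : F) = 1) (hens : e ∉ Sq (w.valuation F))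
    (hdns : d ∉ Sq (w.valuation F)) : e * d ∈ Sq (w.valuation F) := by
  rcases eq_or_ne (w.valuation F 2) 1 with h2 | h2
  · exact Sq_mul_of_not h2 he1 hd1 hens hdns
  · have h2' : w.valuation F 2 < 1 := lt_of_le_of_ne (val_two_le _) h2
    have hc := even_char h2'
    have h4 : w.valuation F 4 < 1 := by rw [val_four]; exact (mul_le_of_le_one_right zero_le h2'.le).trans_lt h2'
    have key : ∀ {T N : F} {e : Fˣ}, w.valuation F N ≤ 1 → (e : F) = T ^ 2 - 4 * N → w.valuation F (e : F) = 1 →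
        e ∉ Sq (w.valuation F) → ∃ (y z : Fˣ) (A : F), e = y ^ 2 * z ∧ (z : F) = 1 - 4 * A ∧ w.valuation F A ≤ 1 ∧
          z ∉ Sq (w.valuation F) := by
      intro T N e hN he he1 hens
      have hT : w.valuation F T = 1 := by
        have : w.valuation F (T ^ 2) = w.valuation F (e : F) := by
          apply Valuation.map_eq_of_sub_lt
          rw [he1, he, show T ^ 2 - (T ^ 2 - 4 * N) = 4 * N by ring, map_mul]
          exact (mul_le_of_le_one_right zero_le hN).trans_lt h4
        rw [he1, map_pow] at this
        simpa using this
      have hT0 : T ≠ 0 := by rintro rfl; rw [map_zero] at hT; exact zero_ne_one hT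
      have hz : e = (Units.mk0 T hT0) ^ 2 * (e * (Units.mk0 T hT0)⁻¹ ^ 2) := by
        ext; simp
      refine ⟨Units.mk0 T hT0, e * (Units.mk0 T hT0)⁻¹ ^ 2, N / T ^ 2, hz, ?_, ?_, ?_⟩
      · simp only [Units.val_mul, Units.val_pow_eq_pow_val, Units.val_inv_eq_inv_val, Units.val_mk0, he]; field_simp
      · simpa [hT] using hN
      · intro h; apply hens; rw [hz]; exact mul_mem (sq_mem_Sq _ _) h
    obtain ⟨y, z, A, rfl, hz, hA, hzns⟩ := key hN he he1 hens
    obtain ⟨y', z', B, rfl, hz', hB, hzns'⟩ := key hM hd hd1 hdns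
    obtain ⟨δ, hδ⟩ := as_index (as_nonSq hA hz h2' hzns) (as_nonSq hB hz' h2' hzns')
    suffices h : z * z' ∈ Sq (w.valuation F) by
      rw [mul_mul_mul_comm]
      exact mul_mem (mul_mem (sq_mem_Sq _ _) (sq_mem_Sq _ _)) h
    by_contra hns
    have hAB : w.valuation F (4 * (A * B)) < 1 := by
      rw [map_mul, map_mul]; exact (mul_le_of_le_one_right zero_le (mul_le_one' hA hB)).trans_lt h4
    have hAB1 := Valuation.map_add_le _ hA hB
    refine as_nonSq (A := A + B - 4 * (A * B)) (z := z * z') (Valuation.map_sub_le _ hAB1 hAB.le) ?_ h2' hns δ ?_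
    · rw [Units.val_mul, hz, hz']; ring
    · rw [hδ, ← res_add hA hB, res_eq hAB1 (Valuation.map_sub_le _ hAB1 hAB.le)]
      simpa using hAB

/-- `X² - sX + 1` has no root modulo `w` -/
def Irr (w : HeightOneSpectrum (𝓞 F)) (s : F) : Prop := ∀ r : F, w.valuation F r ≤ 1 → ¬ w.valuation F (r ^ 2 - s * r + 1) < 1

lemma Irr.val {s : F} (hs : w.valuation F s ≤ 1) (h : Irr w s) : w.valuation F (s ^ 2 - 4) = 1 := by
  by_contra hn
  have hs2 : w.valuation F (s ^ 2) ≤ 1 := by rw [map_pow]; exact pow_le_one' hs 2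
  have hlt : w.valuation F (s ^ 2 - 4) < 1 := lt_of_le_of_ne (Valuation.map_sub_le _ hs2 (val_four_le _)) hn
  rcases eq_or_ne (w.valuation F 2) 1 with h2 | h2
  · refine h (s / 2) (by simpa [h2] using hs) ?_
    rw [show (s / 2) ^ 2 - s * (s / 2) + 1 = -((s ^ 2 - 4) / (2 * 2)) by ring]
    simpa [h2] using hlt
  · have h2' : w.valuation F 2 < 1 := lt_of_le_of_ne (val_two_le _) h2
    have h4 : w.valuation F 4 < 1 := by rw [val_four]; exact (mul_le_of_le_one_right zero_le h2'.le).trans_lt h2'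
    have h3 := Valuation.map_add_lt _ hlt h4
    rw [sub_add_cancel, map_pow] at h3
    have h5 : w.valuation F s < 1 := (pow_lt_one_iff two_ne_zero).1 h3
    refine h 1 (by simp) ?_
    rw [show (1 : F) ^ 2 - s * 1 + 1 = 2 - s by ring]
    exact Valuation.map_sub_lt _ h2' h5

lemma Irr.nonSq {s : F} (hs : w.valuation F s ≤ 1) (h : Irr w s) {d : Fˣ} (hd : (d : F) = s ^ 2 - 4) : d ∉ Sq (w.valuation F) := by
  intro hsq
  have hd1 := h.val hs
  obtain ⟨y, hy, hlt⟩ := (mem_Sq _).1 hsq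
  have hy1 : w.valuation F (y ^ 2) = 1 := by
    have : w.valuation F (d : F) = w.valuation F (y ^ 2) := by
      apply Valuation.map_eq_of_sub_lt
      refine hlt.trans_le ?_
      rw [map_mul]; exact mul_le_of_le_one_left zero_le (val_four_le _)
    rw [← this, hd, hd1]
  have hlt1 : w.valuation F (((s + y) / 2) ^ 2 - s * ((s + y) / 2) + 1) < 1 := by
    rw [show ((s + y) / 2) ^ 2 - s * ((s + y) / 2) + 1 = -((s ^ 2 - 4 - y ^ 2) / 4) by ring, Valuation.map_neg, map_div₀,
      div_lt_one₀ (val_four_pos _), ← hd]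
    rwa [map_mul, hy1, mul_one] at hlt
  refine h ((s + y) / 2) ?_ hlt1
  generalize (s + y) / 2 = r at hlt1
  by_contra hr
  rw [not_le] at hr
  have h1 : w.valuation F (s * r - 1) < w.valuation F (r ^ 2) := by
    have hr2 : w.valuation F r < w.valuation F (r ^ 2) := by
      rw [map_pow, sq]
      have := mul_lt_mul_of_pos_right hr (zero_lt_one.trans hr)
      rwa [one_mul] at this
    refine Valuation.map_sub_lt _ ?_ ?_
    · rw [map_mul]; exact (mul_le_of_le_one_left zero_le hs).trans_lt hr2
    · rw [map_one]; exact hr.trans hr2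
  have h2 := Valuation.map_sub_eq_of_lt_left _ h1
  rw [show r ^ 2 - (s * r - 1) = r ^ 2 - s * r + 1 by ring] at h2
  rw [h2, map_pow] at hlt1
  exact absurd ((pow_lt_one_iff two_ne_zero).1 hlt1) (not_lt.2 hr.le)

lemma Irr_of_res {s : F} (hs : w.valuation F s ≤ 1) (h : ∀ ρ : kk w, ρ ^ 2 - res w s * ρ + 1 ≠ 0) : Irr w s := by
  intro r hr hlt
  apply h (res w r)
  have h1 : w.valuation F (r ^ 2) ≤ 1 := by rw [map_pow]; exact pow_le_one' hr 2
  have h2 : w.valuation F (s * r) ≤ 1 := by rw [map_mul]; exact mul_le_one' hs hr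
  have h3 := Valuation.map_sub_le _ h1 h2
  rw [← res_pow hr, ← res_mul hs hr, ← res_sub h1 h2, ← res_one (F := F), ← res_add h3 (by simp),
    res_eq_zero (Valuation.map_add_le _ h3 (by simp))]
  exact hlt

/-- local goodness of a trace -/
def Good (w : HeightOneSpectrum (𝓞 F)) (a b s : F) : Prop :=
  ∃ u t r : F, ∃ z : Fˣ, (z : F) = qf a b u t r * (s ^ 2 - 4) ∧ z ∈ Sq (w.valuation F)

lemma Good_of_Irr (ha : a ≠ 0) (hb : b ≠ 0) (h : Ram (w.valuation F) a b) {s : F} (hs : w.valuation F s ≤ 1) (hi : Irr w s) :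
    Good w a b s := by
  obtain ⟨x, hx, hd⟩ := exists_unit_disc ha hb h
  have he : (2 * x.re) ^ 2 - 4 * qN x = qf a b (2 * x.imI) (2 * x.imJ) (2 * x.imK) := by rw [qN_eq]; unfold qf; ring
  have he0 : (2 * x.re) ^ 2 - 4 * qN x ≠ 0 := by intro h0; rw [h0, map_zero] at hd; exact zero_ne_one hd
  have hv := hi.val hs
  have hs0 : s ^ 2 - 4 ≠ 0 := by intro h0; rw [h0, map_zero] at hv; exact zero_ne_one hv
  refine ⟨2 * x.imI, 2 * x.imJ, 2 * x.imK, Units.mk0 _ he0 * Units.mk0 _ hs0, by rw [← he]; rfl, ?_⟩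
  refine disc_mul_Sq (h.tr_le hx) hx hs (M := 1) (by simp) rfl (by simp) hd hv (h _ _ _ _ he) (hi.nonSq hs rfl)

lemma Good_near (ha : a ≠ 0) {ε : F} (hε : ε = 1 ∨ ε = -1) : ∃ s : F, w.valuation F (s - 2 * ε) < 1 ∧ Good w a b s := by
  obtain ⟨π, hπ⟩ := w.valuation_exists_uniformizer F
  have hπ0 : π ≠ 0 := by rintro rfl; rw [map_zero] at hπ; exact WithZero.exp_ne_zero hπ.symm
  obtain ⟨n, hn⟩ := exists_exp_lt (w.valuation F a)⁻¹ (by simpa using ha)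
  set P := a * (π ^ n) ^ 2 with hP
  have hP0 : P ≠ 0 := by simp [hP, ha, hπ0]
  have hP1 : w.valuation F P < 1 := by
    have h1 : w.valuation F ((π ^ n) ^ 2) < (w.valuation F a)⁻¹ := by
      refine lt_of_le_of_lt ?_ hn
      rw [map_pow, map_pow, hπ, ← WithZero.exp_nsmul, ← WithZero.exp_nsmul, WithZero.exp_le_exp]
      simp; omega
    have h2 := mul_lt_mul_of_pos_left h1 (zero_lt_iff.2 (by simpa using ha : w.valuation F a ≠ 0))
    rwa [mul_inv_cancel₀ (by simpa using ha), ← map_mul] at h2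
  have hQ : w.valuation F (1 - P) = 1 := by
    apply val_eq_one_of_sub; simpa using hP1
  have hQ0 : 1 - P ≠ 0 := by intro h0; rw [h0, map_zero] at hQ; exact zero_ne_one hQ
  have hε2 : ε ^ 2 = 1 := by rcases hε with rfl | rfl <;> norm_num
  have hvε : w.valuation F ε = 1 := by rcases hε with rfl | rfl <;> simp
  refine ⟨ε * (4 / (1 - P) - 2), ?_, π ^ n, 0, 0, (Units.mk0 (4 * P / (1 - P)) (by simp [hP0, hQ0])) ^ 2, ?_, sq_mem_Sq _ _⟩
  · rw [show ε * (4 / (1 - P) - 2) - 2 * ε = ε * (4 * P / (1 - P)) by field_simp; ring]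
    simp only [map_mul, map_div₀, hvε, hQ, div_one, one_mul]
    exact (mul_le_of_le_one_left zero_le (val_four_le _)).trans_lt hP1
  · have : qf a b (π ^ n) 0 0 = P := by simp [qf, hP]
    rw [this, Units.val_pow_eq_pow_val, Units.val_mk0, mul_pow, hε2]
    field_simp; ring

theorem exists_good (ha : a ≠ 0) (hb : b ≠ 0) (h : Ram (w.valuation F) a b) {t : F} (ht : w.valuation F t ≤ 1) :
    ∃ s : F, Good w a b s ∧ Good w a b (t - s) := by
  obtain ⟨σ, h1, h2⟩ := pigeon (res w t)
  have hspec : ∀ ε : F, (ε = 1 ∨ ε = -1) → res w t - σ = 2 * res w ε → ∃ s : F, Good w a b s ∧ Good w a b (t - s) := by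
    intro ε hε he
    have hvε : w.valuation F ε = 1 := by rcases hε with rfl | rfl <;> simp
    obtain ⟨s', h3, h4⟩ := Good_near (w := w) (b := b) ha hε
    have h2e : w.valuation F (2 * ε) ≤ 1 := by rw [map_mul, hvε, mul_one]; exact val_two_le _
    have hs' : w.valuation F s' ≤ 1 := by
      have := Valuation.map_add_le _ h3.le h2e
      rwa [sub_add_cancel] at this
    refine ⟨s', h4, Good_of_Irr ha hb h (Valuation.map_sub_le _ ht hs') (Irr_of_res (Valuation.map_sub_le _ ht hs') ?_)⟩
    have : res w (t - s') = σ := by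
      rw [res_sub ht hs', (res_eq hs' h2e).2 h3, res_mul (val_two_le _) hvε.le, res_two, ← he]; ring
    rwa [this]
  rcases h2 with h2 | h2 | h2
  · obtain ⟨s, hs, rfl⟩ := res_surj w σ
    have hts := Valuation.map_sub_le _ ht hs
    refine ⟨s, Good_of_Irr ha hb h hs (Irr_of_res hs h1), Good_of_Irr ha hb h hts (Irr_of_res hts ?_)⟩
    rwa [res_sub ht hs]
  · exact hspec 1 (Or.inl rfl) (by rw [h2, res_one, mul_one])
  · exact hspec (-1) (Or.inr rfl) (by rw [h2, res_neg (by simp), res_one]; ring)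

end
end TNQ

open scoped WithZero
set_option linter.all false
namespace TNQ
section
variable {F : Type*} [Field F] [CharZero F] {a b : F}

lemma qf_univ (ha : a ≠ 0) (hb : b ≠ 0) {u t s : F} (h0 : qf a b u t s = 0) (hne : ¬(u = 0 ∧ t = 0 ∧ s = 0)) (d : F) :
    ∃ u' t' s' : F, qf a b u' t' s' = d := by
  unfold qf at h0 ⊢
  by_cases hu : u = 0
  · by_cases ht : t = 0
    · have hs : s ≠ 0 := fun hs => hne ⟨hu, ht, hs⟩
      refine ⟨(d + a * b) / (-2 * a * b * s) * u, (d + a * b) / (-2 * a * b * s) * t, (1 + (d + a * b) / (-2 * a * b * s) * s), ?_⟩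
      generalize hl : (d + a * b) / (-2 * a * b * s) = l
      have hl' : d + a * b = l * (-2 * a * b * s) := by rw [← hl]; field_simp
      linear_combination -hl' + l ^ 2 * h0
    · refine ⟨(d - b) / (2 * b * t) * u, (1 + (d - b) / (2 * b * t) * t), ((d - b) / (2 * b * t) * s), ?_⟩
      generalize hl : (d - b) / (2 * b * t) = l
      have hl' : d - b = l * (2 * b * t) := by rw [← hl]; field_simp
      linear_combination -hl' + l ^ 2 * h0
  · refine ⟨(1 + (d - a) / (2 * a * u) * u), ((d - a) / (2 * a * u) * t), ((d - a) / (2 * a * u) * s), ?_⟩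
    generalize hl : (d - a) / (2 * a * u) = l
    have hl' : d - a = l * (2 * a * u) := by rw [← hl]; field_simp
    linear_combination -hl' + l ^ 2 * h0

end

section
universe u
variable {F : Type u} [Field F] [NumberField F] {a b : F}

/-- the conic has a zero over the completion -/
def Split (w : HeightOneSpectrum (𝓞 F)) (a b : F) : Prop :=
  ∃ z u v : w.adicCompletion F, ¬(z = 0 ∧ u = 0 ∧ v = 0) ∧
    z ^ 2 - algebraMap F (w.adicCompletion F) a * u ^ 2 - algebraMap F (w.adicCompletion F) b * v ^ 2 = 0

lemma Ram_of_not_split {w : HeightOneSpectrum (𝓞 F)} (ha : a ≠ 0) (hb : b ≠ 0) (h : ¬ Split w a b) : Ram (w.valuation F) a b :=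
  fun _ _ _ _ hx hs => h (conic_zero_of_Sq w ha hb hs hx)

lemma split_of_LocSolv {w : HeightOneSpectrum (𝓞 F)} (ha : a ≠ 0) (hb : b ≠ 0) (h : LocSolv (w.valuation F) a b) : Split w a b := by
  obtain ⟨x, y, z, hz, hs⟩ := h
  exact conic_zero_of_Sq w ha hb (u := x) (v := y) (w := 0) hs (by rw [hz]; ring)

lemma LocSolv_of_unit {w : HeightOneSpectrum (𝓞 F)} (h2 : w.valuation F 2 = 1) (ha : w.valuation F a = 1) (hb : w.valuation F b = 1) :
    LocSolv (w.valuation F) a b := by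
  have h2' : (2 : kk w) ≠ 0 := by rw [← res_two (F := F), res_ne_zero h2.le]; exact h2
  have hch : ringChar (kk w) ≠ 2 := by
    intro h
    apply h2'
    have := ringChar.Nat.cast_ringChar (R := kk w)
    rw [h] at this; exact_mod_cast this
  have ha' : res w a ≠ 0 := (res_ne_zero ha.le).2 ha
  have hb' : res w b ≠ 0 := (res_ne_zero hb.le).2 hb
  obtain ⟨α, β, h⟩ := FiniteField.exists_root_sum_quadratic (R := kk w) (f := Polynomial.C (res w a) * Polynomial.X ^ 2)
    (g := Polynomial.C (res w b) * Polynomial.X ^ 2 + Polynomial.C (-1))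
    (Polynomial.degree_C_mul_X_pow 2 ha') (by
      rw [Polynomial.degree_add_C (by rw [Polynomial.degree_C_mul_X_pow 2 hb']; norm_num)]
      exact Polynomial.degree_C_mul_X_pow 2 hb') (FiniteField.odd_card_of_char_ne_two hch)
  simp only [Polynomial.eval_mul, Polynomial.eval_C, Polynomial.eval_pow, Polynomial.eval_X, Polynomial.eval_add] at h
  obtain ⟨x, hx, rfl⟩ := res_surj w α
  obtain ⟨y, hy, rfl⟩ := res_surj w β
  have hx2 : w.valuation F (x ^ 2) ≤ 1 := by rw [map_pow]; exact pow_le_one' hx 2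
  have hy2 : w.valuation F (y ^ 2) ≤ 1 := by rw [map_pow]; exact pow_le_one' hy 2
  have hax : w.valuation F (a * x ^ 2) ≤ 1 := by rw [map_mul]; exact mul_le_one' ha.le hx2
  have hby : w.valuation F (b * y ^ 2) ≤ 1 := by rw [map_mul]; exact mul_le_one' hb.le hy2
  have hlt : w.valuation F (a * x ^ 2 + b * y ^ 2 - 1) < 1 := by
    rw [← res_eq (Valuation.map_add_le _ hax hby) (by simp), res_add hax hby, res_mul ha.le hx2, res_mul hb.le hy2,
      res_pow hx, res_pow hy, res_one]
    linear_combination h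
  have h0 : a * x ^ 2 + b * y ^ 2 ≠ 0 := by
    intro h0; have := val_eq_one_of_sub _ hlt; rw [h0, map_zero] at this; exact zero_ne_one this
  refine ⟨x, y, Units.mk0 _ h0, rfl, (mem_Sq _).2 ⟨1, one_ne_zero, ?_⟩⟩
  rw [Units.val_mk0, one_pow, mul_one, val_four, h2, one_mul]
  exact hlt

lemma finite_not_split (ha : a ≠ 0) (hb : b ≠ 0) : {w : HeightOneSpectrum (𝓞 F) | ¬ Split w a b}.Finite := by
  refine (((finite_val_ne_one (Units.mk0 (2 : F) two_ne_zero)).union (finite_val_ne_one (Units.mk0 a ha))).union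
    (finite_val_ne_one (Units.mk0 b hb))).subset ?_
  intro w hw
  by_contra hn
  simp only [Set.mem_union, not_or] at hn
  obtain ⟨⟨h1, h2⟩, h3⟩ := hn
  exact hw (split_of_LocSolv ha hb (LocSolv_of_unit (not_not.1 h1) (not_not.1 h2) (not_not.1 h3)))

lemma univ_of_split (ha : a ≠ 0) (hb : b ≠ 0) (hpa : ∀ σ : F →+* ℝ, 0 < σ a) (hpb : ∀ σ : F →+* ℝ, 0 < σ b)
    (h : ∀ w : HeightOneSpectrum (𝓞 F), Split w a b) : ∃ u t s : F, qf a b u t s = 0 ∧ ¬(u = 0 ∧ t = 0 ∧ s = 0) := by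
  obtain ⟨x, y, z, hne, hz⟩ := thmA (Units.mk0 a ha) (Units.mk0 b hb) (mem_Pos.2 hpa) (mem_Pos.2 hpb)
    (fun w => locSolv_of_conic_zero w ha hb (h w))
  rw [Units.val_mk0, Units.val_mk0] at hz
  refine ⟨b * y, a * x, z, ?_, ?_⟩
  · unfold qf; linear_combination (-a * b) * hz
  · rintro ⟨h1, h2, h3⟩
    apply hne
    simp [ha, hb] at h1 h2
    exact ⟨h2, h1⟩

lemma qf_smul (c u t s : F) : qf a b (c * u) (c * t) (c * s) = c ^ 2 * qf a b u t s := by unfold qf; ring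

theorem glob_rep (ha : a ≠ 0) (hb : b ≠ 0) (hpa : ∀ σ : F →+* ℝ, 0 < σ a) (hpb : ∀ σ : F →+* ℝ, 0 < σ b)
    (d : F) (hd : ∀ w : HeightOneSpectrum (𝓞 F), ¬ Split w a b → ∃ u t s : F, ∃ z : Fˣ,
      (z : F) = qf a b u t s * d ∧ z ∈ Sq (w.valuation F)) : ∃ u t s : F, qf a b u t s = d := by
  by_cases hsq : IsSquare d
  · obtain ⟨y, rfl⟩ := hsq
    by_cases hall : ∀ w : HeightOneSpectrum (𝓞 F), Split w a b
    · obtain ⟨u, t, s, h0, hne⟩ := univ_of_split ha hb hpa hpb hall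
      exact qf_univ ha hb h0 hne _
    · exfalso
      push Not at hall
      obtain ⟨w, hw⟩ := hall
      obtain ⟨u, t, s, z, hz, hzs⟩ := hd w hw
      exact Ram_of_not_split ha hb hw (y * u) (y * t) (y * s) z (by rw [hz, qf_smul]; ring) hzs
  · obtain ⟨E, _, _, _, ⟨D⟩⟩ := exists_quadData d hsq
    have ha' : algebraMap F E a ≠ 0 := by simpa using ha
    have hb' : algebraMap F E b ≠ 0 := by simpa using hb
    have hup : ∀ u t s : F, algebraMap F E (qf a b u t s) = qf (algebraMap F E a) (algebraMap F E b) (algebraMap F E u)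
        (algebraMap F E t) (algebraMap F E s) := by
      intro u t s; simp [qf]
    obtain ⟨U, T, S, h0, hne⟩ := univ_of_split (F := E) ha' hb' (fun σ => hpa (σ.comp (algebraMap F E)))
      (fun σ => hpb (σ.comp (algebraMap F E))) (fun P => by
        by_cases hw : Split (dn F P) a b
        · obtain ⟨x, y, z, hz, hs⟩ := locSolv_of_conic_zero _ ha hb hw
          exact split_of_LocSolv ha' hb' ⟨algebraMap F E x, algebraMap F E y, inc F E z, by rw [inc_val, hz]; simp, Sq_up P hs⟩
        · obtain ⟨u, t, s, z, hz, hs⟩ := hd _ hw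
          refine conic_zero_of_Sq P ha' hb' (u := D.δ * algebraMap F E u) (v := D.δ * algebraMap F E t)
            (w := D.δ * algebraMap F E s) (Sq_up P hs) ?_
          have := qf_smul (a := algebraMap F E a) (b := algebraMap F E b) D.δ (algebraMap F E u) (algebraMap F E t) (algebraMap F E s)
          rw [D.hsq, ← hup, ← map_mul, mul_comm d, ← hz] at this
          rw [inc_val, ← this]; rfl)
    obtain ⟨u, u', rfl⟩ := D.span U
    obtain ⟨t, t', rfl⟩ := D.span T
    obtain ⟨s, s', rfl⟩ := D.span S
    obtain ⟨e1, e2⟩ := D.eq_zero hsq (α := qf a b u t s + d * qf a b u' t' s') (β := 2 * (a * u * u' + b * t * t' - a * b * s * s')) (by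
      rw [← h0]
      simp only [qf, map_add, map_mul, map_sub, map_pow, map_ofNat, ← D.hsq]
      ring)
    by_cases hz : qf a b u' t' s' = 0
    · rw [hz, mul_zero, add_zero] at e1
      by_cases h3 : u' = 0 ∧ t' = 0 ∧ s' = 0
      · refine qf_univ ha hb e1 ?_ d
        rintro ⟨rfl, rfl, rfl⟩
        obtain ⟨rfl, rfl, rfl⟩ := h3
        apply hne; simp
      · exact qf_univ ha hb hz h3 d
    · set Q : ℍ[F,a,b] := ⟨0, u, t, s⟩ * ⟨0, u', t', s'⟩ with hQ
      have hre : Q.re = 0 := by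
        have : Q.re = a * u * u' + b * t * t' - a * b * s * s' := by simp [hQ]
        rw [this]; simpa using e2
      have hN : qN Q = qf a b u t s * qf a b u' t' s' := by
        rw [hQ, qN_mul]; simp [qN_eq]
      have hf : qf a b Q.imI Q.imJ Q.imK = d * qf a b u' t' s' ^ 2 := by
        have := qN_eq Q
        rw [hre, hN] at this
        linear_combination this - e1 * qf a b u' t' s'
      refine ⟨(qf a b u' t' s')⁻¹ * Q.imI, (qf a b u' t' s')⁻¹ * Q.imJ, (qf a b u' t' s')⁻¹ * Q.imK, ?_⟩
      rw [qf_smul, hf]; field_simp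

theorem glob_trace (ha : a ≠ 0) (hb : b ≠ 0) (hpa : ∀ σ : F →+* ℝ, 0 < σ a) (hpb : ∀ σ : F →+* ℝ, 0 < σ b)
    (s : F) (hd : ∀ w : HeightOneSpectrum (𝓞 F), ¬ Split w a b → Good w a b s) :
    ∃ x : ℍ[F,a,b], x * star x = 1 ∧ x + star x = algebraMap F ℍ[F,a,b] s := by
  obtain ⟨u, t, r, h⟩ := glob_rep ha hb hpa hpb (s ^ 2 - 4) hd
  refine ⟨⟨s / 2, u / 2, t / 2, r / 2⟩, ?_, ?_⟩
  · rw [norm_eq_one_iff]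
    unfold qf at h
    simp only [qN]; linear_combination (-1 / 4) * h
  · rw [trace_eq_iff]; ring

lemma Good_open {w : HeightOneSpectrum (𝓞 F)} {s : F} (h : Good w a b s) :
    ∃ γ : ℤᵐ⁰, γ ≠ 0 ∧ ∀ s', w.valuation F (s' - s) < γ → Good w a b s' := by
  obtain ⟨u, t, r, z, hz, hzs⟩ := h
  obtain ⟨γ, hγ, hap⟩ := approx_sq (w.valuation F) (qf a b u t r) s (w.valuation F (4 * z)) (by simp)
  refine ⟨γ, hγ, fun s' hs' => ?_⟩
  have h1 := hap s' hs'
  have e : qf a b u t r * (s' ^ 2 - 4) - z = qf a b u t r * s' ^ 2 - qf a b u t r * s ^ 2 := by rw [hz]; ring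
  rw [← e] at h1
  have h0 : qf a b u t r * (s' ^ 2 - 4) ≠ 0 := by
    intro h0
    rw [h0, zero_sub, Valuation.map_neg, map_mul] at h1
    exact absurd h1 (not_lt.2 (mul_le_of_le_one_left zero_le (val_four_le _)))
  exact ⟨u, t, r, Units.mk0 _ h0, rfl, Sq_of_close _ hzs h1⟩

theorem main (ha : a ≠ 0) (hb : b ≠ 0) (hpa : ∀ σ : F →+* ℝ, 0 < σ a) (hpb : ∀ σ : F →+* ℝ, 0 < σ b) (t : F) :
    (∃ s s' : F,
        (∃ x : ℍ[F,a,b], x * star x = 1 ∧ x + star x = algebraMap F ℍ[F,a,b] s) ∧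
        (∃ x : ℍ[F,a,b], x * star x = 1 ∧ x + star x = algebraMap F ℍ[F,a,b] s') ∧
        t = s + s') ↔ ∀ w : HeightOneSpectrum (𝓞 F), ¬ Split w a b → w.valuation F t ≤ 1 := by
  constructor
  · rintro ⟨s, s', ⟨x, hx, hxs⟩, ⟨x', hx', hxs'⟩, rfl⟩ w hw
    have hR := Ram_of_not_split ha hb hw
    rw [norm_eq_one_iff] at hx hx'
    rw [trace_eq_iff] at hxs hxs'
    refine Valuation.map_add_le _ ?_ ?_
    · rw [← hxs]; exact hR.tr_le (by rw [hx, map_one])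
    · rw [← hxs']; exact hR.tr_le (by rw [hx', map_one])
  · intro h
    classical
    have hloc : ∀ w : HeightOneSpectrum (𝓞 F), ∃ s : F, ∃ γ : ℤᵐ⁰, ¬ Split w a b → γ ≠ 0 ∧ ∀ s' : F, w.valuation F (s' - s) < γ →
        Good w a b s' ∧ Good w a b (t - s') := by
      intro w
      by_cases hw : Split w a b
      · exact ⟨0, 1, fun h => absurd hw h⟩
      · obtain ⟨s, h1, h2⟩ := exists_good ha hb (Ram_of_not_split ha hb hw) (h w hw)
        obtain ⟨γ, hγ, h3⟩ := Good_open h1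
        obtain ⟨γ', hγ', h4⟩ := Good_open h2
        refine ⟨s, min γ γ', fun _ => ⟨?_, fun s' hs' => ⟨h3 _ (hs'.trans_le (min_le_left _ _)), h4 _ ?_⟩⟩⟩
        · rcases min_choice γ γ' with e | e <;> rw [e] <;> assumption
        · rw [show t - s' - (t - s) = s - s' by ring, Valuation.map_sub_swap]
          exact hs'.trans_le (min_le_right _ _)
    choose σ γ hσ using hloc
    obtain ⟨s, hs⟩ := weak_approx (finite_not_split (a := a) (b := b) ha hb).toFinset σ γ
      (fun w hw => (hσ w ((Set.Finite.mem_toFinset _).1 hw)).1)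
    have hg : ∀ w : HeightOneSpectrum (𝓞 F), ¬ Split w a b → Good w a b s ∧ Good w a b (t - s) := fun w hw =>
      (hσ w hw).2 s (hs w ((Set.Finite.mem_toFinset _).2 hw))
    exact ⟨s, t - s, glob_trace ha hb hpa hpb s fun w hw => (hg w hw).1,
      glob_trace ha hb hpa hpb (t - s) fun w hw => (hg w hw).2, by ring⟩
end
end TNQ

theorem traces_of_norm_one_quaternions
    (K : Type*) [Field K] [NumberField K] (a b : K) (ha0 : a ≠ 0) (hb0 : b ≠ 0)
    (ha : ∀ σ : K →+* ℝ, 0 < σ a) (hb : ∀ σ : K →+* ℝ, 0 < σ b) :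
    {t : K | ∃ s s' : K,
        (∃ x : ℍ[K,a,b], x * star x = 1 ∧ x + star x = algebraMap K ℍ[K,a,b] s) ∧
        (∃ x : ℍ[K,a,b], x * star x = 1 ∧ x + star x = algebraMap K ℍ[K,a,b] s') ∧
        t = s + s'} =
      {t : K | ∀ 𝔮 : HeightOneSpectrum (𝓞 K),
        (¬ ∃ z u v : 𝔮.adicCompletion K, ¬(z = 0 ∧ u = 0 ∧ v = 0) ∧
            z ^ 2 - algebraMap K (𝔮.adicCompletion K) a * u ^ 2 -
              algebraMap K (𝔮.adicCompletion K) b * v ^ 2 = 0) →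
          algebraMap K (𝔮.adicCompletion K) t ∈ 𝔮.adicCompletionIntegers K} := by
  ext t
  refine (TNQ.main ha0 hb0 ha hb t).trans ?_
  refine forall_congr' fun w => imp_congr Iff.rfl ?_
  rw [HeightOneSpectrum.mem_adicCompletionIntegers, ← HeightOneSpectrum.valuedAdicCompletion_eq_valuation']
  rfl
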